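/- For every integer d ≥ 2 there exists a constant C_d > 0, depending only on d, such that for every n with 2 ≤ d ≤ n/2 the switch chain (Ω^B_n(d), π_u, Q_u) satisfies the Modified log-Sobolev Inequality with constant C_d·n; that is, for every function f : Ω^B_n(d) → (0,∞), Ent_{π_u}(f) ≤ C_d·n·E_{π_u}(log f, f). -/

import Mathlib

/-!
The proof uses the configuration model. A permutation `σ` of the half-edges `Fin n × Fin d` defines a
bipartite multigraph, whose multiple edges are regarded as defects; the permutations without defects
are called simple. The simple permutations map onto `OmegaB n d` with fibres of constant size
(`card_fibG_eq`, by connectivity of the switch graph), and multiplication by a transposition between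
simple permutations is a switching or does not change the graph, each switching being obtained from
at most four transpositions. With `N = n d`, it is therefore enough to bound `N` times the entropy of
a function `f` on simple permutations by the transposition Dirichlet form restricted to simple
permutations (`core_simple`). Here `f` may be assumed to have mean one and to be at least `1 / 4`,
since truncating it at half of its mean costs only a constant.

All permutations satisfy a modified log-Sobolev inequality for random transpositions (`hent_perm`),
so `f` is extended from simple permutations to all permutations. The value `g σ` at a permutation with
defects is the average, over a defect point `p` and a uniform point `q`, of the value at
`σ * sw p q`, or of `1` in the rare event that this transposition does not repair the defect
(`IsExt`). Two facts make the extension useful.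

* Few permutations with many defects see large values of `f`: the entropy density
  `psi (g σ) = g σ * log (g σ) - g σ + 1`, summed over all `σ` with `k` defects, is at most
  a constant times `2 ^ (-k)` times its sum over simple permutations (`ww_le`).
* For each fixed `k`, the Dirichlet form on permutations with at most `k` defects is at most a constant
  times the sum of the form and the entropy on simple permutations (`DD_le`). To compare `g` at two
  neighbours with `j + 1` defects, the same defect is repaired in both and the convexity of
  `phi a b = (a - b) * (log a - log b)` is used; most of the resulting terms belong to permutations
  with at most `j` defects which are again neighbours. The others require a comparison along a path
  with two steps. For `phi` such a comparison fails with a constant factor, but holds with a factor of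
  order `N` because all values lie between `1 / 4` and `N ^ N` (`phi_path`), and these terms
  are rarer by the same factor `N`.

Now replace `g` by `1` above a fixed level `K`. Since the mean of `f` is one, the entropy `w` of `f`
is at most the entropy of the resulting function, whose Dirichlet form exceeds the one on at most `K`
defects by at most `N * w / 2` if `K` is large, by the geometric decay. Hence
`2 * N * w ≤ C * (D + w) + N * w / 2`, where `D` is the form on simple permutations, and for large `N`
this gives `N * w ≤ C * D`. For each of the remaining finitely many `n`, connectivity of the switch
graph provides some constant (`exists_const_of_connected`).
-/

open Finset

noncomputable section

attribute [local instance] Classical.propDecidable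

/-- Bipartite graphs on `[n] ⊔ [n]` as 0/1 (Boolean) biadjacency matrices. -/
abbrev BG (n : ℕ) := Fin n → Fin n → Bool

/-- `d`-regularity: all row and column sums equal `d`. -/
def IsBipReg (n d : ℕ) (A : BG n) : Prop :=
  (∀ i, (Finset.univ.filter fun j => A i j = true).card = d) ∧
    (∀ j, (Finset.univ.filter fun i => A i j = true).card = d)

/-- `Ω^B_n(d)`: the set of simple bipartite `d`-regular graphs. -/
abbrev OmegaB (n d : ℕ) := {A : BG n // IsBipReg n d A}

/-- The result of the simple switching `⟨i₁, i₂, j₁, j₂⟩`: edges `(i₁,j₁)`, `(i₂,j₂)`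
are destroyed and replaced by `(i₁,j₂)`, `(i₂,j₁)`. -/
def switchMove {n : ℕ} (A : BG n) (i₁ i₂ j₁ j₂ : Fin n) : BG n :=
  fun i j =>
    if (i = i₁ ∧ j = j₁) ∨ (i = i₂ ∧ j = j₂) then false
    else if (i = i₁ ∧ j = j₂) ∨ (i = i₂ ∧ j = j₁) then true
    else A i j

/-- `B` is obtained from `A` by a valid simple switching. -/
def SwitchAdj {n : ℕ} (A B : BG n) : Prop :=
  ∃ i₁ i₂ j₁ j₂ : Fin n, i₁ ≠ i₂ ∧ j₁ ≠ j₂ ∧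
    A i₁ j₁ = true ∧ A i₂ j₂ = true ∧ A i₁ j₂ = false ∧ A i₂ j₁ = false ∧
    B = switchMove A i₁ i₂ j₁ j₂

/-- Number of graphs reachable from `G` by one simple switching. -/
def numNeighbors (n d : ℕ) (G : OmegaB n d) : ℕ :=
  (Finset.univ.filter fun G' : OmegaB n d => SwitchAdj G.1 G'.1).card

/-- The switch chain generator `Q_u`. -/
def Qu (n d : ℕ) (G₁ G₂ : OmegaB n d) : ℝ :=
  if G₁ = G₂ then -(numNeighbors n d G₁ : ℝ) * (2 / ((n * d : ℝ) * ((n * d : ℝ) - 1)))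
  else if SwitchAdj G₁.1 G₂.1 then 2 / ((n * d : ℝ) * ((n * d : ℝ) - 1))
  else 0

/-- The uniform measure `π_u` on `Ω^B_n(d)`. -/
def piU (n d : ℕ) : OmegaB n d → ℝ := fun _ => (Fintype.card (OmegaB n d) : ℝ)⁻¹

/-- Entropy `Ent_π(f) = E_π[f (log f - log E_π f)]`. -/
def entPi {Ω : Type*} [Fintype Ω] (π f : Ω → ℝ) : ℝ :=
  ∑ ω, π ω * f ω * (Real.log (f ω) - Real.log (∑ ω', π ω' * f ω'))

/-- Dirichlet form `E_π(log f, f)`. -/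
def dirForm {Ω : Type*} [Fintype Ω] (π : Ω → ℝ) (Q : Ω → Ω → ℝ) (f : Ω → ℝ) : ℝ :=
  (1 / 2) * ∑ ω, ∑ ω', π ω * Q ω ω' * (f ω - f ω') * Real.log (f ω / f ω')

/-! ### The kernels of entropy and Dirichlet form -/

/-- The symmetric entropy kernel `(a - b)(log a - log b)`, the summand of the Dirichlet form
`E(log f, f)`. -/
def phi (a b : ℝ) : ℝ := (a - b) * (Real.log a - Real.log b)

/-- The entropy density `a log a - a + 1`. -/
def psi (a : ℝ) : ℝ := a * Real.log a - a + 1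

/-- Unnormalised entropy of `f` over a finite set `s`: the cardinality of `s` times the entropy
of `f` with respect to the uniform measure on `s`. -/
def hent {Ω : Type*} (s : Finset Ω) (f : Ω → ℝ) : ℝ :=
  ∑ x ∈ s, f x * Real.log (f x) - (∑ x ∈ s, f x) * Real.log ((∑ x ∈ s, f x) / s.card)

lemma phi_symm (a b : ℝ) : phi a b = phi b a := by unfold phi; ring

lemma phi_self (a : ℝ) : phi a a = 0 := by simp [phi]

lemma phi_nonneg {a b : ℝ} (ha : 0 < a) (hb : 0 < b) : 0 ≤ phi a b := by
  unfold phi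
  rcases le_total a b with h | h
  · exact mul_nonneg_of_nonpos_of_nonpos (by linarith)
      (by linarith [Real.log_le_log ha h])
  · exact mul_nonneg (by linarith) (by linarith [Real.log_le_log hb h])

lemma phi_mul {t a b : ℝ} (ht : 0 < t) (ha : 0 < a) (hb : 0 < b) :
    phi (t * a) (t * b) = t * phi a b := by
  unfold phi
  rw [Real.log_mul ht.ne' ha.ne', Real.log_mul ht.ne' hb.ne']; ring

/-- Supporting hyperplane of the convex, 1-homogeneous function `phi` at `(A, B)`. -/
lemma phi_tangent {a b A B : ℝ} (ha : 0 < a) (hb : 0 < b) (hA : 0 < A) (hB : 0 < B) :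
    a * (Real.log A - Real.log B + 1 - B / A) + b * (Real.log B - Real.log A + 1 - A / B)
      ≤ phi a b := by
  have key : ∀ {a b A B : ℝ}, 0 < a → 0 < b → 0 < A → 0 < B →
      a - b * (A / B) ≤ a * (Real.log a + Real.log B - Real.log b - Real.log A) := by
    intro a b A B ha hb hA hB
    have h := Real.log_le_sub_one_of_pos (show 0 < b * A / (a * B) by positivity)
    rw [Real.log_div (by positivity) (by positivity), Real.log_mul hb.ne' hA.ne',
      Real.log_mul ha.ne' hB.ne'] at h
    have h2 := mul_le_mul_of_nonneg_left h ha.le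
    have h3 : a * (b * A / (a * B) - 1) = b * (A / B) - a := by field_simp
    linarith
  have h1 := key ha hb hA hB
  have h2 := key hb ha hB hA
  unfold phi
  nlinarith

/-- Joint convexity of `phi`, in the subadditive form equivalent to it by homogeneity. -/
lemma phi_sum_le {ι : Type*} (s : Finset ι) (a b : ι → ℝ) (ha : ∀ i ∈ s, 0 < a i)
    (hb : ∀ i ∈ s, 0 < b i) :
    phi (∑ i ∈ s, a i) (∑ i ∈ s, b i) ≤ ∑ i ∈ s, phi (a i) (b i) := by
  rcases s.eq_empty_or_nonempty with rfl | hs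
  · simp [phi]
  have hA := Finset.sum_pos ha hs
  have hB := Finset.sum_pos hb hs
  set A := ∑ i ∈ s, a i with hAdef
  set B := ∑ i ∈ s, b i with hBdef
  have h : ∑ i ∈ s, (a i * (Real.log A - Real.log B + 1 - B / A)
      + b i * (Real.log B - Real.log A + 1 - A / B)) ≤ ∑ i ∈ s, phi (a i) (b i) :=
    Finset.sum_le_sum fun i hi => phi_tangent (ha i hi) (hb i hi) hA hB
  rw [Finset.sum_add_distrib, ← Finset.sum_mul, ← Finset.sum_mul, ← hAdef, ← hBdef] at h
  refine le_trans (le_of_eq ?_) h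
  unfold phi
  field_simp
  ring

lemma phi_mono {a b a' b' : ℝ} (hb : 0 < b') (h1 : b' ≤ b) (h2 : b ≤ a) (h3 : a ≤ a') :
    phi a b ≤ phi a' b' := by
  unfold phi
  have := Real.log_le_log hb h1
  have := Real.log_le_log (hb.trans_le h1) h2
  have := Real.log_le_log (hb.trans_le (h1.trans h2)) h3
  apply mul_le_mul <;> linarith

lemma one_sub_inv_le_log {t : ℝ} (ht : 0 < t) : 1 - 1 / t ≤ Real.log t := by
  have := Real.one_sub_inv_le_log_of_pos ht
  simpa using this

/-- Tangent-line inequality for the convex function `a log a`. -/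
lemma mul_log_tangent {a c : ℝ} (ha : 0 < a) (hc : 0 < c) :
    a - c ≤ a * (Real.log a - Real.log c) := by
  have h := one_sub_inv_le_log (show 0 < a / c by positivity)
  rw [Real.log_div ha.ne' hc.ne'] at h
  have h2 := mul_le_mul_of_nonneg_left h ha.le
  have h3 : a * (1 - 1 / (a / c)) = a - c := by field_simp
  linarith

lemma psi_nonneg {a : ℝ} (ha : 0 < a) : 0 ≤ psi a := by
  have := mul_log_tangent ha one_pos
  simp at this
  unfold psi; linarith

lemma psi_one : psi 1 = 0 := by simp [psi]

/-- Jensen's inequality for `psi`. -/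
lemma psi_sum_le {ι : Type*} (s : Finset ι) (a : ι → ℝ) (ha : ∀ i ∈ s, 0 < a i) (x : ℝ)
    (hx : 0 < x) (h : s.card * x = ∑ i ∈ s, a i) :
    s.card * psi x ≤ ∑ i ∈ s, psi (a i) := by
  have h1 : ∑ i ∈ s, (psi x + Real.log x * (a i - x)) ≤ ∑ i ∈ s, psi (a i) := by
    refine Finset.sum_le_sum fun i hi => ?_
    have := mul_log_tangent (ha i hi) hx
    unfold psi
    nlinarith
  rw [Finset.sum_add_distrib, ← Finset.mul_sum, Finset.sum_sub_distrib, ← h] at h1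
  simpa using h1

/-- Away from `0`, the symmetrised entropy density is controlled by the entropy density. -/
lemma phi_one_le {a : ℝ} (ha : 1 / 4 ≤ a) : phi a 1 ≤ 6 * psi a := by
  have ha0 : 0 < a := by linarith
  obtain ⟨u, hu, rfl⟩ : ∃ u : ℝ, 1 / 2 ≤ u ∧ a = u ^ 2 := by
    refine ⟨Real.sqrt a, ?_, (Real.sq_sqrt ha0.le).symm⟩
    apply Real.le_sqrt_of_sq_le; linarith
  have hu0 : 0 < u := by linarith
  unfold phi psi
  rw [Real.log_pow]
  have h := one_sub_inv_le_log hu0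
  have h1 : u - 1 ≤ u * Real.log u := by
    have := mul_le_mul_of_nonneg_left h hu0.le
    have e : u * (1 - 1 / u) = u - 1 := by field_simp
    linarith
  have h2 : (u - 1) * (10 * u ^ 2 + 2) ≤ u * Real.log u * (10 * u ^ 2 + 2) :=
    mul_le_mul_of_nonneg_right h1 (by positivity)
  have h3 : 0 ≤ (2 * u - 1) * (u - 1) ^ 2 := mul_nonneg (by linarith) (sq_nonneg _)
  have h4 : 0 ≤ u * ((5 * u ^ 2 + 1) * (2 * Real.log u) - 6 * (u ^ 2 - 1)) := by nlinarith
  have h5 := nonneg_of_mul_nonneg_right h4 hu0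
  simp only [Real.log_one, Nat.cast_ofNat]
  nlinarith

/-- Away from `0`, `phi` is bounded by the sum of the entropy densities: both arguments are
compared with the value `1`. -/
lemma phi_le_psi {a b : ℝ} (ha : 1 / 4 ≤ a) (hb : 1 / 4 ≤ b) :
    phi a b ≤ 36 * (psi a + psi b) := by
  wlog hab : b ≤ a generalizing a b
  · rw [phi_symm, add_comm]; exact this hb ha (le_of_not_ge hab)
  have hpa := phi_one_le ha
  have hpb := phi_one_le hb
  have hb0 : 0 < b := by linarith
  have ha0 : 0 < a := by linarith
  have na := psi_nonneg ha0
  have nb := psi_nonneg hb0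
  rcases le_total 1 b with h1 | h1
  · have := phi_mono one_pos h1 hab le_rfl
    linarith
  rcases le_total a 1 with h2 | h2
  · have := phi_mono hb0 le_rfl hab h2
    rw [phi_symm 1 b] at this
    linarith
  have e : phi a b = phi a 1 + phi b 1 + (a - 1) * (- Real.log b) + (1 - b) * Real.log a := by
    simp [phi]; ring
  have la : 0 ≤ Real.log a := Real.log_nonneg h2
  have lb : Real.log b ≤ 0 := Real.log_nonpos hb0.le h1
  have lb' : 1 - b ≤ - Real.log b := by linarith [Real.log_le_sub_one_of_pos hb0]
  have la' : Real.log a ≤ a - 1 := Real.log_le_sub_one_of_pos ha0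
  have pa1 : phi a 1 = (a - 1) * Real.log a := by simp [phi]
  have pb1 : phi b 1 = (1 - b) * (- Real.log b) := by simp [phi]; ring
  have c1 : (a - 1) * (- Real.log b) ≤ phi a 1 + 4 * phi b 1 := by
    rw [pa1, pb1]
    have x1 : 0 ≤ (a - 1) * Real.log a := mul_nonneg (by linarith) la
    have x2 : 0 ≤ (1 - b) * (-Real.log b) := mul_nonneg (by linarith) (by linarith)
    rcases le_total (- Real.log b) (Real.log a) with h | h
    · nlinarith
    · have hab1 : a * b ≤ 1 := by
        rw [← Real.log_nonpos_iff (by positivity), Real.log_mul ha0.ne' hb0.ne']; linarith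
      have : a - 1 ≤ 4 * (1 - b) := by nlinarith
      nlinarith
  have c2 : (1 - b) * Real.log a ≤ phi a 1 + phi b 1 := by
    rw [pa1, pb1]
    have x1 : 0 ≤ (a - 1) * Real.log a := mul_nonneg (by linarith) la
    have x2 : 0 ≤ (1 - b) * (-Real.log b) := mul_nonneg (by linarith) (by linarith)
    rcases le_total (1 - b) (a - 1) with h | h
    · nlinarith
    · nlinarith
  nlinarith

/-- `phi` dominates the squared difference of square roots (Dirichlet form comparison). -/
lemma sqrt_sq_le_phi {a b : ℝ} (ha : 0 < a) (hb : 0 < b) :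
    (Real.sqrt a - Real.sqrt b) ^ 2 ≤ phi a b := by
  wlog hab : b ≤ a generalizing a b
  · rw [phi_symm, ← neg_sub, neg_sq]; exact this hb ha (le_of_not_ge hab)
  obtain ⟨u, hu, rfl⟩ : ∃ u : ℝ, 0 < u ∧ a = u ^ 2 :=
    ⟨Real.sqrt a, Real.sqrt_pos.2 ha, (Real.sq_sqrt ha.le).symm⟩
  obtain ⟨v, hv, rfl⟩ : ∃ v : ℝ, 0 < v ∧ b = v ^ 2 :=
    ⟨Real.sqrt b, Real.sqrt_pos.2 hb, (Real.sq_sqrt hb.le).symm⟩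
  have huv : v ≤ u := by nlinarith
  rw [Real.sqrt_sq hu.le, Real.sqrt_sq hv.le]
  unfold phi
  rw [Real.log_pow, Real.log_pow]
  have h := mul_log_tangent hu hv
  have h2 : 0 ≤ Real.log u - Real.log v := by linarith [Real.log_le_log hv huv]
  push_cast
  nlinarith [mul_nonneg (sub_nonneg.2 huv) h2, mul_nonneg hv.le h2]

/-- Converse of `sqrt_sq_le_phi`, with a loss proportional to the logarithm of the ratio. -/
lemma phi_le_sqrt {a b : ℝ} (hb : 0 < b) (hab : b ≤ a) :
    phi a b ≤ 6 * (1 + (Real.log a - Real.log b)) * (Real.sqrt a - Real.sqrt b) ^ 2 := by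
  have ha : 0 < a := by linarith
  obtain ⟨u, hu, rfl⟩ : ∃ u : ℝ, 0 < u ∧ a = u ^ 2 :=
    ⟨Real.sqrt a, Real.sqrt_pos.2 ha, (Real.sq_sqrt ha.le).symm⟩
  obtain ⟨v, hv, rfl⟩ : ∃ v : ℝ, 0 < v ∧ b = v ^ 2 :=
    ⟨Real.sqrt b, Real.sqrt_pos.2 hb, (Real.sq_sqrt hb.le).symm⟩
  have huv : v ≤ u := by nlinarith
  rw [Real.sqrt_sq hu.le, Real.sqrt_sq hv.le]
  unfold phi
  rw [Real.log_pow, Real.log_pow]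
  push_cast
  set l := Real.log u - Real.log v with hl
  have h := mul_log_tangent hv hu
  have h2 : 0 ≤ l := by linarith [Real.log_le_log hv huv]
  have h3 : (u + v) * l ≤ 3 * (1 + 2 * l) * (u - v) := by
    rcases le_total u (2 * v) with h4 | h4
    · have : v * l ≤ u - v := by rw [hl]; nlinarith
      nlinarith [mul_nonneg h2 (sub_nonneg.2 huv)]
    · nlinarith [mul_nonneg h2 (sub_nonneg.2 huv)]
  have h5 := mul_le_mul_of_nonneg_left h3 (show 0 ≤ 2 * (u - v) by linarith)
  have : Real.log u * 2 - Real.log v * 2 = 2 * l := by rw [hl]; ring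
  nlinarith

/-- Two-step path comparison for `phi`. Such a comparison fails with a constant factor; when all
logarithms vary by at most `L = 2 N log N`, the sharp loss is of order `L / log L`, that is `N`. -/
lemma phi_path {N a b c : ℝ} (hN : 4 ≤ N) (ha : 0 < a) (hb : 0 < b) (hc : 0 < c)
    (h1 : Real.log a - Real.log c ≤ 2 * N * Real.log N)
    (h2 : Real.log c - Real.log a ≤ 2 * N * Real.log N) :
    phi a c ≤ 24 * N * (phi a b + phi b c) := by
  wlog hac : c ≤ a generalizing a c
  · have := this hc ha h2 h1 (le_of_not_ge hac)
    rw [phi_symm a c, phi_symm a b, phi_symm b c]; linarith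
  have n1 := phi_nonneg ha hb
  have n2 := phi_nonneg hb hc
  have hN0 : 0 < N := by linarith
  have hlN : 0 < Real.log N := Real.log_pos (by linarith)
  set l := Real.log a - Real.log c with hl
  have hl0 : 0 ≤ l := by linarith [Real.log_le_log hc hac]
  rcases le_total l (Real.log N) with h | h
  · -- moderate ratio: compare through square roots, which satisfy a triangle inequality
    have hs := phi_le_sqrt hc hac
    have e1 := sqrt_sq_le_phi ha hb
    have e2 := sqrt_sq_le_phi hb hc
    have e3 : (Real.sqrt a - Real.sqrt c) ^ 2 ≤
        2 * ((Real.sqrt a - Real.sqrt b) ^ 2 + (Real.sqrt b - Real.sqrt c) ^ 2) := by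
      nlinarith [sq_nonneg ((Real.sqrt a - Real.sqrt b) - (Real.sqrt b - Real.sqrt c))]
    have e4 : 1 + l ≤ N := by linarith [Real.log_le_sub_one_of_pos hN0]
    calc phi a c ≤ 6 * (1 + l) * (Real.sqrt a - Real.sqrt c) ^ 2 := hs
      _ ≤ 6 * N * (2 * (phi a b + phi b c)) := by
          apply mul_le_mul <;> first | positivity | linarith
      _ ≤ _ := by nlinarith
  · obtain ⟨s, hs, rfl⟩ : ∃ s : ℝ, 2 ≤ s ∧ N = s ^ 2 :=
      ⟨Real.sqrt N, by apply Real.le_sqrt_of_sq_le; linarith, (Real.sq_sqrt hN0.le).symm⟩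
    have hs0 : 0 < s := by linarith
    rw [Real.log_pow] at h h1 hlN
    push_cast at h h1 hlN
    have hls : 0 < Real.log s := Real.log_pos (by linarith)
    have hle : phi a c ≤ a * l := by
      unfold phi; rw [← hl]; nlinarith [mul_nonneg hc.le hl0]
    -- large ratio: the step `a → b` or the step `b → c` already covers half of the bound `log
    -- N` on a logarithmic scale; the threshold is `b = a / √N`
    rcases lt_or_ge (s * b) a with hab | hab
    · have lb : Real.log s + Real.log b ≤ Real.log a := by
        rw [← Real.log_mul hs0.ne' hb.ne']; exact Real.log_le_log (by positivity) hab.le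
      have : a / 2 * Real.log s ≤ phi a b := by
        unfold phi
        apply mul_le_mul _ (by linarith) hls.le _ <;> nlinarith
      calc phi a c ≤ a * l := hle
        _ ≤ a * (2 * s ^ 2 * (2 * Real.log s)) := by gcongr
        _ = 8 * s ^ 2 * (a / 2 * Real.log s) := by ring
        _ ≤ 8 * s ^ 2 * phi a b := by gcongr
        _ ≤ _ := by nlinarith [mul_nonneg (sq_nonneg s) n1, mul_nonneg (sq_nonneg s) n2]
    · have lb : Real.log a ≤ Real.log s + Real.log b := by
        rw [← Real.log_mul hs0.ne' hb.ne']; exact Real.log_le_log ha hab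
      have lbc : Real.log s ≤ Real.log b - Real.log c := by linarith
      have hbc : s * c ≤ b := by
        rw [← Real.log_le_log_iff (by positivity) hb, Real.log_mul hs0.ne' hc.ne']; linarith
      have : b / 2 * (l / 2) ≤ phi b c := by
        unfold phi
        apply mul_le_mul _ (by linarith) (by linarith) _ <;> nlinarith
      calc phi a c ≤ a * l := hle
        _ ≤ (s * b) * l := by gcongr
        _ = 4 * s * (b / 2 * (l / 2)) := by ring
        _ ≤ 4 * s * phi b c := by gcongr
        _ ≤ _ := by nlinarith [mul_nonneg (sq_nonneg s) n1, mul_nonneg (sq_nonneg s) n2]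

/-! ### The random transposition walk -/

/-- Modified log-Sobolev inequality for the complete graph, a consequence of Jensen for `log`. -/
lemma hent_le_phi {ι : Type*} (s : Finset ι) (S : ι → ℝ) (hS : ∀ i ∈ s, 0 < S i) :
    2 * s.card * hent s S ≤ ∑ v ∈ s, ∑ w ∈ s, phi (S v) (S w) := by
  rcases s.eq_empty_or_nonempty with rfl | hs
  · simp
  have hc : (0 : ℝ) < s.card := by exact_mod_cast hs.card_pos
  have hsum : 0 < ∑ i ∈ s, S i := Finset.sum_pos hS hs
  have hm : 0 < (∑ i ∈ s, S i) / s.card := by positivity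
  have hlog : ∑ i ∈ s, Real.log (S i) ≤ s.card * Real.log ((∑ i ∈ s, S i) / s.card) := by
    have h1 : ∀ i ∈ s, Real.log (S i) ≤ Real.log ((∑ i ∈ s, S i) / s.card)
        + (S i / ((∑ i ∈ s, S i) / s.card) - 1) := by
      intro i hi
      have := Real.log_le_sub_one_of_pos (div_pos (hS i hi) hm)
      rw [Real.log_div (hS i hi).ne' hm.ne'] at this
      linarith
    refine (Finset.sum_le_sum h1).trans (le_of_eq ?_)
    rw [Finset.sum_add_distrib, Finset.sum_sub_distrib, ← Finset.sum_div]
    simp only [Finset.sum_const, nsmul_eq_mul]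
    field_simp
    ring
  have hexp : ∑ v ∈ s, ∑ w ∈ s, phi (S v) (S w)
      = 2 * (s.card * ∑ i ∈ s, S i * Real.log (S i))
        - 2 * ((∑ i ∈ s, S i) * ∑ i ∈ s, Real.log (S i)) := by
    have : ∀ v w, phi (S v) (S w) = S v * Real.log (S v) + S w * Real.log (S w)
        - S v * Real.log (S w) - Real.log (S v) * S w := by intro v w; unfold phi; ring
    simp only [this, Finset.sum_sub_distrib, Finset.sum_add_distrib, ← Finset.mul_sum,
      ← Finset.sum_mul, Finset.sum_const, nsmul_eq_mul]
    simp only [mul_left_comm _ (s.card : ℝ), ← Finset.mul_sum]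
    ring
  rw [hexp]
  unfold hent
  nlinarith [mul_le_mul_of_nonneg_left hlog hsum.le]

/-- Chain rule for the entropy with respect to a partition into blocks of equal size. -/
lemma hent_chain {Ω ι : Type*} (s : Finset Ω) (T : Finset ι) (π : Ω → ι)
    (hπ : ∀ x ∈ s, π x ∈ T) (m : ℕ) (hm : 0 < m)
    (hcard : ∀ v ∈ T, (s.filter (fun x => π x = v)).card = m) (F : Ω → ℝ)
    (hF : ∀ x ∈ s, 0 < F x) :
    hent s F = ∑ v ∈ T, hent (s.filter (fun x => π x = v)) F
      + hent T (fun v => ∑ x ∈ s.filter (fun x => π x = v), F x) := by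
  have hmR : (0 : ℝ) < m := by exact_mod_cast hm
  have hfib : ∀ g : Ω → ℝ, ∑ v ∈ T, ∑ x ∈ s.filter (fun x => π x = v), g x = ∑ x ∈ s, g x :=
    fun g => Finset.sum_fiberwise_of_maps_to hπ g
  have hcs : s.card = T.card * m := by
    rw [Finset.card_eq_sum_card_fiberwise (f := π) (t := T) (fun x hx => hπ x hx)]
    rw [Finset.sum_congr rfl hcard]; simp
  rcases T.eq_empty_or_nonempty with rfl | hT
  · have : s = ∅ := by
      rw [← Finset.card_eq_zero, hcs]; simp
    subst this; simp [hent]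
  have hTc : (0 : ℝ) < T.card := by exact_mod_cast hT.card_pos
  unfold hent
  rw [Finset.sum_sub_distrib, hfib, hfib]
  have hpos : ∀ v ∈ T, 0 < ∑ x ∈ s.filter (fun x => π x = v), F x := by
    intro v hv
    apply Finset.sum_pos
    · intro x hx; exact hF x (Finset.mem_filter.1 hx).1
    · rw [← Finset.card_pos, hcard v hv]; exact hm
  have h2 : ∑ v ∈ T, (∑ x ∈ s.filter (fun x => π x = v), F x) *
      Real.log ((∑ x ∈ s.filter (fun x => π x = v), F x) / (s.filter (fun x => π x = v)).card)
      = ∑ v ∈ T, (∑ x ∈ s.filter (fun x => π x = v), F x) *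
      Real.log (∑ x ∈ s.filter (fun x => π x = v), F x) - (∑ x ∈ s, F x) * Real.log m := by
    rw [← hfib F, Finset.sum_mul, ← Finset.sum_sub_distrib]
    refine Finset.sum_congr rfl fun v hv => ?_
    rw [hcard v hv, Real.log_div (hpos v hv).ne' hmR.ne']; ring
  rw [h2]
  have hS : 0 < ∑ x ∈ s, F x := by
    rw [← hfib F]; exact Finset.sum_pos hpos hT
  rw [hcs, Real.log_div hS.ne' hTc.ne']
  push_cast
  rw [Real.log_div hS.ne' (mul_pos hTc hmR).ne', Real.log_mul hTc.ne' hmR.ne']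
  ring

/-- The transposition of `p` and `q`. -/
def sw {α : Type*} (p q : α) : Equiv.Perm α := Equiv.swap p q

section Perm

variable {α : Type*}

lemma sw_left (p q : α) : sw p q p = q := Equiv.swap_apply_left p q

lemma sw_right (p q : α) : sw p q q = p := Equiv.swap_apply_right p q

lemma sw_ne {p q x : α} (h1 : x ≠ p) (h2 : x ≠ q) : sw p q x = x :=
  Equiv.swap_apply_of_ne_of_ne h1 h2

lemma sw_comm (p q : α) : sw p q = sw q p := Equiv.swap_comm p q

lemma sw_self (p : α) : sw p p = 1 := Equiv.swap_self p

lemma sw_mul_self (p q : α) : sw p q * sw p q = 1 := Equiv.swap_mul_self p q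

lemma sw_sw (p q x : α) : sw p q (sw p q x) = x := by
  rw [← Equiv.Perm.mul_apply, sw_mul_self, Equiv.Perm.one_apply]

lemma mul_sw (σ : Equiv.Perm α) (p q : α) : σ * sw p q = sw (σ p) (σ q) * σ :=
  Equiv.mul_swap_eq_swap_mul σ p q

lemma mul_sw_sw (σ : Equiv.Perm α) (p q : α) : σ * sw p q * sw p q = σ := by
  rw [mul_assoc, sw_mul_self, mul_one]

variable [Fintype α]

/-- The permutations supported on `T`. -/
def permOn (T : Finset α) : Finset (Equiv.Perm α) :=
  Finset.univ.filter fun ρ => ∀ x, x ∉ T → ρ x = x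

lemma mem_permOn {T : Finset α} {ρ : Equiv.Perm α} : ρ ∈ permOn T ↔ ∀ x, x ∉ T → ρ x = x := by
  simp [permOn]

lemma permOn_apply_mem {T : Finset α} {ρ : Equiv.Perm α} (h : ρ ∈ permOn T) {x : α}
    (hx : x ∈ T) : ρ x ∈ T := by
  by_contra hc
  have := mem_permOn.1 h _ hc
  exact hc (by rwa [ρ.injective this])

lemma permOn_mul {T : Finset α} {ρ τ : Equiv.Perm α} (h : ρ ∈ permOn T) (h2 : τ ∈ permOn T) :
    ρ * τ ∈ permOn T := by
  rw [mem_permOn] at *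
  intro x hx
  rw [Equiv.Perm.mul_apply, h2 x hx, h x hx]

lemma sw_mem_permOn {T : Finset α} {p q : α} (hp : p ∈ T) (hq : q ∈ T) : sw p q ∈ permOn T := by
  rw [mem_permOn]
  intro x hx
  exact sw_ne (by rintro rfl; exact hx hp) (by rintro rfl; exact hx hq)

lemma permOn_mono {S T : Finset α} (h : S ⊆ T) : permOn S ⊆ permOn T := by
  intro ρ hρ
  rw [mem_permOn] at *
  exact fun x hx => hρ x fun hc => hx (h hc)

lemma permOn_inv_mem {T : Finset α} {ρ : Equiv.Perm α} (h : ρ ∈ permOn T) : ρ⁻¹ ∈ permOn T := by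
  rw [mem_permOn] at *
  intro x hx
  rw [Equiv.Perm.inv_eq_iff_eq]; exact (h x hx).symm

lemma permOn_sum_apply {T : Finset α} {ρ : Equiv.Perm α} (h : ρ ∈ permOn T) (g : α → ℝ) :
    ∑ b ∈ T, g (ρ b) = ∑ v ∈ T, g v := by
  refine Finset.sum_nbij' (fun b => ρ b) (fun v => ρ⁻¹ v) ?_ ?_ ?_ ?_ ?_
  · exact fun b hb => permOn_apply_mem h hb
  · exact fun b hb => permOn_apply_mem (permOn_inv_mem h) hb
  · intro b _; simp
  · intro b _; simp
  · intro b _; rfl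

/-- The permutations supported on `T` sending `p` to `v` form a coset of those supported on
`T \ {p}`. -/
lemma permOn_block {T : Finset α} {p v : α} (hp : p ∈ T) (hv : v ∈ T) :
    (permOn T).filter (fun ρ => ρ p = v)
      = (permOn (T.erase p)).map (mulLeftEmbedding (sw p v)) := by
  ext ρ
  simp only [Finset.mem_filter, Finset.mem_map, mulLeftEmbedding_apply]
  constructor
  · rintro ⟨h1, h2⟩
    refine ⟨sw p v * ρ, ?_, by rw [← mul_assoc, sw_mul_self, one_mul]⟩
    have h3 := permOn_mul (sw_mem_permOn hp hv) h1
    rw [mem_permOn] at h3 ⊢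
    intro x hx
    by_cases hxp : x = p
    · subst hxp
      rw [Equiv.Perm.mul_apply, h2, sw_right]
    · exact h3 x fun hc => hx (Finset.mem_erase.2 ⟨hxp, hc⟩)
  · rintro ⟨τ, h1, rfl⟩
    refine ⟨permOn_mul (sw_mem_permOn hp hv) (permOn_mono (Finset.erase_subset _ _) h1), ?_⟩
    rw [Equiv.Perm.mul_apply, mem_permOn.1 h1 p (by simp), sw_left]

lemma hent_map {Ω Ω' : Type*} (s : Finset Ω) (e : Ω ↪ Ω') (F : Ω' → ℝ) :
    hent (s.map e) F = hent s (fun x => F (e x)) := by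
  unfold hent; simp

/-- The Dirichlet form of the transpositions of two points of `T`, summed over the permutations
supported on `T'`. -/
def trForm (T' T : Finset α) (F : Equiv.Perm α → ℝ) : ℝ :=
  ∑ ρ ∈ permOn T', ∑ a ∈ T, ∑ b ∈ T, phi (F ρ) (F (ρ * sw a b))

lemma trForm_nonneg (T' T : Finset α) (F : Equiv.Perm α → ℝ) (hF : ∀ ρ, 0 < F ρ) :
    0 ≤ trForm T' T F :=
  Finset.sum_nonneg fun _ _ => Finset.sum_nonneg fun _ _ => Finset.sum_nonneg fun _ _ =>
    phi_nonneg (hF _) (hF _)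

lemma sum_erase_pairs (T : Finset α) (g : α → α → ℝ) (hg : ∀ a, g a a = 0) :
    ∑ p ∈ T, ∑ a ∈ T.erase p, ∑ b ∈ T.erase p, g a b
      = ((T.card : ℝ) - 2) * ∑ a ∈ T, ∑ b ∈ T, g a b := by
  have h1 : ∀ p ∈ T, ∑ a ∈ T.erase p, ∑ b ∈ T.erase p, g a b
      = ∑ a ∈ T, ∑ b ∈ T, g a b - ∑ b ∈ T, g p b - ∑ a ∈ T, g a p := by
    intro p hp
    have h2 : ∀ a, ∑ b ∈ T.erase p, g a b = ∑ b ∈ T, g a b - g a p := fun a => by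
      rw [← Finset.add_sum_erase T (g a) hp]; ring
    rw [← Finset.add_sum_erase T (fun a => ∑ b ∈ T, g a b) hp,
      ← Finset.add_sum_erase T (fun a => g a p) hp, hg]
    simp only [h2, Finset.sum_sub_distrib]
    ring
  rw [Finset.sum_congr rfl h1]
  simp only [Finset.sum_sub_distrib, Finset.sum_const, nsmul_eq_mul]
  rw [Finset.sum_comm (f := fun p a => g a p)]
  ring

/-- Modified log-Sobolev inequality for random transpositions of `t + 1` points. In the induction
step the chain rule is applied to the partition of the permutations by the image of a point `p`.
Its blocks are cosets of the permutations of `T \ {p}`, to which the induction hypothesis applies;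
the entropy of the block sums is bounded by the complete graph inequality and the convexity of
`phi`. The resulting inequalities are summed over `p`. -/
lemma hent_permOn (t : ℕ) : ∀ (T : Finset α) (_ : T.card = t + 1) (F : Equiv.Perm α → ℝ)
    (_ : ∀ ρ, 0 < F ρ), 2 * ((t : ℝ) + 1) * hent (permOn T) F ≤ trForm T T F := by
  induction t with
  | zero =>
    intro T hT F hF
    obtain ⟨x, rfl⟩ := Finset.card_eq_one.1 hT
    have : permOn {x} = {(1 : Equiv.Perm α)} := by
      ext ρ
      rw [mem_permOn, Finset.mem_singleton]
      constructor
      · intro h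
        ext y
        by_cases hy : y = x
        · subst hy
          by_contra hc
          have h2 := h (ρ y) (by simpa using hc)
          exact hc (by simpa using ρ.injective h2)
        · exact h y (by simpa using hy)
      · rintro rfl; simp
    have h0 : hent (permOn {x}) F = 0 := by
      rw [this]; simp [hent]
    rw [h0, mul_zero]
    exact trForm_nonneg _ _ _ hF
  | succ t ih =>
    intro T hT F hF
    have hTc : (T.card : ℝ) = t + 2 := by rw [hT]; push_cast; ring
    have hcardblock : ∀ p ∈ T, ∀ v ∈ T, ((permOn T).filter (fun ρ => ρ p = v)).card
        = (permOn (T.erase p)).card := by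
      intro p hp v hv
      rw [permOn_block hp hv, Finset.card_map]
    -- conditioning on the image of a single point `p`
    have hstep : ∀ p ∈ T, 2 * ((t : ℝ) + 1) * (t + 2) * hent (permOn T) F
        ≤ (t + 2) * trForm T (T.erase p) F
          + (t + 1) * ∑ ρ ∈ permOn T, ∑ b ∈ T, phi (F ρ) (F (ρ * sw p b)) := by
      intro p hp
      have hpos : 0 < (permOn (T.erase p)).card :=
        Finset.card_pos.2 ⟨1, by rw [mem_permOn]; simp⟩
      have hch := hent_chain (permOn T) T (fun ρ => ρ p) (fun ρ hρ => permOn_apply_mem hρ hp)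
        _ hpos (hcardblock p hp) F (fun ρ _ => hF ρ)
      have hA : 2 * ((t : ℝ) + 1) * ∑ v ∈ T, hent ((permOn T).filter (fun ρ => ρ p = v)) F
          ≤ trForm T (T.erase p) F := by
        unfold trForm
        rw [← Finset.sum_fiberwise_of_maps_to (s := permOn T) (t := T) (g := fun ρ => ρ p)
          (fun ρ hρ => permOn_apply_mem hρ hp), Finset.mul_sum]
        refine Finset.sum_le_sum fun v hv => ?_
        rw [permOn_block hp hv, hent_map, Finset.sum_map]
        have := ih (T.erase p) (by rw [Finset.card_erase_of_mem hp, hT]; rfl)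
          (fun ρ => F (sw p v * ρ)) (fun ρ => hF _)
        refine this.trans (le_of_eq ?_)
        simp [trForm, mul_assoc]
      have hB : 2 * ((t : ℝ) + 2) * hent T (fun v => ∑ x ∈ (permOn T).filter
          (fun ρ => ρ p = v), F x)
          ≤ ∑ ρ ∈ permOn T, ∑ b ∈ T, phi (F ρ) (F (ρ * sw p b)) := by
        have h1 := hent_le_phi T (fun v => ∑ x ∈ (permOn T).filter (fun ρ => ρ p = v), F x)
          (by
            intro v hv
            apply Finset.sum_pos (fun x _ => hF x)
            rw [← Finset.card_pos, hcardblock p hp v hv]; exact hpos)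
        rw [hTc] at h1
        refine h1.trans ?_
        rw [← Finset.sum_fiberwise_of_maps_to (s := permOn T) (t := T) (g := fun ρ => ρ p)
          (fun ρ hρ => permOn_apply_mem hρ hp)]
        refine Finset.sum_le_sum fun v hv => ?_
        have h2 : ∀ w ∈ T, phi (∑ x ∈ (permOn T).filter (fun ρ => ρ p = v), F x)
            (∑ x ∈ (permOn T).filter (fun ρ => ρ p = w), F x)
            ≤ ∑ ρ ∈ (permOn T).filter (fun ρ => ρ p = v), phi (F ρ) (F (sw v w * ρ)) := by
          intro w hw
          have h3 : ∑ x ∈ (permOn T).filter (fun ρ => ρ p = w), F x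
              = ∑ ρ ∈ (permOn T).filter (fun ρ => ρ p = v), F (sw v w * ρ) := by
            symm
            refine Finset.sum_nbij' (fun ρ => sw v w * ρ) (fun ρ => sw v w * ρ) ?_ ?_ ?_ ?_ ?_
            · intro ρ hρ
              rw [Finset.mem_filter] at hρ ⊢
              refine ⟨permOn_mul (sw_mem_permOn hv hw) hρ.1, ?_⟩
              rw [Equiv.Perm.mul_apply, hρ.2, sw_left]
            · intro ρ hρ
              rw [Finset.mem_filter] at hρ ⊢
              refine ⟨permOn_mul (sw_mem_permOn hv hw) hρ.1, ?_⟩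
              rw [Equiv.Perm.mul_apply, hρ.2, sw_right]
            · intro ρ _; rw [← mul_assoc, sw_mul_self, one_mul]
            · intro ρ _; rw [← mul_assoc, sw_mul_self, one_mul]
            · intro ρ _; rfl
          rw [h3]
          exact phi_sum_le _ _ _ (fun _ _ => hF _) (fun _ _ => hF _)
        refine (Finset.sum_le_sum h2).trans (le_of_eq ?_)
        rw [Finset.sum_comm]
        refine Finset.sum_congr rfl fun ρ hρ => ?_
        rw [Finset.mem_filter] at hρ
        rw [← permOn_sum_apply hρ.1]
        refine Finset.sum_congr rfl fun b _ => ?_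
        rw [mul_sw, hρ.2]
      rw [hch]
      have ht : (0 : ℝ) ≤ t := Nat.cast_nonneg t
      nlinarith
    have hsum := Finset.sum_le_sum hstep
    rw [Finset.sum_const, nsmul_eq_mul, hTc, Finset.sum_add_distrib, ← Finset.mul_sum,
      ← Finset.mul_sum] at hsum
    have h1 : ∑ p ∈ T, trForm T (T.erase p) F = t * trForm T T F := by
      unfold trForm
      rw [Finset.sum_comm, Finset.mul_sum]
      refine Finset.sum_congr rfl fun ρ _ => ?_
      rw [sum_erase_pairs T (fun a b => phi (F ρ) (F (ρ * sw a b)))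
        (fun a => by rw [sw_self, mul_one, phi_self]), hTc]
      ring
    have h2 : ∑ p ∈ T, ∑ ρ ∈ permOn T, ∑ b ∈ T, phi (F ρ) (F (ρ * sw p b)) = trForm T T F := by
      unfold trForm
      rw [Finset.sum_comm]
    rw [h1, h2] at hsum
    have hE := trForm_nonneg T T F hF
    have ht : (0 : ℝ) ≤ t := Nat.cast_nonneg t
    push_cast
    have h3 : ((t : ℝ) + 1) * (t + 2) * (2 * (t + 1 + 1) * hent (permOn T) F)
        ≤ (t + 1) * (t + 2) * trForm T T F := by nlinarith
    exact le_of_mul_le_mul_left h3 (by positivity)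

/-- Modified log-Sobolev inequality for random transpositions. -/
lemma hent_perm (hα : 0 < Fintype.card α) (F : Equiv.Perm α → ℝ) (hF : ∀ ρ, 0 < F ρ) :
    2 * (Fintype.card α : ℝ) * hent Finset.univ F
      ≤ ∑ ρ, ∑ a, ∑ b, phi (F ρ) (F (ρ * sw a b)) := by
  obtain ⟨t, ht⟩ := Nat.exists_eq_add_of_lt hα
  have h := hent_permOn t (Finset.univ : Finset α) (by rw [Finset.card_univ]; omega) F hF
  have h1 : permOn (Finset.univ : Finset α) = Finset.univ := by
    ext; simp [mem_permOn]
  rw [trForm, h1] at h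
  rw [ht]
  push_cast
  simpa using h

end Perm

/-! ### Extending functions from simple configurations to all permutations -/

/-- The elements satisfying `P`. -/
def fil {X : Type*} [Fintype X] (P : X → Prop) : Finset X := Finset.univ.filter P

@[simp] lemma mem_fil {X : Type*} [Fintype X] {P : X → Prop} {x : X} : x ∈ fil P ↔ P x := by
  simp [fil]

/-- A defect map `B` sends a permutation to the set of its defect points; the permutations without
defects are the simple ones. Up to the constant `c`, a transposition creates or destroys a defect
at a prescribed point only in few ways. The fields say that a transposition whose two points are not
defects afterwards creates no defect at all (`sub`), that for given `σ` and `p` few transpositions at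
`p` leave a defect at one of its two points (`few`), that few transpositions create a defect at a
given point (`few_pairs`), that multiplying by a transposition changes the set of pairs `(p, q)` for
which `sw p q` leaves a defect at `p` only a little (`few_diff`), and that the number of defects
changes by at most `c` (`lip`). -/
structure Defects {α : Type*} [Fintype α] (B : Equiv.Perm α → Finset α) (c : ℕ) : Prop where
  sub : ∀ σ p q, p ∉ B (σ * sw p q) → q ∉ B (σ * sw p q) → B (σ * sw p q) ⊆ B σ
  few : ∀ σ p, (fil fun q =>
    p ∈ B (σ * sw p q) ∨ q ∈ B (σ * sw p q)).card ≤ c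
  few_pairs : ∀ σ p, p ∉ B σ → (fil fun ab : α × α =>
    p ∈ B (σ * sw ab.1 ab.2)).card ≤ c
  few_diff : ∀ σ a b, (fil fun pq : α × α =>
    pq.1 ∈ B (σ * sw pq.1 pq.2) ∧ pq.1 ∉ B (σ * sw a b * sw pq.1 pq.2)).card ≤ c
  lip : ∀ σ p q, (B σ).card ≤ (B (σ * sw p q)).card + c

/-- Weighted double counting: `T` injects into the pairs `(y, z)` with `y ∈ R` and `z ∈ S y`. -/
lemma sum_le_of_inj {X Y Z : Type*} (T : Finset X) (R : Finset Y) (S : Y → Finset Z) (u : X → Y)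
    (v : X → Z) (h : Y → ℝ) (C : ℝ) (hinj : Function.Injective fun t => (u t, v t))
    (hu : ∀ t ∈ T, u t ∈ R) (hv : ∀ t ∈ T, v t ∈ S (u t))
    (hS : ∀ y ∈ R, ((S y).card : ℝ) ≤ C) (hh : ∀ y ∈ R, 0 ≤ h y) :
    ∑ t ∈ T, h (u t) ≤ C * ∑ y ∈ R, h y := by
  have h1 : ∑ t ∈ T, h (u t) ≤ ∑ y ∈ R, ∑ _z ∈ S y, h y := by
    rw [← Finset.sum_fiberwise_of_maps_to hu]
    refine Finset.sum_le_sum fun y hy => ?_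
    have h2 : ∑ t ∈ T.filter (fun t => u t = y), h (u t)
        = ∑ t ∈ T.filter (fun t => u t = y), h y :=
      Finset.sum_congr rfl fun t ht => by rw [(Finset.mem_filter.1 ht).2]
    rw [h2, Finset.sum_const, Finset.sum_const, nsmul_eq_mul, nsmul_eq_mul]
    refine mul_le_mul_of_nonneg_right ?_ (hh y hy)
    norm_cast
    refine Finset.card_le_card_of_injOn v ?_ ?_
    · intro t ht
      have ht' := Finset.mem_filter.1 ht
      have := hv t ht'.1
      rwa [ht'.2] at this
    · intro t ht t' ht' hvv
      have e1 := (Finset.mem_filter.1 ht).2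
      have e2 := (Finset.mem_filter.1 ht').2
      exact hinj (Prod.ext (e1.trans e2.symm) hvv)
  refine h1.trans ?_
  rw [Finset.mul_sum]
  refine Finset.sum_le_sum fun y hy => ?_
  rw [Finset.sum_const, nsmul_eq_mul]
  exact mul_le_mul_of_nonneg_right (hS y hy) (hh y hy)

lemma card_prod_le {X Y : Type*} [Fintype X] [Fintype Y] (P : X → Prop) (R : X → Y → Prop)
    (C C' : ℕ) (hP : (fil P).card ≤ C)
    (hR : ∀ x, P x → (fil (R x)).card ≤ C') :
    (fil fun z : X × Y => P z.1 ∧ R z.1 z.2).card ≤ C * C' := by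
  have h1 : (fil fun z : X × Y => P z.1 ∧ R z.1 z.2).card
      ≤ (fil P).card * C' := by
    rw [mul_comm]
    refine Finset.card_le_mul_card_image_of_maps_to (f := Prod.fst) ?_ C' ?_
    · intro z hz
      simp only [mem_fil] at hz ⊢
      exact hz.1
    · intro x hx
      simp only [mem_fil] at hx
      refine le_trans ?_ (hR x hx)
      refine Finset.card_le_card_of_injOn Prod.snd ?_ ?_
      · intro z hz
        simp only [Finset.mem_coe, Finset.mem_filter, mem_fil] at hz ⊢
        obtain ⟨⟨_, h2⟩, rfl⟩ := hz
        exact h2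
      · intro z hz z' hz' e
        simp only [Finset.mem_coe, Finset.mem_filter, mem_fil] at hz hz'
        exact Prod.ext (hz.2.trans hz'.2.symm) e
  exact h1.trans (Nat.mul_le_mul_right _ hP)

section Ext

variable {α : Type*} [Fintype α] {B : Equiv.Perm α → Finset α} {c : ℕ}

/-- The transposition of `p` and `q` leaves no defect at `p` and `q`. -/
def Vd (B : Equiv.Perm α → Finset α) (σ : Equiv.Perm α) (p q : α) : Prop :=
  p ∉ B (σ * sw p q) ∧ q ∉ B (σ * sw p q)

/-- The value of `g` after transposing `p` and `q`, replaced by `1` when this leaves a defect at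
`p` or `q`. -/
def gh (B : Equiv.Perm α → Finset α) (g : Equiv.Perm α → ℝ) (σ : Equiv.Perm α) (p q : α) : ℝ :=
  if Vd B σ p q then g (σ * sw p q) else 1

/-- `g` extends the function `f` on simple permutations by repairing a random defect: at a
non-simple `σ` it is the average of `gh B g σ p q` over defect points `p` and arbitrary `q`. -/
structure IsExt (B : Equiv.Perm α → Finset α) (f g : Equiv.Perm α → ℝ) : Prop where
  base : ∀ σ, B σ = ∅ → g σ = f σ
  avg : ∀ σ, ((B σ).card : ℝ) * Fintype.card α * g σ
    = ∑ p ∈ B σ, ∑ q, gh B g σ p q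

lemma Defects.card_lt (hB : Defects B c) {σ : Equiv.Perm α} {p q : α} (hp : p ∈ B σ)
    (hV : Vd B σ p q) : (B (σ * sw p q)).card < (B σ).card :=
  Finset.card_lt_card ⟨hB.sub σ p q hV.1 hV.2, fun h => hV.1 (h hp)⟩

/-- The extension is built level by level, since successful repairs decrease the number of
defects. Averages preserve the bounds `lo` and `hi`, and failed repairs, which contribute `1`, do
so as well. -/
lemma exists_ext (hB : Defects B c) (f : Equiv.Perm α → ℝ) (lo hi : ℝ) (hlo : lo ≤ 1)
    (hhi : 1 ≤ hi) (hf : ∀ σ, B σ = ∅ → lo ≤ f σ ∧ f σ ≤ hi) :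
    ∃ g, IsExt B f g ∧ ∀ σ, lo ≤ g σ ∧ g σ ≤ hi := by
  have key : ∀ k : ℕ, ∃ g : Equiv.Perm α → ℝ, (∀ σ, B σ = ∅ → g σ = f σ) ∧
      (∀ σ, (B σ).card ≤ k → ((B σ).card : ℝ) * Fintype.card α * g σ
        = ∑ p ∈ B σ, ∑ q, gh B g σ p q) ∧ ∀ σ, lo ≤ g σ ∧ g σ ≤ hi := by
    intro k
    induction k with
    | zero =>
      refine ⟨fun σ => if B σ = ∅ then f σ else 1, fun σ h => by simp [h], ?_, ?_⟩
      · intro σ h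
        have : B σ = ∅ := Finset.card_eq_zero.1 (by omega)
        simp [this]
      · intro σ
        by_cases h : B σ = ∅
        · simpa [h] using hf σ h
        · simpa [h] using ⟨hlo, hhi⟩
    | succ k ih =>
      obtain ⟨g, h1, h2, h3⟩ := ih
      let g' : Equiv.Perm α → ℝ := fun σ => if (B σ).card ≤ k then g σ else
        (∑ p ∈ B σ, ∑ q, gh B g σ p q) / ((B σ).card * Fintype.card α)
      have hlow : ∀ σ, (B σ).card ≤ k → g' σ = g σ := fun σ h => if_pos h
      have hgh : ∀ σ, (B σ).card ≤ k + 1 → ∀ p ∈ B σ, ∀ q, gh B g' σ p q = gh B g σ p q := by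
        intro σ h p hp q
        unfold gh
        split_ifs with hV
        · exact hlow _ (by have := hB.card_lt hp hV; omega)
        · rfl
      have hghb : ∀ σ p q, lo ≤ gh B g σ p q ∧ gh B g σ p q ≤ hi := by
        intro σ p q
        unfold gh
        split_ifs
        · exact h3 _
        · exact ⟨hlo, hhi⟩
      have hpos : ∀ σ, ¬ (B σ).card ≤ k → (0 : ℝ) < (B σ).card * Fintype.card α := by
        intro σ h
        have h4 : 0 < (B σ).card := by omega
        have h5 : 0 < Fintype.card α := h4.trans_le (Finset.card_le_univ _)
        exact_mod_cast Nat.mul_pos h4 h5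
      refine ⟨g', ?_, ?_, ?_⟩
      · intro σ h
        rw [hlow σ (by simp [h]), h1 σ h]
      · intro σ h
        rw [Finset.sum_congr rfl fun p hp => Finset.sum_congr rfl fun q _ => hgh σ h p hp q]
        by_cases hk : (B σ).card ≤ k
        · rw [hlow σ hk, h2 σ hk]
        · simp only [g', if_neg hk]
          rw [mul_div_cancel₀ _ (hpos σ hk).ne']
      · intro σ
        by_cases hk : (B σ).card ≤ k
        · rw [hlow σ hk]; exact h3 σ
        · simp only [g', if_neg hk]
          have e : ∀ t : ℝ, (B σ).card * Fintype.card α * t = ∑ p ∈ B σ, ∑ _q : α, t := by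
            intro t; simp [Finset.sum_const, mul_assoc]
          rw [le_div_iff₀ (hpos σ hk), div_le_iff₀ (hpos σ hk), mul_comm lo, mul_comm hi, e, e]
          exact ⟨Finset.sum_le_sum fun p _ => Finset.sum_le_sum fun q _ => (hghb σ p q).1,
            Finset.sum_le_sum fun p _ => Finset.sum_le_sum fun q _ => (hghb σ p q).2⟩
  obtain ⟨g, h1, h2, h3⟩ := key (Fintype.card α)
  exact ⟨g, ⟨h1, fun σ => h2 σ (Finset.card_le_univ _)⟩, h3⟩

/-- The triples `(σ, a, b)` such that `σ` and `σ * sw a b` have at most `k` defects. -/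
def lowTr (B : Equiv.Perm α → Finset α) (k : ℕ) : Finset (Equiv.Perm α × α × α) :=
  fil fun t => (B t.1).card ≤ k ∧ (B (t.1 * sw t.2.1 t.2.2)).card ≤ k

/-- Transposition Dirichlet form restricted to permutations with at most `k` defects. -/
def DD (B : Equiv.Perm α → Finset α) (g : Equiv.Perm α → ℝ) (k : ℕ) : ℝ :=
  ∑ t ∈ lowTr B k, phi (g t.1) (g (t.1 * sw t.2.1 t.2.2))

/-- Permutations with exactly `k` defects. -/
def lev (B : Equiv.Perm α → Finset α) (k : ℕ) : Finset (Equiv.Perm α) :=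
  fil fun σ => (B σ).card = k

/-- Permutations with at most `k` defects. -/
def levLe (B : Equiv.Perm α → Finset α) (k : ℕ) : Finset (Equiv.Perm α) :=
  fil fun σ => (B σ).card ≤ k

/-- The sum of `psi ∘ g` over the permutations with exactly `k` defects. -/
def ww (B : Equiv.Perm α → Finset α) (g : Equiv.Perm α → ℝ) (k : ℕ) : ℝ :=
  ∑ σ ∈ lev B k, psi (g σ)

/-- The sum of `psi ∘ g` over the permutations with at most `k` defects. -/
def WW (B : Equiv.Perm α → Finset α) (g : Equiv.Perm α → ℝ) (k : ℕ) : ℝ :=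
  ∑ σ ∈ levLe B k, psi (g σ)

lemma mem_lowTr {k : ℕ} {t : Equiv.Perm α × α × α} :
    t ∈ lowTr B k ↔ (B t.1).card ≤ k ∧ (B (t.1 * sw t.2.1 t.2.2)).card ≤ k := by simp only [lowTr, mem_fil]

lemma mem_lev {k : ℕ} {σ : Equiv.Perm α} : σ ∈ lev B k ↔ (B σ).card = k := by simp only [lev, mem_fil]

lemma mem_levLe {k : ℕ} {σ : Equiv.Perm α} : σ ∈ levLe B k ↔ (B σ).card ≤ k := by simp only [levLe, mem_fil]

lemma Defects.card_create (hB : Defects B c) (σ : Equiv.Perm α) (p : α) :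
    (fil fun q => p ∈ B (σ * sw p q)).card ≤ c := by
  refine (Finset.card_le_card ?_).trans (hB.few σ p)
  intro q hq
  simp only [mem_fil] at hq ⊢
  exact Or.inl hq

lemma Defects.card_create_pairs (hB : Defects B c) (σ : Equiv.Perm α) :
    (fil fun pq : α × α => pq.1 ∈ B (σ * sw pq.1 pq.2)).card
      ≤ Fintype.card α * c := by
  have := card_prod_le (X := α) (Y := α) (fun _ => True) (fun p q => p ∈ B (σ * sw p q))
    (Fintype.card α) c (Finset.card_le_univ _) (fun p _ => hB.card_create σ p)
  simpa using this

lemma Defects.card_not_Vd (hB : Defects B c) (σ : Equiv.Perm α) (p : α) :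
    (fil fun q => ¬ Vd B σ p q).card ≤ c := by
  refine (Finset.card_le_card ?_).trans (hB.few σ p)
  intro q hq
  simp only [mem_fil, Vd] at hq ⊢
  tauto

/-- Points where `psi ∘ g` is large are rare among permutations with many defects: a permutation
with `k` defects averages over permutations with between `k - c` and `k - 1` defects, and each of
those is reached at most `N * c` times. -/
lemma ww_rec (hB : Defects B c) {f g : Equiv.Perm α → ℝ} (hg : IsExt B f g)
    (hpos : ∀ σ, 0 < g σ) (hN : 0 < Fintype.card α) (k : ℕ) :
    (k : ℝ) * ww B g k ≤ c * ∑ j ∈ Finset.Ico (k - c) k, ww B g j := by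
  have hNR : (0 : ℝ) < Fintype.card α := by exact_mod_cast hN
  have h1 : (Fintype.card α : ℝ) * (k * ww B g k)
      ≤ ∑ t ∈ fil (fun t : Equiv.Perm α × α × α => t.1 ∈ lev B k ∧
          t.2.1 ∈ B t.1 ∧ Vd B t.1 t.2.1 t.2.2), psi (g (t.1 * sw t.2.1 t.2.2)) := by
    rw [fil, Finset.sum_filter, Fintype.sum_prod_type, ww, Finset.mul_sum, Finset.mul_sum]
    simp only [Fintype.sum_prod_type]
    rw [← Finset.sum_subset (Finset.subset_univ (lev B k))]
    · refine Finset.sum_le_sum fun σ hσ => ?_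
      have hσk := mem_lev.1 hσ
      have h2 := psi_sum_le (B σ ×ˢ (Finset.univ : Finset α)) (fun t => gh B g σ t.1 t.2)
        (by
          intro t _; unfold gh
          split_ifs
          · exact hpos _
          · exact one_pos) (g σ) (hpos σ)
        (by rw [Finset.sum_product, ← hg.avg σ, Finset.card_product, Finset.card_univ]; push_cast
            ring)
      rw [Finset.card_product, Finset.card_univ, hσk] at h2
      push_cast at h2
      calc (Fintype.card α : ℝ) * (k * psi (g σ)) = k * Fintype.card α * psi (g σ) := by ring
        _ ≤ _ := h2
        _ = _ := by
          rw [Finset.sum_product, ← Finset.sum_subset (Finset.subset_univ (B σ))]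
          · refine Finset.sum_congr rfl fun p hp => Finset.sum_congr rfl fun q _ => ?_
            unfold gh
            by_cases hV : Vd B σ p q
            · simp [hV, hσ, hp]
            · simp [hV, psi_one]
          · intro p _ hp
            simp [hp]
    · intro σ _ hσ
      simp [hσ]
  have h2 : ∑ t ∈ fil (fun t : Equiv.Perm α × α × α => t.1 ∈ lev B k ∧
          t.2.1 ∈ B t.1 ∧ Vd B t.1 t.2.1 t.2.2), psi (g (t.1 * sw t.2.1 t.2.2))
      ≤ ((Fintype.card α * c : ℕ) : ℝ) * ∑ y ∈ fil
        (fun y : Equiv.Perm α => (B y).card ∈ Finset.Ico (k - c) k), psi (g y) := by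
    refine sum_le_of_inj _ _
      (fun y => fil fun pq : α × α => pq.1 ∈ B (y * sw pq.1 pq.2))
      (fun t : Equiv.Perm α × α × α => t.1 * sw t.2.1 t.2.2) (fun t => t.2) (fun y => psi (g y)) _ ?_ ?_ ?_ ?_ ?_
    · rintro ⟨σ, p, q⟩ ⟨σ', p', q'⟩ h
      simp only [Prod.mk.injEq] at h
      obtain ⟨h, rfl, rfl⟩ := h
      rw [mul_right_cancel h]
    · rintro ⟨σ, p, q⟩ h
      simp only [mem_fil, mem_lev, Finset.mem_Ico] at h ⊢
      have h3 := hB.card_lt h.2.1 h.2.2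
      have h4 := hB.lip σ p q
      omega
    · rintro ⟨σ, p, q⟩ h
      simp only [mem_fil] at h ⊢
      rw [mul_sw_sw]; exact h.2.1
    · intro y _
      exact_mod_cast hB.card_create_pairs y
    · intro y _; exact psi_nonneg (hpos y)
  have h3 : ∑ y ∈ fil
        (fun y : Equiv.Perm α => (B y).card ∈ Finset.Ico (k - c) k), psi (g y)
      = ∑ j ∈ Finset.Ico (k - c) k, ww B g j := by
    rw [← Finset.sum_fiberwise_of_maps_to (t := Finset.Ico (k - c) k) (g := fun y => (B y).card)
      (fun y hy => by have := mem_fil.1 hy; exact this)]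
    refine Finset.sum_congr rfl fun j hj => ?_
    unfold ww
    refine Finset.sum_congr ?_ fun _ _ => rfl
    ext y
    simp only [Finset.mem_filter, mem_fil, mem_lev]
    constructor
    · exact fun h => h.2
    · rintro rfl; exact ⟨hj, rfl⟩
  rw [h3] at h2
  have h4 := h1.trans h2
  push_cast at h4
  rw [mul_assoc] at h4
  exact le_of_mul_le_mul_left h4 hNR

/-- The growth constant in `ww_le`. -/
def growth (c : ℕ) : ℝ := (1 + (c : ℝ) * c * 2 ^ c) ^ (c * c * 2 ^ c)

/-- The entropy density summed over the permutations with `k` defects decays like `2 ^ (-k)`. By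
`ww_rec`, the quantity `ww B g k * 2 ^ k` is at most its maximum over previous levels as soon as
`k > c * c * 2 ^ c`; before that it grows by at most a factor `1 + c * c * 2 ^ c` per level. -/
lemma ww_le (hB : Defects B c) {f g : Equiv.Perm α → ℝ} (hg : IsExt B f g)
    (hpos : ∀ σ, 0 < g σ) (hN : 0 < Fintype.card α) (k : ℕ) :
    ww B g k * 2 ^ k ≤ growth c * ww B g 0 := by
  have hw0 : ∀ j, 0 ≤ ww B g j := fun j => Finset.sum_nonneg fun σ _ => psi_nonneg (hpos σ)
  set b : ℝ := (c : ℝ) * c * 2 ^ c with hb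
  have hb0 : 0 ≤ b := by positivity
  have h1b : 1 ≤ 1 + b := by linarith
  have key : ∀ k j : ℕ, j ≤ k →
      ww B g j * 2 ^ j ≤ (1 + b) ^ (min k (c * c * 2 ^ c)) * ww B g 0 := by
    intro k
    induction k with
    | zero => intro j hj; obtain rfl : j = 0 := by omega
              simp
    | succ k ih =>
      intro j hj
      have hmono : (1 + b) ^ (min k (c * c * 2 ^ c)) ≤ (1 + b) ^ (min (k + 1) (c * c * 2 ^ c)) :=
        pow_le_pow_right₀ h1b (by omega)
      rcases Nat.lt_or_ge j (k + 1) with hlt | hge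
      · exact (ih j (by omega)).trans (mul_le_mul_of_nonneg_right hmono (hw0 0))
      obtain rfl : j = k + 1 := by omega
      set X := (1 + b) ^ (min k (c * c * 2 ^ c)) * ww B g 0 with hX
      have hX0 : 0 ≤ X := mul_nonneg (by positivity) (hw0 0)
      have h1 := ww_rec hB hg hpos hN (k + 1)
      have h2 : (∑ j ∈ Finset.Ico (k + 1 - c) (k + 1), ww B g j) * 2 ^ (k + 1)
          ≤ c * (2 ^ c * X) := by
        rw [Finset.sum_mul]
        have h3 : ∀ j ∈ Finset.Ico (k + 1 - c) (k + 1), ww B g j * 2 ^ (k + 1) ≤ 2 ^ c * X := by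
          intro j hj
          rw [Finset.mem_Ico] at hj
          have h4 := ih j (by omega)
          have h5 : (2 : ℝ) ^ (k + 1) ≤ 2 ^ c * 2 ^ j := by
            rw [← pow_add]; exact pow_le_pow_right₀ (by norm_num) (by omega)
          calc ww B g j * 2 ^ (k + 1) ≤ ww B g j * (2 ^ c * 2 ^ j) :=
                mul_le_mul_of_nonneg_left h5 (hw0 j)
            _ = 2 ^ c * (ww B g j * 2 ^ j) := by ring
            _ ≤ _ := mul_le_mul_of_nonneg_left h4 (by positivity)
        refine (Finset.sum_le_card_nsmul _ _ _ h3).trans ?_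
        rw [nsmul_eq_mul, Nat.card_Ico]
        refine mul_le_mul_of_nonneg_right ?_ (by positivity)
        norm_cast; omega
      have h6 : ((k + 1 : ℕ) : ℝ) * (ww B g (k + 1) * 2 ^ (k + 1)) ≤ b * X := by
        calc ((k + 1 : ℕ) : ℝ) * (ww B g (k + 1) * 2 ^ (k + 1))
            = ((k + 1 : ℕ) : ℝ) * ww B g (k + 1) * 2 ^ (k + 1) := by ring
          _ ≤ c * (∑ j ∈ Finset.Ico (k + 1 - c) (k + 1), ww B g j) * 2 ^ (k + 1) :=
            mul_le_mul_of_nonneg_right h1 (by positivity)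
          _ = c * ((∑ j ∈ Finset.Ico (k + 1 - c) (k + 1), ww B g j) * 2 ^ (k + 1)) := by ring
          _ ≤ c * (c * (2 ^ c * X)) := mul_le_mul_of_nonneg_left h2 (by positivity)
          _ = b * X := by rw [hb]; ring
      have hk1 : (1 : ℝ) ≤ ((k + 1 : ℕ) : ℝ) := by exact_mod_cast Nat.succ_le_succ (Nat.zero_le k)
      have hY0 : 0 ≤ ww B g (k + 1) * 2 ^ (k + 1) := mul_nonneg (hw0 _) (by positivity)
      rcases Nat.lt_or_ge k (c * c * 2 ^ c) with hk | hk
      · rw [min_eq_left (by omega : k + 1 ≤ c * c * 2 ^ c)]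
        rw [min_eq_left (by omega : k ≤ c * c * 2 ^ c)] at hX
        have : (1 + b) ^ (k + 1) * ww B g 0 = (1 + b) * X := by rw [hX]; ring
        rw [this]
        nlinarith
      · rw [min_eq_right (by omega : c * c * 2 ^ c ≤ k + 1)]
        rw [min_eq_right (by omega : c * c * 2 ^ c ≤ k)] at hX
        rw [← hX]
        have hkb : b ≤ ((k + 1 : ℕ) : ℝ) := by
          have : (c * c * 2 ^ c : ℕ) ≤ k + 1 := by omega
          rw [hb]; exact_mod_cast this
        have h7 : b * X ≤ ((k + 1 : ℕ) : ℝ) * X := mul_le_mul_of_nonneg_right hkb hX0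
        exact le_of_mul_le_mul_left (h6.trans h7) (by linarith)
  refine (key k k le_rfl).trans (mul_le_mul_of_nonneg_right ?_ (hw0 0))
  unfold growth
  rw [← hb]
  exact pow_le_pow_right₀ h1b (min_le_right _ _)

lemma WW_eq (g : Equiv.Perm α → ℝ) (k : ℕ) : WW B g k = ∑ j ∈ Finset.range (k + 1), ww B g j := by
  unfold WW
  rw [← Finset.sum_fiberwise_of_maps_to (t := Finset.range (k + 1)) (g := fun y => (B y).card)
      (fun y hy => by rw [Finset.mem_range]; have := mem_levLe.1 hy; omega)]
  refine Finset.sum_congr rfl fun j hj => ?_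
  unfold ww
  refine Finset.sum_congr ?_ fun _ _ => rfl
  ext y
  rw [Finset.mem_range] at hj
  simp only [Finset.mem_filter, mem_levLe, mem_lev]
  omega

lemma WW_le (hB : Defects B c) {f g : Equiv.Perm α → ℝ} (hg : IsExt B f g)
    (hpos : ∀ σ, 0 < g σ) (hN : 0 < Fintype.card α) (k : ℕ) :
    WW B g k ≤ 2 * growth c * ww B g 0 := by
  have hw0 : ∀ j, 0 ≤ ww B g j := fun j => Finset.sum_nonneg fun σ _ => psi_nonneg (hpos σ)
  have hL : 0 ≤ growth c * ww B g 0 := mul_nonneg (by unfold growth; positivity) (hw0 0)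
  rw [WW_eq]
  have h1 : ∀ n : ℕ, ∑ j ∈ Finset.range n, ww B g j
      ≤ growth c * ww B g 0 * (2 - 2 * (1 / 2 : ℝ) ^ n) := by
    intro n
    induction n with
    | zero => simp
    | succ n ih =>
      rw [Finset.sum_range_succ]
      have h2 := ww_le hB hg hpos hN n
      have h3 : ww B g n ≤ growth c * ww B g 0 * (1 / 2 : ℝ) ^ n := by
        rw [one_div, inv_pow, ← div_eq_mul_inv, le_div_iff₀ (by positivity)]; exact h2
      have h4 : (1 / 2 : ℝ) ^ (n + 1) = (1 / 2) ^ n / 2 := by ring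
      rw [h4]; nlinarith
  have h5 := h1 (k + 1)
  have h6 : (0 : ℝ) ≤ (1 / 2) ^ (k + 1) := by positivity
  nlinarith

end Ext

/-! ### Comparing the Dirichlet forms of consecutive levels -/

/-- `x` if `P` holds and `0` otherwise. -/
def ind (P : Prop) (x : ℝ) : ℝ := if P then x else 0

lemma ind_pos {P : Prop} (h : P) (x : ℝ) : ind P x = x := if_pos h

lemma ind_neg {P : Prop} (h : ¬ P) (x : ℝ) : ind P x = 0 := if_neg h

lemma ind_nonneg (P : Prop) {x : ℝ} (hx : 0 ≤ x) : 0 ≤ ind P x := by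
  unfold ind; split_ifs <;> simp [hx]

lemma sum_fil {X : Type*} [Fintype X] (P : X → Prop) (h : X → ℝ) :
    ∑ t ∈ fil P, h t = ∑ t, ind (P t) (h t) := by
  unfold fil ind; rw [Finset.sum_filter]

/-- Two transpositions commute up to conjugating one of them. -/
lemma sw_conj {α : Type*} (σ : Equiv.Perm α) (a b p q : α) :
    σ * sw a b * sw p q = σ * sw p q * sw (sw p q a) (sw p q b) := by
  rw [mul_assoc σ (sw p q), ← sw_sw p q a, ← sw_sw p q b]
  rw [sw_sw p q a, sw_sw p q b, mul_assoc]
  congr 1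
  rw [mul_sw (sw p q) (sw p q a), sw_sw, sw_sw]

section Step

variable {α : Type*} [Fintype α] {B : Equiv.Perm α → Finset α} {c : ℕ}
  {g : Equiv.Perm α → ℝ}

lemma DD_eq_pos (hpos : ∀ σ, 0 < g σ) (k : ℕ) :
    ∀ t ∈ lowTr B k, 0 ≤ phi (g t.1) (g (t.1 * sw t.2.1 t.2.2)) :=
  fun _ _ => phi_nonneg (hpos _) (hpos _)

/-- Tuples `(σ, a, b, p, q)`, standing for the four permutations `σ`, `σ * sw a b`, `σ * sw p q`
and `σ * sw a b * sw p q`. -/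
abbrev Quad (α : Type*) := Equiv.Perm α × α × α × α × α

/-- The permutations `y = σ * sw p q` and `z = σ * sw a b * sw p q` differ by a transposition, so
summing `phi (g y) (g z)` over quadruples gives at most the restricted Dirichlet form times the
number of `(p, q)` which are allowed for a given pair `(y, z)`. -/
lemma quad_yz (hpos : ∀ σ, 0 < g σ) (j : ℕ) (P : Quad α → Prop)
    (hP : ∀ σ a b p q, P (σ, a, b, p, q) → p ∈ B σ ∧ (B (σ * sw p q)).card ≤ j ∧
      (B (σ * sw a b * sw p q)).card ≤ j) (C : ℝ) (R : Equiv.Perm α × α × α → α × α → Prop)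
    (hR : ∀ t, ((fil (R t)).card : ℝ) ≤ C)
    (hPR : ∀ σ a b p q, P (σ, a, b, p, q) →
      R (σ * sw p q, sw p q a, sw p q b) (p, q)) :
    ∑ t : Quad α, ind (P t) (phi (g (t.1 * sw t.2.2.2.1 t.2.2.2.2))
      (g (t.1 * sw t.2.1 t.2.2.1 * sw t.2.2.2.1 t.2.2.2.2))) ≤ C * DD B g j := by
  rw [← sum_fil]
  have e : ∀ t : Quad α, phi (g (t.1 * sw t.2.2.2.1 t.2.2.2.2))
      (g (t.1 * sw t.2.1 t.2.2.1 * sw t.2.2.2.1 t.2.2.2.2))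
      = phi (g (t.1 * sw t.2.2.2.1 t.2.2.2.2)) (g (t.1 * sw t.2.2.2.1 t.2.2.2.2 *
        sw (sw t.2.2.2.1 t.2.2.2.2 t.2.1) (sw t.2.2.2.1 t.2.2.2.2 t.2.2.1))) := by
    intro t; rw [sw_conj]
  rw [Finset.sum_congr rfl fun t _ => e t]
  refine sum_le_of_inj (fil P) (lowTr B j) (fun t => fil (R t))
    (fun t => (t.1 * sw t.2.2.2.1 t.2.2.2.2, sw t.2.2.2.1 t.2.2.2.2 t.2.1,
      sw t.2.2.2.1 t.2.2.2.2 t.2.2.1)) (fun t => t.2.2.2)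
    (fun t => phi (g t.1) (g (t.1 * sw t.2.1 t.2.2))) C ?_ ?_ ?_ (fun t _ => hR t)
    (DD_eq_pos hpos j)
  · rintro ⟨σ, a, b, p, q⟩ ⟨σ', a', b', p', q'⟩ h
    simp only [Prod.mk.injEq] at h
    obtain ⟨⟨h1, h2, h3⟩, rfl, rfl⟩ := h
    rw [mul_right_cancel h1, (sw p q).injective h2, (sw p q).injective h3]
  · rintro ⟨σ, a, b, p, q⟩ h
    have h2 := hP _ _ _ _ _ (mem_fil.1 h)
    rw [mem_lowTr]
    dsimp only
    rw [← sw_conj]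
    exact h2.2
  · rintro ⟨σ, a, b, p, q⟩ h
    exact mem_fil.2 (hPR _ _ _ _ _ (mem_fil.1 h))

/-- For given `(y, z)`, the point `p` must be created as a defect by `sw p q`, which leaves at
most `N * c` pairs `(p, q)`. -/
lemma quad_one (hB : Defects B c) (hpos : ∀ σ, 0 < g σ) (j : ℕ) :
    ∑ t : Quad α, ind (t.2.2.2.1 ∈ B t.1 ∧ (B (t.1 * sw t.2.2.2.1 t.2.2.2.2)).card ≤ j ∧
      (B (t.1 * sw t.2.1 t.2.2.1 * sw t.2.2.2.1 t.2.2.2.2)).card ≤ j)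
      (phi (g (t.1 * sw t.2.2.2.1 t.2.2.2.2))
      (g (t.1 * sw t.2.1 t.2.2.1 * sw t.2.2.2.1 t.2.2.2.2)))
      ≤ (Fintype.card α * c : ℝ) * DD B g j := by
  refine quad_yz hpos j _ (fun σ a b p q h => h) _
    (fun t pq => pq.1 ∈ B (t.1 * sw pq.1 pq.2)) ?_ ?_
  · intro t; exact_mod_cast hB.card_create_pairs t.1
  · intro σ a b p q h
    dsimp only
    rw [mul_sw_sw]; exact h.1

/-- If moreover `p` is not a defect of `σ * sw a b`, at most `c` pairs `(p, q)` remain. -/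
lemma quad_six (hB : Defects B c) (hpos : ∀ σ, 0 < g σ) (j : ℕ) :
    ∑ t : Quad α, ind (t.2.2.2.1 ∈ B t.1 ∧ t.2.2.2.1 ∉ B (t.1 * sw t.2.1 t.2.2.1) ∧
      (B (t.1 * sw t.2.2.2.1 t.2.2.2.2)).card ≤ j ∧
      (B (t.1 * sw t.2.1 t.2.2.1 * sw t.2.2.2.1 t.2.2.2.2)).card ≤ j)
      (phi (g (t.1 * sw t.2.2.2.1 t.2.2.2.2))
      (g (t.1 * sw t.2.1 t.2.2.1 * sw t.2.2.2.1 t.2.2.2.2)))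
      ≤ (c : ℝ) * DD B g j := by
  refine quad_yz hpos j _ (fun σ a b p q h => ⟨h.1, h.2.2⟩) _
    (fun t pq => pq.1 ∈ B (t.1 * sw pq.1 pq.2) ∧
      pq.1 ∉ B (t.1 * sw t.2.1 t.2.2 * sw pq.1 pq.2)) ?_ ?_
  · intro t; exact_mod_cast hB.few_diff t.1 t.2.1 t.2.2
  · intro σ a b p q h
    dsimp only
    rw [mul_sw_sw, ← sw_conj, mul_sw_sw]
    exact ⟨h.1, h.2.1⟩

/-- The pairs `(x, x * sw p q)` with `x = σ * sw a b`: given such a pair, `sw a b` must create a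
defect of `x` at `p`, which leaves at most `c` choices of `(a, b)`. -/
lemma quad_five (hB : Defects B c) (hpos : ∀ σ, 0 < g σ) (j : ℕ) :
    ∑ t : Quad α, ind (t.2.2.2.1 ∈ B t.1 ∧ t.2.2.2.1 ∉ B (t.1 * sw t.2.1 t.2.2.1) ∧
      (B (t.1 * sw t.2.1 t.2.2.1)).card ≤ j ∧
      (B (t.1 * sw t.2.1 t.2.2.1 * sw t.2.2.2.1 t.2.2.2.2)).card ≤ j)
      (phi (g (t.1 * sw t.2.1 t.2.2.1))
      (g (t.1 * sw t.2.1 t.2.2.1 * sw t.2.2.2.1 t.2.2.2.2)))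
      ≤ (c : ℝ) * DD B g j := by
  rw [← sum_fil]
  refine sum_le_of_inj _ (lowTr B j)
    (fun s => fil fun ab : α × α => s.2.1 ∉ B s.1 ∧ s.2.1 ∈ B (s.1 * sw ab.1 ab.2))
    (fun t : Quad α => (t.1 * sw t.2.1 t.2.2.1, t.2.2.2)) (fun t => (t.2.1, t.2.2.1))
    (fun t => phi (g t.1) (g (t.1 * sw t.2.1 t.2.2))) c ?_ ?_ ?_ ?_
    (DD_eq_pos hpos j)
  · rintro ⟨σ, a, b, p, q⟩ ⟨σ', a', b', p', q'⟩ h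
    simp only [Prod.mk.injEq] at h
    obtain ⟨⟨h1, rfl, rfl⟩, rfl, rfl⟩ := h
    rw [mul_right_cancel h1]
  · rintro ⟨σ, a, b, p, q⟩ h
    rw [mem_fil] at h
    rw [mem_lowTr]
    exact h.2.2
  · rintro ⟨σ, a, b, p, q⟩ h
    rw [mem_fil] at h ⊢
    dsimp only at h ⊢
    rw [mul_sw_sw]
    exact ⟨h.2.1, h.1⟩
  · rintro ⟨x, p, q⟩ _
    norm_cast
    by_cases hp : p ∈ B x
    · have : (fil fun ab : α × α => p ∉ B x ∧ p ∈ B (x * sw ab.1 ab.2)) = ∅ := by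
        ext; simp [hp]
      simp only [this, Finset.card_empty, Nat.zero_le]
    · refine le_trans (Finset.card_le_card ?_) (hB.few_pairs x p hp)
      intro ab h
      rw [mem_fil] at h ⊢
      exact h.2

/-- Quadruples where `sw p q` repairs `σ` but not `σ * sw a b`: for a given `y = σ * sw p q` there
are at most `N * c` choices of `(p, q)`, and then `2 * c` choices of the transposition from `y` to
`σ * sw a b * sw p q` which creates a defect at `p` or `q`. -/
lemma quad_two (hB : Defects B c) (hpos : ∀ σ, 0 < g σ) (j : ℕ) :
    ∑ t : Quad α, ind (t.2.2.2.1 ∈ B t.1 ∧ (B (t.1 * sw t.2.2.2.1 t.2.2.2.2)).card ≤ j ∧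
      t.2.2.2.1 ∉ B (t.1 * sw t.2.2.2.1 t.2.2.2.2) ∧
      t.2.2.2.2 ∉ B (t.1 * sw t.2.2.2.1 t.2.2.2.2) ∧
      (t.2.2.2.1 ∈ B (t.1 * sw t.2.1 t.2.2.1 * sw t.2.2.2.1 t.2.2.2.2) ∨
        t.2.2.2.2 ∈ B (t.1 * sw t.2.1 t.2.2.1 * sw t.2.2.2.1 t.2.2.2.2)))
      (psi (g (t.1 * sw t.2.2.2.1 t.2.2.2.2)))
      ≤ (Fintype.card α * c * (2 * c) : ℝ) * WW B g j := by
  rw [← sum_fil]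
  refine sum_le_of_inj _ (levLe B j)
    (fun y => fil fun z : (α × α) × (α × α) => z.1.1 ∈ B (y * sw z.1.1 z.1.2) ∧
      (z.1.1 ∉ B y ∧ z.1.2 ∉ B y ∧
        (z.1.1 ∈ B (y * sw z.2.1 z.2.2) ∨ z.1.2 ∈ B (y * sw z.2.1 z.2.2))))
    (fun t : Quad α => t.1 * sw t.2.2.2.1 t.2.2.2.2)
    (fun t => (t.2.2.2, (sw t.2.2.2.1 t.2.2.2.2 t.2.1, sw t.2.2.2.1 t.2.2.2.2 t.2.2.1)))
    (fun y => psi (g y)) _ ?_ ?_ ?_ ?_ (fun y _ => psi_nonneg (hpos y))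
  · rintro ⟨σ, a, b, p, q⟩ ⟨σ', a', b', p', q'⟩ h
    simp only [Prod.mk.injEq] at h
    obtain ⟨h1, ⟨rfl, rfl⟩, h2, h3⟩ := h
    rw [mul_right_cancel h1, (sw p q).injective h2, (sw p q).injective h3]
  · rintro ⟨σ, a, b, p, q⟩ h
    rw [mem_fil] at h
    rw [mem_levLe]
    exact h.2.1
  · rintro ⟨σ, a, b, p, q⟩ h
    rw [mem_fil] at h ⊢
    dsimp only at h ⊢
    rw [mul_sw_sw, ← sw_conj]
    exact ⟨h.1, h.2.2⟩
  · intro y _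
    have := card_prod_le (X := α × α) (Y := α × α) (fun z => z.1 ∈ B (y * sw z.1 z.2))
      (fun z w => z.1 ∉ B y ∧ z.2 ∉ B y ∧ (z.1 ∈ B (y * sw w.1 w.2) ∨ z.2 ∈ B (y * sw w.1 w.2)))
      (Fintype.card α * c) (2 * c) (hB.card_create_pairs y) ?_
    · exact_mod_cast this
    · rintro ⟨p, q⟩ _
      by_cases hpq : p ∉ B y ∧ q ∉ B y
      · refine le_trans (Finset.card_le_card (t := (fil fun w : α × α => p ∈ B (y * sw w.1 w.2)) ∪
          fil fun w : α × α => q ∈ B (y * sw w.1 w.2)) ?_) ?_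
        · intro w hw
          rw [Finset.mem_union, mem_fil, mem_fil]
          rw [mem_fil] at hw
          exact hw.2.2
        · refine (Finset.card_union_le _ _).trans ?_
          have h1 := hB.few_pairs y p hpq.1
          have h2 := hB.few_pairs y q hpq.2
          omega
      · have : (fil fun w : α × α => p ∉ B y ∧ q ∉ B y ∧
            (p ∈ B (y * sw w.1 w.2) ∨ q ∈ B (y * sw w.1 w.2))) = ∅ := by
          ext w
          rw [mem_fil]
          simp only [Finset.notMem_empty, iff_false]
          exact fun h => hpq ⟨h.1, h.2.1⟩
        dsimp only
        rw [this]; simp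

/-- `quad_two` with the roles of `σ` and `σ * sw a b` exchanged. -/
lemma quad_three (hB : Defects B c) (hpos : ∀ σ, 0 < g σ) (j : ℕ) :
    ∑ t : Quad α, ind (t.2.2.2.1 ∈ B (t.1 * sw t.2.1 t.2.2.1) ∧
      (B (t.1 * sw t.2.1 t.2.2.1 * sw t.2.2.2.1 t.2.2.2.2)).card ≤ j ∧
      t.2.2.2.1 ∉ B (t.1 * sw t.2.1 t.2.2.1 * sw t.2.2.2.1 t.2.2.2.2) ∧
      t.2.2.2.2 ∉ B (t.1 * sw t.2.1 t.2.2.1 * sw t.2.2.2.1 t.2.2.2.2) ∧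
      (t.2.2.2.1 ∈ B (t.1 * sw t.2.2.2.1 t.2.2.2.2) ∨
        t.2.2.2.2 ∈ B (t.1 * sw t.2.2.2.1 t.2.2.2.2)))
      (psi (g (t.1 * sw t.2.1 t.2.2.1 * sw t.2.2.2.1 t.2.2.2.2)))
      ≤ (Fintype.card α * c * (2 * c) : ℝ) * WW B g j := by
  refine le_trans (le_of_eq ?_) (quad_two hB hpos j)
  refine Finset.sum_nbij' (fun t => (t.1 * sw t.2.1 t.2.2.1, t.2))
    (fun t => (t.1 * sw t.2.1 t.2.2.1, t.2)) (fun _ _ => Finset.mem_univ _)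
    (fun _ _ => Finset.mem_univ _) ?_ ?_ ?_
  · rintro ⟨σ, a, b, p, q⟩ _; simp only [mul_sw_sw]
  · rintro ⟨σ, a, b, p, q⟩ _; simp only [mul_sw_sw]
  · rintro ⟨σ, a, b, p, q⟩ _; simp only [mul_sw_sw]

/-- Quadruples where `p` is a defect of `σ` but not of `x = σ * sw a b`, and where `q` is
restricted to at most `c` values, summed in terms of `x`. -/
lemma quad_x (hB : Defects B c) (hpos : ∀ σ, 0 < g σ) (j : ℕ)
    (R : Equiv.Perm α → α → α → α → α → Prop)
    (hR : ∀ σ a b p, (fil fun q => R σ a b p q).card ≤ c) :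
    ∑ t : Quad α, ind (t.2.2.2.1 ∈ B t.1 ∧ t.2.2.2.1 ∉ B (t.1 * sw t.2.1 t.2.2.1) ∧
      (B (t.1 * sw t.2.1 t.2.2.1)).card ≤ j ∧ R t.1 t.2.1 t.2.2.1 t.2.2.2.1 t.2.2.2.2)
      (psi (g (t.1 * sw t.2.1 t.2.2.1)))
      ≤ (Fintype.card α * c * c : ℝ) * WW B g j := by
  rw [← sum_fil]
  refine sum_le_of_inj _ (levLe B j)
    (fun x => fil fun z : (α × α × α) × α =>
      (z.1.1 ∉ B x ∧ z.1.1 ∈ B (x * sw z.1.2.1 z.1.2.2)) ∧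
      R (x * sw z.1.2.1 z.1.2.2) z.1.2.1 z.1.2.2 z.1.1 z.2)
    (fun t : Quad α => t.1 * sw t.2.1 t.2.2.1)
    (fun t => ((t.2.2.2.1, t.2.1, t.2.2.1), t.2.2.2.2))
    (fun y => psi (g y)) _ ?_ ?_ ?_ ?_ (fun y _ => psi_nonneg (hpos y))
  · rintro ⟨σ, a, b, p, q⟩ ⟨σ', a', b', p', q'⟩ h
    simp only [Prod.mk.injEq] at h
    obtain ⟨h1, ⟨rfl, rfl, rfl⟩, rfl⟩ := h
    rw [mul_right_cancel h1]
  · rintro ⟨σ, a, b, p, q⟩ h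
    rw [mem_fil] at h
    rw [mem_levLe]
    exact h.2.2.1
  · rintro ⟨σ, a, b, p, q⟩ h
    rw [mem_fil] at h ⊢
    dsimp only at h ⊢
    rw [mul_sw_sw]
    exact ⟨⟨h.2.1, h.1⟩, h.2.2.2⟩
  · intro x _
    have h1 := card_prod_le (X := α) (Y := α × α) (fun p => p ∉ B x)
      (fun p w => p ∈ B (x * sw w.1 w.2)) (Fintype.card α) c (Finset.card_le_univ _)
      (fun p hp => hB.few_pairs x p hp)
    have h2 := card_prod_le (X := α × α × α) (Y := α)
      (fun z => z.1 ∉ B x ∧ z.1 ∈ B (x * sw z.2.1 z.2.2))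
      (fun z q => R (x * sw z.2.1 z.2.2) z.2.1 z.2.2 z.1 q) _ c h1
      (fun z _ => hR _ _ _ _)
    exact_mod_cast h2

end Step

/-! ### Repairing one defect -/

section Good

variable {α : Type*} [Fintype α] {B : Equiv.Perm α → Finset α} {c : ℕ}
  {f g : Equiv.Perm α → ℝ}

/-- The summand attached to a defect point `p` of `σ` when comparing `g σ` with `g x`, on the side
of `x`: if `p` is a defect of `x` it is repaired in the same way, otherwise nothing is done. -/
def gx (B : Equiv.Perm α → Finset α) (g : Equiv.Perm α → ℝ) (x : Equiv.Perm α) (p q : α) : ℝ :=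
  if p ∈ B x then gh B g x p q else g x

lemma gh_pos (hpos : ∀ σ, 0 < g σ) (σ : Equiv.Perm α) (p q : α) : 0 < gh B g σ p q := by
  unfold gh; split_ifs
  · exact hpos _
  · exact one_pos

lemma gx_pos (hpos : ∀ σ, 0 < g σ) (σ : Equiv.Perm α) (p q : α) : 0 < gx B g σ p q := by
  unfold gx; split_ifs
  · exact gh_pos hpos _ _ _
  · exact hpos _

/-- Both values are averages over repairs, and the same defect is repaired in `σ` and in `x`; the
claim is then the joint convexity of `phi`. -/
lemma phi_le_sum_repair (hg : IsExt B f g) (hpos : ∀ σ, 0 < g σ) (hN : 0 < Fintype.card α)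
    {σ x : Equiv.Perm α} (hsub : B x ⊆ B σ) :
    ((B σ).card : ℝ) * Fintype.card α * phi (g σ) (g x)
      ≤ ∑ p ∈ B σ, ∑ q, phi (gh B g σ p q) (gx B g x p q) := by
  rcases Nat.eq_zero_or_pos (B σ).card with h0 | h0
  · rw [h0, Finset.card_eq_zero.1 h0]; simp
  have hk : (0 : ℝ) < (B σ).card * Fintype.card α := by exact_mod_cast Nat.mul_pos h0 hN
  have h1 := phi_sum_le (B σ ×ˢ (Finset.univ : Finset α)) (fun t => gh B g σ t.1 t.2)
    (fun t => gx B g x t.1 t.2) (fun _ _ => gh_pos hpos _ _ _) (fun _ _ => gx_pos hpos _ _ _)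
  rw [Finset.sum_product, Finset.sum_product, Finset.sum_product] at h1
  rw [← phi_mul hk (hpos σ) (hpos x), hg.avg σ]
  have h2 : ∑ p ∈ B σ, ∑ q, gx B g x p q = (B σ).card * Fintype.card α * g x := by
    have h3 : ∀ p ∈ B σ, ∑ q, gx B g x p q = (if p ∈ B x then
        (∑ q, gh B g x p q - Fintype.card α * g x) else 0) + Fintype.card α * g x := by
      intro p _
      unfold gx
      split_ifs with h
      · ring
      · simp
    rw [Finset.sum_congr rfl h3, Finset.sum_add_distrib, Finset.sum_const, nsmul_eq_mul]
    have h4 : ∑ p ∈ B σ, (if p ∈ B x then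
        (∑ q, gh B g x p q - Fintype.card α * g x) else 0)
        = ∑ p ∈ B x, (∑ q, gh B g x p q - Fintype.card α * g x) := by
      rw [← Finset.sum_subset hsub]
      · exact Finset.sum_congr rfl fun p hp => if_pos hp
      · intro p _ hp; exact if_neg hp
    rw [h4, Finset.sum_sub_distrib, ← hg.avg x, Finset.sum_const, nsmul_eq_mul]
    ring
  rw [← h2]
  exact h1

/-- Pointwise estimate behind the comparison of consecutive levels, according to whether the
repaired point is a defect of `x` and whether the repairs succeed. -/
lemma phi_repair_le (hB : Defects B c) (hg4 : ∀ σ, 1 / 4 ≤ g σ) {N : ℝ} (hN : 4 ≤ N)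
    (hosc : ∀ σ τ, Real.log (g σ) - Real.log (g τ) ≤ 2 * N * Real.log N) (j : ℕ)
    {σ : Equiv.Perm α} {a b p q : α} (hσ : (B σ).card = j + 1)
    (hsub : B (σ * sw a b) ⊆ B σ) (hp : p ∈ B σ) :
    phi (gh B g σ p q) (gx B g (σ * sw a b) p q) ≤
      ind (p ∈ B σ ∧ (B (σ * sw p q)).card ≤ j ∧ (B (σ * sw a b * sw p q)).card ≤ j)
        (phi (g (σ * sw p q)) (g (σ * sw a b * sw p q)))
      + 42 * ind (p ∈ B σ ∧ (B (σ * sw p q)).card ≤ j ∧ p ∉ B (σ * sw p q) ∧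
          q ∉ B (σ * sw p q) ∧ (p ∈ B (σ * sw a b * sw p q) ∨ q ∈ B (σ * sw a b * sw p q)))
        (psi (g (σ * sw p q)))
      + 6 * ind (p ∈ B (σ * sw a b) ∧ (B (σ * sw a b * sw p q)).card ≤ j ∧
          p ∉ B (σ * sw a b * sw p q) ∧ q ∉ B (σ * sw a b * sw p q) ∧
          (p ∈ B (σ * sw p q) ∨ q ∈ B (σ * sw p q)))
        (psi (g (σ * sw a b * sw p q)))
      + 6 * ind (p ∈ B σ ∧ p ∉ B (σ * sw a b) ∧ (B (σ * sw a b)).card ≤ j ∧ ¬ Vd B σ p q)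
        (psi (g (σ * sw a b)))
      + 24 * N * ind (p ∈ B σ ∧ p ∉ B (σ * sw a b) ∧ (B (σ * sw a b)).card ≤ j ∧
          (B (σ * sw a b * sw p q)).card ≤ j)
        (phi (g (σ * sw a b)) (g (σ * sw a b * sw p q)))
      + 24 * N * ind (p ∈ B σ ∧ p ∉ B (σ * sw a b) ∧ (B (σ * sw p q)).card ≤ j ∧
          (B (σ * sw a b * sw p q)).card ≤ j)
        (phi (g (σ * sw p q)) (g (σ * sw a b * sw p q)))
      + 36 * ind (p ∈ B σ ∧ p ∉ B (σ * sw a b) ∧ (B (σ * sw a b)).card ≤ j ∧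
          ¬ Vd B (σ * sw a b) p q)
        (psi (g (σ * sw a b))) := by
  set x := σ * sw a b with hx
  set y := σ * sw p q with hy
  set z := x * sw p q with hz
  have hpos : ∀ σ, 0 < g σ := fun σ => by linarith [hg4 σ]
  have n1 := fun P => ind_nonneg P (phi_nonneg (hpos y) (hpos z))
  have n2 := fun P => ind_nonneg P (psi_nonneg (hpos y))
  have n3 := fun P => ind_nonneg P (psi_nonneg (hpos z))
  have n4 := fun P => ind_nonneg P (psi_nonneg (hpos x))
  have n5 := fun P => mul_nonneg (show 0 ≤ 24 * N by linarith)
    (ind_nonneg P (phi_nonneg (hpos x) (hpos z)))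
  have n6 := fun P => mul_nonneg (show 0 ≤ 24 * N by linarith) (n1 P)
  have hVy : Vd B σ p q → (B y).card ≤ j := fun hV => by
    have := hB.card_lt hp hV; rw [← hy] at this; omega
  by_cases hpx : p ∈ B x
  · have hxs : (B x).card ≤ j + 1 := hσ ▸ Finset.card_le_card hsub
    have hVz : Vd B x p q → (B z).card ≤ j := fun hV => by
      have := hB.card_lt hpx hV; rw [← hz] at this; omega
    unfold gx
    rw [if_pos hpx]
    unfold gh
    by_cases h1 : Vd B σ p q
    · by_cases h2 : Vd B x p q
      · rw [if_pos h1, if_pos h2, ← hy, ← hz, ind_pos ⟨hp, hVy h1, hVz h2⟩]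
        linarith [n2 (p ∈ B σ ∧ (B y).card ≤ j ∧ p ∉ B y ∧ q ∉ B y ∧ (p ∈ B z ∨ q ∈ B z)),
          n3 (p ∈ B x ∧ (B z).card ≤ j ∧ p ∉ B z ∧ q ∉ B z ∧ (p ∈ B y ∨ q ∈ B y)),
          n4 (p ∈ B σ ∧ p ∉ B x ∧ (B x).card ≤ j ∧ ¬ Vd B σ p q),
          n5 (p ∈ B σ ∧ p ∉ B x ∧ (B x).card ≤ j ∧ (B z).card ≤ j),
          n6 (p ∈ B σ ∧ p ∉ B x ∧ (B y).card ≤ j ∧ (B z).card ≤ j),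
          n4 (p ∈ B σ ∧ p ∉ B x ∧ (B x).card ≤ j ∧ ¬ Vd B x p q)]
      · rw [if_pos h1, if_neg h2, ← hy]
        have h3 : p ∈ B z ∨ q ∈ B z := by unfold Vd at h2; tauto
        rw [ind_pos (P := p ∈ B σ ∧ (B y).card ≤ j ∧ p ∉ B y ∧ q ∉ B y ∧ (p ∈ B z ∨ q ∈ B z))
          ⟨hp, hVy h1, h1.1, h1.2, h3⟩]
        linarith [phi_one_le (hg4 y), psi_nonneg (hpos y),
          n1 (p ∈ B σ ∧ (B y).card ≤ j ∧ (B z).card ≤ j),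
          n3 (p ∈ B x ∧ (B z).card ≤ j ∧ p ∉ B z ∧ q ∉ B z ∧ (p ∈ B y ∨ q ∈ B y)),
          n4 (p ∈ B σ ∧ p ∉ B x ∧ (B x).card ≤ j ∧ ¬ Vd B σ p q),
          n5 (p ∈ B σ ∧ p ∉ B x ∧ (B x).card ≤ j ∧ (B z).card ≤ j),
          n6 (p ∈ B σ ∧ p ∉ B x ∧ (B y).card ≤ j ∧ (B z).card ≤ j),
          n4 (p ∈ B σ ∧ p ∉ B x ∧ (B x).card ≤ j ∧ ¬ Vd B x p q)]
    · by_cases h2 : Vd B x p q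
      · rw [if_neg h1, if_pos h2, ← hz, phi_symm]
        have h3 : p ∈ B y ∨ q ∈ B y := by unfold Vd at h1; tauto
        rw [ind_pos (P := p ∈ B x ∧ (B z).card ≤ j ∧ p ∉ B z ∧ q ∉ B z ∧ (p ∈ B y ∨ q ∈ B y))
          ⟨hpx, hVz h2, h2.1, h2.2, h3⟩]
        linarith [phi_one_le (hg4 z),
          n1 (p ∈ B σ ∧ (B y).card ≤ j ∧ (B z).card ≤ j),
          n2 (p ∈ B σ ∧ (B y).card ≤ j ∧ p ∉ B y ∧ q ∉ B y ∧ (p ∈ B z ∨ q ∈ B z)),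
          n4 (p ∈ B σ ∧ p ∉ B x ∧ (B x).card ≤ j ∧ ¬ Vd B σ p q),
          n5 (p ∈ B σ ∧ p ∉ B x ∧ (B x).card ≤ j ∧ (B z).card ≤ j),
          n6 (p ∈ B σ ∧ p ∉ B x ∧ (B y).card ≤ j ∧ (B z).card ≤ j),
          n4 (p ∈ B σ ∧ p ∉ B x ∧ (B x).card ≤ j ∧ ¬ Vd B x p q)]
      · rw [if_neg h1, if_neg h2, phi_self]
        linarith [n1 (p ∈ B σ ∧ (B y).card ≤ j ∧ (B z).card ≤ j),
          n2 (p ∈ B σ ∧ (B y).card ≤ j ∧ p ∉ B y ∧ q ∉ B y ∧ (p ∈ B z ∨ q ∈ B z)),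
          n3 (p ∈ B x ∧ (B z).card ≤ j ∧ p ∉ B z ∧ q ∉ B z ∧ (p ∈ B y ∨ q ∈ B y)),
          n4 (p ∈ B σ ∧ p ∉ B x ∧ (B x).card ≤ j ∧ ¬ Vd B σ p q),
          n5 (p ∈ B σ ∧ p ∉ B x ∧ (B x).card ≤ j ∧ (B z).card ≤ j),
          n6 (p ∈ B σ ∧ p ∉ B x ∧ (B y).card ≤ j ∧ (B z).card ≤ j),
          n4 (p ∈ B σ ∧ p ∉ B x ∧ (B x).card ≤ j ∧ ¬ Vd B x p q)]
  · have hxs : (B x).card ≤ j := by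
      have : (B x).card < (B σ).card := Finset.card_lt_card ⟨hsub, fun h => hpx (h hp)⟩
      omega
    unfold gx
    rw [if_neg hpx]
    unfold gh
    by_cases h1 : Vd B σ p q
    · rw [if_pos h1, ← hy]
      by_cases hzj : (B z).card ≤ j
      · have h3 := phi_path hN (hpos x) (hpos z) (hpos y) (hosc x y) (hosc y x)
        rw [phi_symm (g x) (g y), phi_symm (g z) (g y)] at h3
        rw [ind_pos (P := p ∈ B σ ∧ p ∉ B x ∧ (B x).card ≤ j ∧ (B z).card ≤ j)
          ⟨hp, hpx, hxs, hzj⟩, ind_pos (P := p ∈ B σ ∧ p ∉ B x ∧ (B y).card ≤ j ∧ (B z).card ≤ j)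
          ⟨hp, hpx, hVy h1, hzj⟩]
        linarith [n1 (p ∈ B σ ∧ (B y).card ≤ j ∧ (B z).card ≤ j),
          n2 (p ∈ B σ ∧ (B y).card ≤ j ∧ p ∉ B y ∧ q ∉ B y ∧ (p ∈ B z ∨ q ∈ B z)),
          n3 (p ∈ B x ∧ (B z).card ≤ j ∧ p ∉ B z ∧ q ∉ B z ∧ (p ∈ B y ∨ q ∈ B y)),
          n4 (p ∈ B σ ∧ p ∉ B x ∧ (B x).card ≤ j ∧ ¬ Vd B σ p q),
          n4 (p ∈ B σ ∧ p ∉ B x ∧ (B x).card ≤ j ∧ ¬ Vd B x p q)]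
      · have h2 : ¬ Vd B x p q := fun h2 => hzj ((Finset.card_le_card
          (hB.sub x p q h2.1 h2.2)).trans hxs)
        have h3 : p ∈ B z ∨ q ∈ B z := by unfold Vd at h2; tauto
        rw [ind_pos (P := p ∈ B σ ∧ (B y).card ≤ j ∧ p ∉ B y ∧ q ∉ B y ∧ (p ∈ B z ∨ q ∈ B z))
          ⟨hp, hVy h1, h1.1, h1.2, h3⟩,
          ind_pos (P := p ∈ B σ ∧ p ∉ B x ∧ (B x).card ≤ j ∧ ¬ Vd B x p q) ⟨hp, hpx, hxs, h2⟩]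
        linarith [phi_le_psi (hg4 y) (hg4 x), psi_nonneg (hpos y),
          n1 (p ∈ B σ ∧ (B y).card ≤ j ∧ (B z).card ≤ j),
          n3 (p ∈ B x ∧ (B z).card ≤ j ∧ p ∉ B z ∧ q ∉ B z ∧ (p ∈ B y ∨ q ∈ B y)),
          n4 (p ∈ B σ ∧ p ∉ B x ∧ (B x).card ≤ j ∧ ¬ Vd B σ p q),
          n5 (p ∈ B σ ∧ p ∉ B x ∧ (B x).card ≤ j ∧ (B z).card ≤ j),
          n6 (p ∈ B σ ∧ p ∉ B x ∧ (B y).card ≤ j ∧ (B z).card ≤ j)]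
    · rw [if_neg h1, phi_symm]
      rw [ind_pos (P := p ∈ B σ ∧ p ∉ B x ∧ (B x).card ≤ j ∧ ¬ Vd B σ p q) ⟨hp, hpx, hxs, h1⟩]
      linarith [phi_one_le (hg4 x),
        n1 (p ∈ B σ ∧ (B y).card ≤ j ∧ (B z).card ≤ j),
        n2 (p ∈ B σ ∧ (B y).card ≤ j ∧ p ∉ B y ∧ q ∉ B y ∧ (p ∈ B z ∨ q ∈ B z)),
        n3 (p ∈ B x ∧ (B z).card ≤ j ∧ p ∉ B z ∧ q ∉ B z ∧ (p ∈ B y ∨ q ∈ B y)),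
        n5 (p ∈ B σ ∧ p ∉ B x ∧ (B x).card ≤ j ∧ (B z).card ≤ j),
        n6 (p ∈ B σ ∧ p ∉ B x ∧ (B y).card ≤ j ∧ (B z).card ≤ j),
        n4 (p ∈ B σ ∧ p ∉ B x ∧ (B x).card ≤ j ∧ ¬ Vd B x p q)]

end Good

/-! ### From one level to the next -/

section Rec

variable {α : Type*} [Fintype α] {B : Equiv.Perm α → Finset α} {c : ℕ}
  {f g : Equiv.Perm α → ℝ}

/-- Transpositions starting with `j + 1` defects and creating no new ones. In the terms where `p`
is a defect on one side only, `phi_path` loses a factor `24 * N`, but `quad_five` and `quad_six`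
save the same factor `N` compared with `quad_one`. -/
lemma good_step (hB : Defects B c) (hg : IsExt B f g) (hg4 : ∀ σ, 1 / 4 ≤ g σ)
    (hN : 4 ≤ Fintype.card α)
    (hosc : ∀ σ τ, Real.log (g σ) - Real.log (g τ)
      ≤ 2 * Fintype.card α * Real.log (Fintype.card α)) (j : ℕ) :
    ((j : ℝ) + 1) * ∑ t : Equiv.Perm α × α × α, ind ((B t.1).card = j + 1 ∧
      B (t.1 * sw t.2.1 t.2.2) ⊆ B t.1) (phi (g t.1) (g (t.1 * sw t.2.1 t.2.2)))
      ≤ 49 * c * DD B g j + 138 * c ^ 2 * WW B g j := by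
  have hpos : ∀ σ, 0 < g σ := fun σ => by linarith [hg4 σ]
  have hNR : (4 : ℝ) ≤ Fintype.card α := by exact_mod_cast hN
  have hN0 : 0 < Fintype.card α := by omega
  set N : ℝ := (Fintype.card α : ℝ) with hNdef
  have h1 : N * (((j : ℝ) + 1) * ∑ t : Equiv.Perm α × α × α, ind ((B t.1).card = j + 1 ∧
      B (t.1 * sw t.2.1 t.2.2) ⊆ B t.1) (phi (g t.1) (g (t.1 * sw t.2.1 t.2.2))))
      ≤ ∑ t : Quad α, ind (((B t.1).card = j + 1 ∧
        B (t.1 * sw t.2.1 t.2.2.1) ⊆ B t.1) ∧ t.2.2.2.1 ∈ B t.1)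
        (phi (gh B g t.1 t.2.2.2.1 t.2.2.2.2)
          (gx B g (t.1 * sw t.2.1 t.2.2.1) t.2.2.2.1 t.2.2.2.2)) := by
    simp only [Fintype.sum_prod_type, Finset.mul_sum]
    refine Finset.sum_le_sum fun σ _ => Finset.sum_le_sum fun a _ =>
      Finset.sum_le_sum fun b _ => ?_
    by_cases h : (B σ).card = j + 1 ∧ B (σ * sw a b) ⊆ B σ
    · have h2 := phi_le_sum_repair hg hpos hN0 h.2
      rw [h.1] at h2
      rw [ind_pos h]
      push_cast at h2
      calc N * (((j : ℝ) + 1) * phi (g σ) (g (σ * sw a b)))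
          = ((j : ℝ) + 1) * N * phi (g σ) (g (σ * sw a b)) := by ring
        _ ≤ _ := h2
        _ = _ := by
          rw [← Finset.sum_subset (Finset.subset_univ (B σ))]
          · refine Finset.sum_congr rfl fun p hp => Finset.sum_congr rfl fun q _ => ?_
            rw [ind_pos ⟨h, hp⟩]
          · intro p _ hp
            refine Finset.sum_eq_zero fun q _ => ind_neg (fun h => hp h.2) _
    · rw [ind_neg h, mul_zero, mul_zero]
      exact Finset.sum_nonneg fun p _ => Finset.sum_nonneg fun q _ =>
        ind_nonneg _ (phi_nonneg (gh_pos hpos _ _ _) (gx_pos hpos _ _ _))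
  have h2 := fun t : Quad α => show ind (((B t.1).card = j + 1 ∧
        B (t.1 * sw t.2.1 t.2.2.1) ⊆ B t.1) ∧ t.2.2.2.1 ∈ B t.1)
        (phi (gh B g t.1 t.2.2.2.1 t.2.2.2.2)
          (gx B g (t.1 * sw t.2.1 t.2.2.1) t.2.2.2.1 t.2.2.2.2)) ≤
      ind (t.2.2.2.1 ∈ B t.1 ∧ (B (t.1 * sw t.2.2.2.1 t.2.2.2.2)).card ≤ j ∧
        (B (t.1 * sw t.2.1 t.2.2.1 * sw t.2.2.2.1 t.2.2.2.2)).card ≤ j)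
        (phi (g (t.1 * sw t.2.2.2.1 t.2.2.2.2))
          (g (t.1 * sw t.2.1 t.2.2.1 * sw t.2.2.2.1 t.2.2.2.2)))
      + 42 * ind (t.2.2.2.1 ∈ B t.1 ∧ (B (t.1 * sw t.2.2.2.1 t.2.2.2.2)).card ≤ j ∧
          t.2.2.2.1 ∉ B (t.1 * sw t.2.2.2.1 t.2.2.2.2) ∧
          t.2.2.2.2 ∉ B (t.1 * sw t.2.2.2.1 t.2.2.2.2) ∧
          (t.2.2.2.1 ∈ B (t.1 * sw t.2.1 t.2.2.1 * sw t.2.2.2.1 t.2.2.2.2) ∨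
            t.2.2.2.2 ∈ B (t.1 * sw t.2.1 t.2.2.1 * sw t.2.2.2.1 t.2.2.2.2)))
        (psi (g (t.1 * sw t.2.2.2.1 t.2.2.2.2)))
      + 6 * ind (t.2.2.2.1 ∈ B (t.1 * sw t.2.1 t.2.2.1) ∧
          (B (t.1 * sw t.2.1 t.2.2.1 * sw t.2.2.2.1 t.2.2.2.2)).card ≤ j ∧
          t.2.2.2.1 ∉ B (t.1 * sw t.2.1 t.2.2.1 * sw t.2.2.2.1 t.2.2.2.2) ∧
          t.2.2.2.2 ∉ B (t.1 * sw t.2.1 t.2.2.1 * sw t.2.2.2.1 t.2.2.2.2) ∧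
          (t.2.2.2.1 ∈ B (t.1 * sw t.2.2.2.1 t.2.2.2.2) ∨
            t.2.2.2.2 ∈ B (t.1 * sw t.2.2.2.1 t.2.2.2.2)))
        (psi (g (t.1 * sw t.2.1 t.2.2.1 * sw t.2.2.2.1 t.2.2.2.2)))
      + 6 * ind (t.2.2.2.1 ∈ B t.1 ∧ t.2.2.2.1 ∉ B (t.1 * sw t.2.1 t.2.2.1) ∧
          (B (t.1 * sw t.2.1 t.2.2.1)).card ≤ j ∧ ¬ Vd B t.1 t.2.2.2.1 t.2.2.2.2)
        (psi (g (t.1 * sw t.2.1 t.2.2.1)))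
      + 24 * N * ind (t.2.2.2.1 ∈ B t.1 ∧ t.2.2.2.1 ∉ B (t.1 * sw t.2.1 t.2.2.1) ∧
          (B (t.1 * sw t.2.1 t.2.2.1)).card ≤ j ∧
          (B (t.1 * sw t.2.1 t.2.2.1 * sw t.2.2.2.1 t.2.2.2.2)).card ≤ j)
        (phi (g (t.1 * sw t.2.1 t.2.2.1))
          (g (t.1 * sw t.2.1 t.2.2.1 * sw t.2.2.2.1 t.2.2.2.2)))
      + 24 * N * ind (t.2.2.2.1 ∈ B t.1 ∧ t.2.2.2.1 ∉ B (t.1 * sw t.2.1 t.2.2.1) ∧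
          (B (t.1 * sw t.2.2.2.1 t.2.2.2.2)).card ≤ j ∧
          (B (t.1 * sw t.2.1 t.2.2.1 * sw t.2.2.2.1 t.2.2.2.2)).card ≤ j)
        (phi (g (t.1 * sw t.2.2.2.1 t.2.2.2.2))
          (g (t.1 * sw t.2.1 t.2.2.1 * sw t.2.2.2.1 t.2.2.2.2)))
      + 36 * ind (t.2.2.2.1 ∈ B t.1 ∧ t.2.2.2.1 ∉ B (t.1 * sw t.2.1 t.2.2.1) ∧
          (B (t.1 * sw t.2.1 t.2.2.1)).card ≤ j ∧
          ¬ Vd B (t.1 * sw t.2.1 t.2.2.1) t.2.2.2.1 t.2.2.2.2)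
        (psi (g (t.1 * sw t.2.1 t.2.2.1))) from by
    by_cases h : ((B t.1).card = j + 1 ∧
        B (t.1 * sw t.2.1 t.2.2.1) ⊆ B t.1) ∧ t.2.2.2.1 ∈ B t.1
    · rw [ind_pos h]
      exact phi_repair_le hB hg4 hNR hosc j h.1.1 h.1.2 h.2
    · rw [ind_neg h]
      have m1 := fun σ τ P => ind_nonneg P (phi_nonneg (hpos σ) (hpos τ))
      have m2 := fun σ P => ind_nonneg P (psi_nonneg (hpos σ))
      have hNn : 0 ≤ N := by linarith
      repeat' refine add_nonneg ?_ ?_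
      · exact m1 _ _ _
      · exact mul_nonneg (by norm_num) (m2 _ _)
      · exact mul_nonneg (by norm_num) (m2 _ _)
      · exact mul_nonneg (by norm_num) (m2 _ _)
      · exact mul_nonneg (by positivity) (m1 _ _ _)
      · exact mul_nonneg (by positivity) (m1 _ _ _)
      · exact mul_nonneg (by norm_num) (m2 _ _)
  have h3 := h1.trans (Finset.sum_le_sum fun t _ => h2 t)
  simp only [Finset.sum_add_distrib, ← Finset.mul_sum] at h3
  have q1 := quad_one hB hpos j
  have q2 := quad_two hB hpos j
  have q3 := quad_three hB hpos j
  have q4 := quad_x hB hpos j (fun σ _ _ p q => ¬ Vd B σ p q) (fun σ _ _ p => hB.card_not_Vd σ p)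
  have q5 := mul_le_mul_of_nonneg_left (quad_five hB hpos j) (show 0 ≤ 24 * N by linarith)
  have q6 := mul_le_mul_of_nonneg_left (quad_six hB hpos j) (show 0 ≤ 24 * N by linarith)
  have q7 := quad_x hB hpos j (fun σ a b p q => ¬ Vd B (σ * sw a b) p q)
    (fun σ a b p => hB.card_not_Vd (σ * sw a b) p)
  rw [← hNdef] at q1 q2 q3 q4 q7
  refine le_of_mul_le_mul_left (h3.trans ?_) (show 0 < N by linarith)
  have e : N * (49 * c * DD B g j + 138 * c ^ 2 * WW B g j)
      = N * c * DD B g j + 42 * (N * c * (2 * c) * WW B g j) + 6 * (N * c * (2 * c) * WW B g j)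
        + 6 * (N * c * c * WW B g j) + 24 * N * (c * DD B g j) + 24 * N * (c * DD B g j)
        + 36 * (N * c * c * WW B g j) := by ring
  rw [e]
  linarith

lemma card_bad_pairs (hB : Defects B c) (σ : Equiv.Perm α) (k : ℕ) (hk : (B σ).card ≤ k) :
    (fil fun ab : α × α => (ab.1 ∈ B σ ∨ ab.2 ∈ B σ) ∧
      (ab.1 ∈ B (σ * sw ab.1 ab.2) ∨ ab.2 ∈ B (σ * sw ab.1 ab.2))).card ≤ 2 * (k * c) := by
  have hP : (fil fun a => a ∈ B σ).card ≤ k := by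
    refine le_trans (Finset.card_le_card ?_) hk
    intro a ha; exact mem_fil.1 ha
  have h1 := card_prod_le (X := α) (Y := α) (fun a => a ∈ B σ)
    (fun a b => a ∈ B (σ * sw a b) ∨ b ∈ B (σ * sw a b)) k c hP (fun a _ => hB.few σ a)
  have h2 : (fil fun ab : α × α => ab.2 ∈ B σ ∧
      (ab.1 ∈ B (σ * sw ab.1 ab.2) ∨ ab.2 ∈ B (σ * sw ab.1 ab.2))).card ≤ k * c := by
    refine le_trans (Finset.card_le_card_of_injOn Prod.swap ?_ Prod.swap_injective.injOn) h1
    rintro ⟨a, b⟩ h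
    rw [Finset.mem_coe, mem_fil] at h ⊢
    refine ⟨h.1, ?_⟩
    dsimp only [Prod.swap]
    rw [sw_comm b a]
    exact h.2.symm
  refine le_trans (Finset.card_le_card (t := (fil fun z : α × α => z.1 ∈ B σ ∧
    (z.1 ∈ B (σ * sw z.1 z.2) ∨ z.2 ∈ B (σ * sw z.1 z.2))) ∪ fil fun ab : α × α => ab.2 ∈ B σ ∧
      (ab.1 ∈ B (σ * sw ab.1 ab.2) ∨ ab.2 ∈ B (σ * sw ab.1 ab.2))) ?_)
    ((Finset.card_union_le _ _).trans (by omega))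
  intro z hz
  rw [Finset.mem_union, mem_fil, mem_fil]
  rw [mem_fil] at hz
  tauto

/-- If the defects of `x = σ * sw a b` are not all defects of `σ` although `x` does not have more
of them, then the transposition touches defects on both sides. -/
lemma Defects.touch (hB : Defects B c) {σ : Equiv.Perm α} {a b : α}
    (h1 : (B (σ * sw a b)).card ≤ (B σ).card) (h2 : ¬ B (σ * sw a b) ⊆ B σ) :
    (a ∈ B σ ∨ b ∈ B σ) ∧ (a ∈ B (σ * sw a b) ∨ b ∈ B (σ * sw a b)) := by
  constructor
  · by_contra hc
    push Not at hc
    have h3 := hB.sub (σ * sw a b) a b (by rw [mul_sw_sw]; exact hc.1)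
      (by rw [mul_sw_sw]; exact hc.2)
    rw [mul_sw_sw] at h3
    exact h2 (Finset.eq_of_subset_of_card_le h3 h1).symm.subset
  · by_contra hc
    push Not at hc
    exact h2 (hB.sub σ a b hc.1 hc.2)

/-- The other transpositions touch defects on both sides by `Defects.touch`. They are so few that
no cancellation is needed: `phi` is bounded by the entropy densities. -/
lemma bad_step (hB : Defects B c) (hg4 : ∀ σ, 1 / 4 ≤ g σ) (k : ℕ) :
    ∑ t : Equiv.Perm α × α × α, ind ((B t.1).card = k ∧
      (B (t.1 * sw t.2.1 t.2.2)).card ≤ k ∧ ¬ B (t.1 * sw t.2.1 t.2.2) ⊆ B t.1)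
      (phi (g t.1) (g (t.1 * sw t.2.1 t.2.2)))
      ≤ 144 * (k * c) * WW B g k := by
  have hpos : ∀ σ, 0 < g σ := fun σ => by linarith [hg4 σ]
  rw [← sum_fil]
  set T := fil fun t : Equiv.Perm α × α × α => (B t.1).card = k ∧
      (B (t.1 * sw t.2.1 t.2.2)).card ≤ k ∧ ¬ B (t.1 * sw t.2.1 t.2.2) ⊆ B t.1 with hT
  have hle : ∑ t ∈ T, phi (g t.1) (g (t.1 * sw t.2.1 t.2.2))
      ≤ 36 * (∑ t ∈ T, psi (g t.1) + ∑ t ∈ T, psi (g (t.1 * sw t.2.1 t.2.2))) := by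
    rw [← Finset.sum_add_distrib, Finset.mul_sum]
    exact Finset.sum_le_sum fun t _ => phi_le_psi (hg4 _) (hg4 _)
  have hcard : ∀ y ∈ levLe B k, (((fil fun ab : α × α => (ab.1 ∈ B y ∨ ab.2 ∈ B y) ∧
      (ab.1 ∈ B (y * sw ab.1 ab.2) ∨ ab.2 ∈ B (y * sw ab.1 ab.2))).card : ℕ) : ℝ)
      ≤ 2 * (k * c) := by
    intro y hy
    exact_mod_cast card_bad_pairs hB y k (mem_levLe.1 hy)
  have s1 := sum_le_of_inj T (levLe B k) (fun y => fil fun ab : α × α =>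
      (ab.1 ∈ B y ∨ ab.2 ∈ B y) ∧
      (ab.1 ∈ B (y * sw ab.1 ab.2) ∨ ab.2 ∈ B (y * sw ab.1 ab.2)))
    (fun t => t.1) (fun t => t.2) (fun y => psi (g y)) _ (fun t t' h => h)
    (fun t ht => mem_levLe.2 (mem_fil.1 ht).1.le)
    (fun t ht => by
      have h := mem_fil.1 ht
      exact mem_fil.2 (hB.touch (h.1 ▸ h.2.1) h.2.2)) hcard
    (fun y _ => psi_nonneg (hpos y))
  have s2 := sum_le_of_inj T (levLe B k) (fun y => fil fun ab : α × α =>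
      (ab.1 ∈ B y ∨ ab.2 ∈ B y) ∧
      (ab.1 ∈ B (y * sw ab.1 ab.2) ∨ ab.2 ∈ B (y * sw ab.1 ab.2)))
    (fun t => t.1 * sw t.2.1 t.2.2) (fun t => t.2) (fun y => psi (g y)) _
    (by
      rintro ⟨σ, a, b⟩ ⟨σ', a', b'⟩ h
      simp only [Prod.mk.injEq] at h
      obtain ⟨h, rfl, rfl⟩ := h
      rw [mul_right_cancel h])
    (fun t ht => mem_levLe.2 (mem_fil.1 ht).2.1)
    (fun t ht => by
      have h := mem_fil.1 ht
      have h2 := hB.touch (h.1 ▸ h.2.1) h.2.2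
      rw [mem_fil, mul_sw_sw]
      exact h2.symm) hcard
    (fun y _ => psi_nonneg (hpos y))
  unfold WW
  linarith

lemma DD_eq_ind (k : ℕ) : DD B g k = ∑ t : Equiv.Perm α × α × α,
    ind ((B t.1).card ≤ k ∧ (B (t.1 * sw t.2.1 t.2.2)).card ≤ k)
      (phi (g t.1) (g (t.1 * sw t.2.1 t.2.2))) := by
  rw [DD, lowTr, sum_fil]

lemma WW_mono (hpos : ∀ σ, 0 < g σ) {j k : ℕ} (h : j ≤ k) : WW B g j ≤ WW B g k := by
  refine Finset.sum_le_sum_of_subset_of_nonneg ?_ fun σ _ _ => psi_nonneg (hpos σ)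
  intro σ hσ
  rw [mem_levLe] at *
  omega

lemma DD_nonneg (hpos : ∀ σ, 0 < g σ) (k : ℕ) : 0 ≤ DD B g k :=
  Finset.sum_nonneg fun _ _ => phi_nonneg (hpos _) (hpos _)

lemma WW_nonneg (hpos : ∀ σ, 0 < g σ) (k : ℕ) : 0 ≤ WW B g k :=
  Finset.sum_nonneg fun _ _ => psi_nonneg (hpos _)

/-- Constant in the comparison of consecutive levels. -/
def stepC (c j : ℕ) : ℝ := 1 + 98 * c + 276 * c ^ 2 + 288 * ((j + 1) * c)

lemma DD_step (hB : Defects B c) (hg : IsExt B f g) (hg4 : ∀ σ, 1 / 4 ≤ g σ)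
    (hN : 4 ≤ Fintype.card α)
    (hosc : ∀ σ τ, Real.log (g σ) - Real.log (g τ)
      ≤ 2 * Fintype.card α * Real.log (Fintype.card α)) (j : ℕ) :
    DD B g (j + 1) ≤ stepC c j * (DD B g j + WW B g (j + 1)) := by
  have hpos : ∀ σ, 0 < g σ := fun σ => by linarith [hg4 σ]
  set U := ∑ t : Equiv.Perm α × α × α, ind ((B t.1).card = j + 1 ∧
    (B (t.1 * sw t.2.1 t.2.2)).card ≤ j + 1) (phi (g t.1) (g (t.1 * sw t.2.1 t.2.2))) with hU
  have h1 : DD B g (j + 1) ≤ DD B g j + (U + U) := by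
    have hU2 : U = ∑ t : Equiv.Perm α × α × α, ind ((B (t.1 * sw t.2.1 t.2.2)).card = j + 1 ∧
        (B t.1).card ≤ j + 1) (phi (g t.1) (g (t.1 * sw t.2.1 t.2.2))) := by
      rw [hU]
      refine Finset.sum_nbij' (fun t => (t.1 * sw t.2.1 t.2.2, t.2))
        (fun t => (t.1 * sw t.2.1 t.2.2, t.2)) (fun _ _ => Finset.mem_univ _)
        (fun _ _ => Finset.mem_univ _) ?_ ?_ ?_
      · rintro ⟨σ, a, b⟩ _; simp only [mul_sw_sw]
      · rintro ⟨σ, a, b⟩ _; simp only [mul_sw_sw]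
      · rintro ⟨σ, a, b⟩ _
        simp only [mul_sw_sw]
        rw [phi_symm]
    nth_rewrite 2 [hU2]
    rw [DD_eq_ind, DD_eq_ind, hU, ← Finset.sum_add_distrib, ← Finset.sum_add_distrib]
    refine Finset.sum_le_sum fun t _ => ?_
    have hn := phi_nonneg (hpos t.1) (hpos (t.1 * sw t.2.1 t.2.2))
    have n := fun P => ind_nonneg P hn
    by_cases hh : (B t.1).card ≤ j + 1 ∧ (B (t.1 * sw t.2.1 t.2.2)).card ≤ j + 1
    · rw [ind_pos hh]
      by_cases a1 : (B t.1).card = j + 1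
      · rw [ind_pos (P := (B t.1).card = j + 1 ∧ (B (t.1 * sw t.2.1 t.2.2)).card ≤ j + 1)
          ⟨a1, hh.2⟩]
        linarith [n ((B t.1).card ≤ j ∧ (B (t.1 * sw t.2.1 t.2.2)).card ≤ j),
          n ((B (t.1 * sw t.2.1 t.2.2)).card = j + 1 ∧ (B t.1).card ≤ j + 1)]
      · by_cases a2 : (B (t.1 * sw t.2.1 t.2.2)).card = j + 1
        · rw [ind_pos (P := (B (t.1 * sw t.2.1 t.2.2)).card = j + 1 ∧ (B t.1).card ≤ j + 1)
            ⟨a2, hh.1⟩]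
          linarith [n ((B t.1).card ≤ j ∧ (B (t.1 * sw t.2.1 t.2.2)).card ≤ j),
            n ((B t.1).card = j + 1 ∧ (B (t.1 * sw t.2.1 t.2.2)).card ≤ j + 1)]
        · rw [ind_pos (P := (B t.1).card ≤ j ∧ (B (t.1 * sw t.2.1 t.2.2)).card ≤ j)
            ⟨by omega, by omega⟩]
          linarith [n ((B (t.1 * sw t.2.1 t.2.2)).card = j + 1 ∧ (B t.1).card ≤ j + 1),
            n ((B t.1).card = j + 1 ∧ (B (t.1 * sw t.2.1 t.2.2)).card ≤ j + 1)]
    · rw [ind_neg hh]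
      exact add_nonneg (n _) (add_nonneg (n _) (n _))
  have h2 : U ≤ ∑ t : Equiv.Perm α × α × α, ind ((B t.1).card = j + 1 ∧
      B (t.1 * sw t.2.1 t.2.2) ⊆ B t.1) (phi (g t.1) (g (t.1 * sw t.2.1 t.2.2)))
      + ∑ t : Equiv.Perm α × α × α, ind ((B t.1).card = j + 1 ∧
      (B (t.1 * sw t.2.1 t.2.2)).card ≤ j + 1 ∧ ¬ B (t.1 * sw t.2.1 t.2.2) ⊆ B t.1)
      (phi (g t.1) (g (t.1 * sw t.2.1 t.2.2))) := by
    rw [← Finset.sum_add_distrib, hU]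
    refine Finset.sum_le_sum fun t _ => ?_
    have hn := phi_nonneg (hpos t.1) (hpos (t.1 * sw t.2.1 t.2.2))
    have n := fun P => ind_nonneg P hn
    by_cases hh : (B t.1).card = j + 1 ∧ (B (t.1 * sw t.2.1 t.2.2)).card ≤ j + 1
    · rw [ind_pos hh]
      by_cases a1 : B (t.1 * sw t.2.1 t.2.2) ⊆ B t.1
      · rw [ind_pos (P := (B t.1).card = j + 1 ∧ B (t.1 * sw t.2.1 t.2.2) ⊆ B t.1) ⟨hh.1, a1⟩]
        exact le_add_of_nonneg_right (n _)
      · rw [ind_pos (P := (B t.1).card = j + 1 ∧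
          (B (t.1 * sw t.2.1 t.2.2)).card ≤ j + 1 ∧ ¬ B (t.1 * sw t.2.1 t.2.2) ⊆ B t.1)
          ⟨hh.1, hh.2, a1⟩]
        exact le_add_of_nonneg_left (n _)
    · rw [ind_neg hh]
      exact add_nonneg (n _) (n _)
  have h3 := good_step hB hg hg4 hN hosc j
  have h4 := bad_step hB hg4 (j + 1)
  set G := ∑ t : Equiv.Perm α × α × α, ind ((B t.1).card = j + 1 ∧
      B (t.1 * sw t.2.1 t.2.2) ⊆ B t.1) (phi (g t.1) (g (t.1 * sw t.2.1 t.2.2))) with hG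
  have hG0 : 0 ≤ G := Finset.sum_nonneg fun t _ => ind_nonneg _ (phi_nonneg (hpos _) (hpos _))
  have hj : (0 : ℝ) ≤ j := Nat.cast_nonneg j
  have h5 : G ≤ ((j : ℝ) + 1) * G := by nlinarith
  have hm : WW B g j ≤ WW B g (j + 1) := WW_mono hpos (Nat.le_succ j)
  have h6 : 138 * (c : ℝ) ^ 2 * WW B g j ≤ 138 * c ^ 2 * WW B g (j + 1) :=
    mul_le_mul_of_nonneg_left hm (by positivity)
  have hD := DD_nonneg (B := B) hpos j
  have hW := WW_nonneg (B := B) hpos (j + 1)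
  have hc : (0 : ℝ) ≤ c := Nat.cast_nonneg c
  push_cast at h4
  have h7 : DD B g (j + 1) ≤ DD B g j + 2 * (49 * c * DD B g j + 138 * c ^ 2 * WW B g (j + 1)
      + 144 * (((j : ℝ) + 1) * c) * WW B g (j + 1)) := by linarith
  refine h7.trans ?_
  unfold stepC
  have e1 : 0 ≤ (276 * (c : ℝ) ^ 2 + 288 * ((j + 1) * c)) * DD B g j := by positivity
  have e2 : 0 ≤ (1 + 98 * (c : ℝ)) * WW B g (j + 1) := by positivity
  nlinarith

/-- Accumulated constant in `DD_le`. -/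
def accC (c : ℕ) : ℕ → ℝ
  | 0 => 1
  | j + 1 => stepC c j * (accC c j + 2 * growth c)

lemma stepC_pos (c j : ℕ) : 0 < stepC c j := by unfold stepC; positivity

lemma growth_pos (c : ℕ) : 0 < growth c := by unfold growth; positivity

lemma accC_pos (c j : ℕ) : 0 < accC c j := by
  induction j with
  | zero => exact one_pos
  | succ j ih => exact mul_pos (stepC_pos c j) (by have := growth_pos c; positivity)

/-- The Dirichlet form on permutations with at most `k` defects is controlled by the form on the
simple ones together with the entropy, with a constant independent of the number of points. -/
lemma DD_le (hB : Defects B c) (hg : IsExt B f g) (hg4 : ∀ σ, 1 / 4 ≤ g σ)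
    (hN : 4 ≤ Fintype.card α)
    (hosc : ∀ σ τ, Real.log (g σ) - Real.log (g τ)
      ≤ 2 * Fintype.card α * Real.log (Fintype.card α)) (k : ℕ) :
    DD B g k ≤ accC c k * (DD B g 0 + ww B g 0) := by
  have hpos : ∀ σ, 0 < g σ := fun σ => by linarith [hg4 σ]
  have hw0 : 0 ≤ ww B g 0 := Finset.sum_nonneg fun σ _ => psi_nonneg (hpos σ)
  have hD := DD_nonneg (B := B) hpos 0
  induction k with
  | zero => simp only [accC]; linarith
  | succ k ih =>
    refine (DD_step hB hg hg4 hN hosc k).trans ?_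
    have hW := WW_le hB hg hpos (by omega) (k + 1)
    simp only [accC]
    rw [mul_assoc]
    refine mul_le_mul_of_nonneg_left ?_ (stepC_pos c k).le
    have := mul_nonneg (growth_pos c).le hD
    nlinarith

end Rec

/-! ### The entropy inequality for simple configurations -/

/-- The entropy over all of `Ω` dominates the entropy density summed over any part on which the
function has mean one. -/
lemma sum_psi_le_hent {Ω : Type*} [Fintype Ω] (S : Finset Ω) (F : Ω → ℝ) (hF : ∀ x, 0 < F x)
    (hS : ∑ x ∈ S, F x = S.card) : ∑ x ∈ S, psi (F x) ≤ hent Finset.univ F := by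
  rcases isEmpty_or_nonempty Ω with he | hne
  · rw [Finset.eq_empty_of_isEmpty S, Finset.univ_eq_empty]
    simp [hent]
  set s := ∑ x, F x with hs
  have hc : (0 : ℝ) < (Finset.univ : Finset Ω).card := by
    exact_mod_cast Finset.card_pos.2 Finset.univ_nonempty
  have hs0 : 0 < s := Finset.sum_pos (fun x _ => hF x) Finset.univ_nonempty
  set m := s / (Finset.univ : Finset Ω).card with hm
  have hm0 : 0 < m := div_pos hs0 hc
  have e1 : hent Finset.univ F
      = ∑ x, (F x * (Real.log (F x) - Real.log m) - (F x - m)) := by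
    rw [Finset.sum_sub_distrib, Finset.sum_sub_distrib, Finset.sum_const, nsmul_eq_mul, hm,
      mul_div_cancel₀ _ hc.ne', ← hs, sub_self, sub_zero, hent, ← hs, ← hm]
    simp only [mul_sub]
    rw [Finset.sum_sub_distrib, ← Finset.sum_mul]
  have e2 : ∑ x ∈ S, (F x * (Real.log (F x) - Real.log m) - (F x - m)) ≤ hent Finset.univ F := by
    rw [e1]
    refine Finset.sum_le_sum_of_subset_of_nonneg (Finset.subset_univ _) fun x _ _ => ?_
    linarith [mul_log_tangent (hF x) hm0]
  refine le_trans ?_ e2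
  have e3 : ∑ x ∈ S, (F x * (Real.log (F x) - Real.log m) - (F x - m))
      = ∑ x ∈ S, psi (F x) + S.card * (m - 1 - Real.log m) := by
    have : ∀ x, F x * (Real.log (F x) - Real.log m) - (F x - m)
        = psi (F x) + (m - 1) - F x * Real.log m := fun x => by unfold psi; ring
    simp only [this]
    rw [Finset.sum_sub_distrib, Finset.sum_add_distrib, ← Finset.sum_mul, hS, Finset.sum_const,
      nsmul_eq_mul]
    ring
  rw [e3]
  have := Real.log_le_sub_one_of_pos hm0
  have h2 : (0 : ℝ) ≤ S.card * (m - 1 - Real.log m) :=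
    mul_nonneg (Nat.cast_nonneg _) (by linarith)
  linarith

section Core

variable {α : Type*} [Fintype α] {B : Equiv.Perm α → Finset α} {c : ℕ}
  {f g : Equiv.Perm α → ℝ}

/-- The function `g`, replaced by its mean value one above level `K`. -/
def cut (B : Equiv.Perm α → Finset α) (g : Equiv.Perm α → ℝ) (K : ℕ) (σ : Equiv.Perm α) : ℝ :=
  if (B σ).card ≤ K then g σ else 1

/-- A transposition passes from at most `K` defects to more than `K` only from one of the levels
`K - c + 1, …, K`, and each permutation has at most `N * c` such transpositions. -/
lemma exit_le (hB : Defects B c) (hg4 : ∀ σ, 1 / 4 ≤ g σ) (K : ℕ) (hK : c ≤ K) :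
    ∑ t : Equiv.Perm α × α × α, ind ((B t.1).card ≤ K ∧ K < (B (t.1 * sw t.2.1 t.2.2)).card)
      (phi (g t.1) 1)
      ≤ 6 * (Fintype.card α * c) * ∑ j ∈ Finset.Ioc (K - c) K, ww B g j := by
  have hpos : ∀ σ, 0 < g σ := fun σ => by linarith [hg4 σ]
  rw [← sum_fil]
  set T := fil fun t : Equiv.Perm α × α × α =>
    (B t.1).card ≤ K ∧ K < (B (t.1 * sw t.2.1 t.2.2)).card with hT
  set R := fil fun σ : Equiv.Perm α => (B σ).card ≤ K ∧ K < (B σ).card + c with hR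
  have h1 : ∑ t ∈ T, phi (g t.1) 1 ≤ 6 * ∑ t ∈ T, psi (g t.1) := by
    rw [Finset.mul_sum]
    exact Finset.sum_le_sum fun t _ => phi_one_le (hg4 _)
  have h2 := sum_le_of_inj T R (fun y => fil fun ab : α × α =>
      True ∧ (ab.1 ∈ B (y * sw ab.1 ab.2) ∨ ab.2 ∈ B (y * sw ab.1 ab.2)))
    (fun t => t.1) (fun t => t.2) (fun y => psi (g y)) (Fintype.card α * c : ℝ)
    (fun t t' h => h)
    (fun t ht => by
      have h := mem_fil.1 ht
      have h3 := hB.lip (t.1 * sw t.2.1 t.2.2) t.2.1 t.2.2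
      rw [mul_sw_sw] at h3
      exact mem_fil.2 ⟨h.1, by omega⟩)
    (fun t ht => by
      have h := mem_fil.1 ht
      refine mem_fil.2 ⟨trivial, ?_⟩
      by_contra hc
      push Not at hc
      have := Finset.card_le_card (hB.sub t.1 t.2.1 t.2.2 hc.1 hc.2)
      omega)
    (fun y _ => by
      exact_mod_cast card_prod_le (X := α) (Y := α) (fun _ => True)
        (fun a b => a ∈ B (y * sw a b) ∨ b ∈ B (y * sw a b)) (Fintype.card α) c
        (Finset.card_le_univ _) (fun a _ => hB.few y a))
    (fun y _ => psi_nonneg (hpos y))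
  have h3 : ∑ y ∈ R, psi (g y) ≤ ∑ j ∈ Finset.Ioc (K - c) K, ww B g j := by
    rw [← Finset.sum_fiberwise_of_maps_to (t := Finset.Ioc (K - c) K)
      (g := fun y => (B y).card)]
    · refine Finset.sum_le_sum fun j _ => Finset.sum_le_sum_of_subset_of_nonneg ?_
        fun σ _ _ => psi_nonneg (hpos σ)
      intro y hy
      exact mem_lev.2 (Finset.mem_filter.1 hy).2
    · intro y hy
      have := mem_fil.1 hy
      rw [Finset.mem_Ioc]
      omega
  have h7 : (0 : ℝ) ≤ Fintype.card α * c := by positivity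
  have h8 := mul_le_mul_of_nonneg_left h3 h7
  nlinarith

lemma cut_form_le (hB : Defects B c) (hg4 : ∀ σ, 1 / 4 ≤ g σ) (K : ℕ) (hK : c ≤ K) :
    ∑ σ, ∑ a, ∑ b, phi (cut B g K σ) (cut B g K (σ * sw a b))
      ≤ DD B g K + 12 * (Fintype.card α * c) * ∑ j ∈ Finset.Ioc (K - c) K, ww B g j := by
  have hpos : ∀ σ, 0 < g σ := fun σ => by linarith [hg4 σ]
  have h0 := exit_le hB hg4 K hK
  set X := ∑ t : Equiv.Perm α × α × α,
    ind ((B t.1).card ≤ K ∧ K < (B (t.1 * sw t.2.1 t.2.2)).card) (phi (g t.1) 1) with hX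
  have hX2 : X = ∑ t : Equiv.Perm α × α × α,
      ind ((B (t.1 * sw t.2.1 t.2.2)).card ≤ K ∧ K < (B t.1).card)
        (phi 1 (g (t.1 * sw t.2.1 t.2.2))) := by
    rw [hX]
    refine Finset.sum_nbij' (fun t => (t.1 * sw t.2.1 t.2.2, t.2))
      (fun t => (t.1 * sw t.2.1 t.2.2, t.2)) (fun _ _ => Finset.mem_univ _)
      (fun _ _ => Finset.mem_univ _) ?_ ?_ ?_
    · rintro ⟨σ, a, b⟩ _; simp only [mul_sw_sw]
    · rintro ⟨σ, a, b⟩ _; simp only [mul_sw_sw]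
    · rintro ⟨σ, a, b⟩ _
      simp only [mul_sw_sw]
      rw [phi_symm]
  have h1 : ∑ σ, ∑ a, ∑ b, phi (cut B g K σ) (cut B g K (σ * sw a b)) = DD B g K + (X + X) := by
    nth_rewrite 2 [hX2]
    rw [DD_eq_ind, hX, ← Finset.sum_add_distrib, ← Finset.sum_add_distrib]
    simp only [Fintype.sum_prod_type]
    refine Finset.sum_congr rfl fun σ _ => Finset.sum_congr rfl fun a _ =>
      Finset.sum_congr rfl fun b _ => ?_
    unfold cut ind
    by_cases p1 : (B σ).card ≤ K <;> by_cases p2 : (B (σ * sw a b)).card ≤ K <;>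
      simp [p1, p2, phi_self, not_lt.2, not_le.1]
  rw [h1]
  linarith

/-- The entropy inequality for simple permutations when `N` is large, for functions which have
mean one and are bounded away from zero. -/
theorem core_simple (c : ℕ) : ∃ N₀ : ℕ, ∃ C : ℝ, 0 < C ∧
    ∀ (α : Type) [Fintype α] (B : Equiv.Perm α → Finset α) (_ : Defects B c)
      (_ : N₀ ≤ Fintype.card α) (f : Equiv.Perm α → ℝ) (_ : ∀ σ, B σ = ∅ → 1 / 4 ≤ f σ)
      (_ : ∑ σ ∈ lev B 0, f σ = (lev B 0).card),
      (Fintype.card α : ℝ) * ∑ σ ∈ lev B 0, psi (f σ)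
        ≤ C * ∑ t ∈ lowTr B 0, phi (f t.1) (f (t.1 * sw t.2.1 t.2.2)) := by
  obtain ⟨K₁, hK₁⟩ := pow_unbounded_of_one_lt (24 * (c : ℝ) ^ 2 * growth c * 2 ^ c)
    (one_lt_two : (1 : ℝ) < 2)
  set K := max K₁ c with hK
  have hcK : c ≤ K := le_max_right _ _
  have hK2 : 24 * (c : ℝ) ^ 2 * growth c * 2 ^ c ≤ 2 ^ K :=
    hK₁.le.trans (pow_le_pow_right₀ one_le_two (le_max_left _ _))
  obtain ⟨N₁, hN₁⟩ := exists_nat_ge (2 * accC c K)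
  refine ⟨max N₁ 4, accC c K, accC_pos c K, ?_⟩
  intro α _ B hB hN f hf hsum
  have hN4 : 4 ≤ Fintype.card α := (le_max_right _ _).trans hN
  have hNR : (4 : ℝ) ≤ Fintype.card α := by exact_mod_cast hN4
  have hNA : 2 * accC c K ≤ Fintype.card α :=
    hN₁.trans (by exact_mod_cast (le_max_left _ _).trans hN)
  have hlogN : Real.log 4 ≤ Real.log (Fintype.card α) := Real.log_le_log (by norm_num) hNR
  have hlog4 : 0 ≤ Real.log 4 := Real.log_nonneg (by norm_num)
  have hhi : (1 : ℝ) ≤ (Fintype.card α : ℝ) ^ (Fintype.card α) :=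
    one_le_pow₀ (by linarith)
  have hfhi : ∀ σ, B σ = ∅ → 1 / 4 ≤ f σ ∧ f σ ≤ (Fintype.card α : ℝ) ^ (Fintype.card α) := by
    intro σ hσ
    refine ⟨hf σ hσ, ?_⟩
    -- a nonnegative function with mean one is at most the number of points of the space, here
    -- at most `N! ≤ N ^ N`; this gives the oscillation bound `2 N log N` needed in `phi_path`
    have hmem : ∀ τ ∈ lev B 0, 0 ≤ f τ := fun τ hτ => by
      linarith [hf τ (Finset.card_eq_zero.1 (mem_lev.1 hτ))]
    have h1 := Finset.single_le_sum hmem (mem_lev.2 (Finset.card_eq_zero.2 hσ))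
    rw [hsum] at h1
    have h2 : (lev B 0).card ≤ (Fintype.card α) ^ (Fintype.card α) := by
      refine (Finset.card_le_univ _).trans ?_
      rw [Fintype.card_perm]
      exact Nat.factorial_le_pow _
    exact h1.trans (by exact_mod_cast h2)
  obtain ⟨g, hg, hgb⟩ := exists_ext hB f (1 / 4) _ (by norm_num) hhi hfhi
  have hg4 : ∀ σ, 1 / 4 ≤ g σ := fun σ => (hgb σ).1
  have hpos : ∀ σ, 0 < g σ := fun σ => by linarith [hg4 σ]
  have hosc : ∀ σ τ, Real.log (g σ) - Real.log (g τ)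
      ≤ 2 * Fintype.card α * Real.log (Fintype.card α) := by
    intro σ τ
    have h1 := Real.log_le_log (hpos σ) (hgb σ).2
    rw [Real.log_pow] at h1
    have h2 := Real.log_le_log (by norm_num) (hg4 τ)
    rw [one_div, Real.log_inv] at h2
    nlinarith
  have hbase : ∀ σ ∈ lev B 0, g σ = f σ := fun σ hσ =>
    hg.base σ (Finset.card_eq_zero.1 (mem_lev.1 hσ))
  have hww : ww B g 0 = ∑ σ ∈ lev B 0, psi (f σ) :=
    Finset.sum_congr rfl fun σ hσ => by rw [hbase σ hσ]
  have hDD : DD B g 0 = ∑ t ∈ lowTr B 0, phi (f t.1) (f (t.1 * sw t.2.1 t.2.2)) := by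
    refine Finset.sum_congr rfl fun t ht => ?_
    have h := mem_lowTr.1 ht
    rw [hbase _ (mem_lev.2 (Nat.le_zero.1 h.1)), hbase _ (mem_lev.2 (Nat.le_zero.1 h.2))]
  rw [← hww, ← hDD]
  have hw0 : 0 ≤ ww B g 0 := Finset.sum_nonneg fun σ _ => psi_nonneg (hpos σ)
  have hcutpos : ∀ σ, 0 < cut B g K σ := fun σ => by
    unfold cut; split_ifs
    · exact hpos σ
    · exact one_pos
  have hcut : ∀ σ ∈ lev B 0, cut B g K σ = f σ := fun σ hσ => by
    rw [cut, if_pos (by rw [mem_lev.1 hσ]; exact Nat.zero_le _), hbase σ hσ]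
  have h1 : ww B g 0 ≤ hent Finset.univ (cut B g K) := by
    have := sum_psi_le_hent (lev B 0) (cut B g K) hcutpos
      (by rw [Finset.sum_congr rfl hcut, hsum])
    rw [hww]
    refine le_trans (le_of_eq ?_) this
    exact Finset.sum_congr rfl fun σ hσ => by rw [hcut σ hσ]
  have h2 := hent_perm (by omega) (cut B g K) hcutpos
  have h3 := cut_form_le hB hg4 K hcK
  have h4 := DD_le hB hg hg4 hN4 hosc K
  -- the levels just below `K` carry an exponentially small part of the entropy
  have h5 : 12 * (c : ℝ) * ∑ j ∈ Finset.Ioc (K - c) K, ww B g j ≤ ww B g 0 / 2 := by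
    have hj : ∀ j ∈ Finset.Ioc (K - c) K, ww B g j ≤ growth c * 2 ^ c / 2 ^ K * ww B g 0 := by
      intro j hj
      rw [Finset.mem_Ioc] at hj
      have e1 := ww_le hB hg hpos (by omega) j
      have e2 : (2 : ℝ) ^ K ≤ 2 ^ j * 2 ^ c := by
        rw [← pow_add]
        exact pow_le_pow_right₀ one_le_two (by omega)
      have e3 : 0 ≤ ww B g j := Finset.sum_nonneg fun σ _ => psi_nonneg (hpos σ)
      rw [div_mul_eq_mul_div, le_div_iff₀ (by positivity)]
      calc ww B g j * 2 ^ K ≤ ww B g j * (2 ^ j * 2 ^ c) := mul_le_mul_of_nonneg_left e2 e3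
        _ = ww B g j * 2 ^ j * 2 ^ c := by ring
        _ ≤ growth c * ww B g 0 * 2 ^ c := mul_le_mul_of_nonneg_right e1 (by positivity)
        _ = _ := by ring
    have h6 := Finset.sum_le_sum hj
    rw [Finset.sum_const, nsmul_eq_mul, Nat.card_Ioc, show K - (K - c) = c by omega] at h6
    have h7 : 12 * (c : ℝ) * (c * (growth c * 2 ^ c / 2 ^ K)) ≤ 1 / 2 := by
      rw [show 12 * (c : ℝ) * (c * (growth c * 2 ^ c / 2 ^ K))
        = (24 * (c : ℝ) ^ 2 * growth c * 2 ^ c) / 2 ^ K / 2 by ring]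
      have := (div_le_one (show (0 : ℝ) < 2 ^ K by positivity)).2 hK2
      linarith
    calc 12 * (c : ℝ) * ∑ j ∈ Finset.Ioc (K - c) K, ww B g j
        ≤ 12 * (c : ℝ) * (c * (growth c * 2 ^ c / 2 ^ K * ww B g 0)) :=
          mul_le_mul_of_nonneg_left h6 (by positivity)
      _ = 12 * (c : ℝ) * (c * (growth c * 2 ^ c / 2 ^ K)) * ww B g 0 := by ring
      _ ≤ 1 / 2 * ww B g 0 := mul_le_mul_of_nonneg_right h7 hw0
      _ = _ := by ring
  set N : ℝ := (Fintype.card α : ℝ)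
  have h8 : 2 * N * ww B g 0 ≤ 2 * N * hent Finset.univ (cut B g K) :=
    mul_le_mul_of_nonneg_left h1 (by linarith)
  have h9 : N * (12 * (c : ℝ) * ∑ j ∈ Finset.Ioc (K - c) K, ww B g j) ≤ N * (ww B g 0 / 2) :=
    mul_le_mul_of_nonneg_left h5 (by linarith)
  have h10 : 2 * accC c K * ww B g 0 ≤ N * ww B g 0 := mul_le_mul_of_nonneg_right hNA hw0
  -- `2 N w ≤ accC (D + w) + N w / 2` with `2 accC ≤ N`, where `w` and `D` are the entropy and
  -- the form on simple permutations; both occurrences of `w` on the right are absorbed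
  nlinarith

end Core

/-! ### Multiple edges as defects -/

section Dup

variable {α ι : Type*} [Fintype α] (r s : α → ι)

/-- The points of `α` are half-edges; `r` and `s` give the left and the right vertex of a
half-edge, and `σ` pairs half-edges. The defects of `σ` are the left half-edges which belong to
multiple edges of the resulting multigraph. -/
def dup (σ : Equiv.Perm α) : Finset α :=
  fil fun p => ∃ p', p' ≠ p ∧ r p' = r p ∧ s (σ p') = s (σ p)

variable {r s}

lemma mem_dup {σ : Equiv.Perm α} {p : α} :
    p ∈ dup r s σ ↔ ∃ p', p' ≠ p ∧ r p' = r p ∧ s (σ p') = s (σ p) := by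
  rw [dup, mem_fil]

variable (r s) in
/-- The half-edges at the left vertex of `p`. -/
def rowS (p : α) : Finset α := fil fun x => r x = r p

variable (r s) in
/-- The half-edges which `σ` sends to the right vertex to which it sends `p`. -/
def colS (σ : Equiv.Perm α) (p : α) : Finset α := fil fun x => s (σ x) = s (σ p)

variable (r s) in
/-- The half-edges sent to a right neighbour of the left vertex of `p`. -/
def rcS (σ : Equiv.Perm α) (p : α) : Finset α := (rowS r p).biUnion fun x => colS s σ x

variable (r s) in
/-- The half-edges at the left neighbours of the right vertex to which `p` is sent. -/
def crS (σ : Equiv.Perm α) (p : α) : Finset α := (colS s σ p).biUnion fun x => rowS r x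

variable {d : ℕ}

lemma card_colS (hs : ∀ p, (fil fun x => s x = s p).card ≤ d) (σ : Equiv.Perm α) (p : α) :
    (colS s σ p).card ≤ d := by
  refine le_trans (Finset.card_le_card_of_injOn σ ?_ σ.injective.injOn) (hs (σ p))
  intro x hx
  rw [Finset.mem_coe, colS, mem_fil] at hx
  rw [Finset.mem_coe, mem_fil]
  exact hx

lemma card_rcS (hr : ∀ p, (fil fun x => r x = r p).card ≤ d)
    (hs : ∀ p, (fil fun x => s x = s p).card ≤ d) (σ : Equiv.Perm α) (p : α) :
    (rcS r s σ p).card ≤ d * d :=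
  (Finset.card_biUnion_le_card_mul _ _ _ fun x _ => card_colS hs σ x).trans
    (Nat.mul_le_mul_right _ (hr p))

lemma card_crS (hr : ∀ p, (fil fun x => r x = r p).card ≤ d)
    (hs : ∀ p, (fil fun x => s x = s p).card ≤ d) (σ : Equiv.Perm α) (p : α) :
    (crS r s σ p).card ≤ d * d :=
  (Finset.card_biUnion_le_card_mul _ _ _ fun x _ => hr x).trans
    (Nat.mul_le_mul_right _ (card_colS hs σ p))

lemma mem_rowS {p x : α} : x ∈ rowS r p ↔ r x = r p := mem_fil
lemma mem_colS {σ : Equiv.Perm α} {p x : α} : x ∈ colS s σ p ↔ s (σ x) = s (σ p) := mem_fil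
lemma mem_rcS {σ : Equiv.Perm α} {p x : α} :
    x ∈ rcS r s σ p ↔ ∃ y, r y = r p ∧ s (σ x) = s (σ y) := by
  simp only [rcS, Finset.mem_biUnion, mem_rowS, mem_colS]
lemma mem_crS {σ : Equiv.Perm α} {p x : α} :
    x ∈ crS r s σ p ↔ ∃ y, s (σ y) = s (σ p) ∧ r x = r y := by
  simp only [crS, Finset.mem_biUnion, mem_rowS, mem_colS]

lemma dup_left {σ : Equiv.Perm α} {p q : α} (h : p ∈ dup r s (σ * sw p q)) :
    q ∈ rowS r p ∪ rcS r s σ p := by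
  obtain ⟨p', h1, h2, h3⟩ := mem_dup.1 h
  rw [Finset.mem_union, mem_rowS, mem_rcS]
  rw [Equiv.Perm.mul_apply, Equiv.Perm.mul_apply, sw_left] at h3
  by_cases hq : p' = q
  · left; rw [← hq, h2]
  · right
    rw [sw_ne h1 hq] at h3
    exact ⟨p', h2, h3.symm⟩

lemma dup_right {σ : Equiv.Perm α} {p q : α} (h : q ∈ dup r s (σ * sw p q)) :
    q ∈ rowS r p ∪ crS r s σ p := by
  obtain ⟨p', h1, h2, h3⟩ := mem_dup.1 h
  rw [Finset.mem_union, mem_rowS, mem_crS]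
  rw [Equiv.Perm.mul_apply, Equiv.Perm.mul_apply, sw_right] at h3
  by_cases hq : p' = p
  · left; rw [← hq, h2]
  · right
    rw [sw_ne hq h1] at h3
    exact ⟨p', h3, h2.symm⟩

/-- The constant counts half-edges within distance two of a given one in a multigraph with degrees
at most `d`. -/
lemma defects_dup (hr : ∀ p, (fil fun x => r x = r p).card ≤ d)
    (hs : ∀ p, (fil fun x => s x = s p).card ≤ d) :
    Defects (dup r s) (4 * (d * d) + 4 * d) where
  sub σ p q hp hq x hx := by
    obtain ⟨y, h1, h2, h3⟩ := mem_dup.1 hx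
    have hy : y ∈ dup r s (σ * sw p q) := mem_dup.2 ⟨x, h1.symm, h2.symm, h3.symm⟩
    have hne : ∀ z ∈ dup r s (σ * sw p q), (σ * sw p q) z = σ z := fun z hz => by
      rw [Equiv.Perm.mul_apply, sw_ne]
      · rintro rfl; exact hp hz
      · rintro rfl; exact hq hz
    rw [hne x hx, hne y hy] at h3
    exact mem_dup.2 ⟨y, h1, h2, h3⟩
  few σ p := by
    have h : (fil fun q => p ∈ dup r s (σ * sw p q) ∨ q ∈ dup r s (σ * sw p q))
        ⊆ (rowS r p ∪ rcS r s σ p) ∪ (rowS r p ∪ crS r s σ p) := by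
      intro q hq
      rw [mem_fil] at hq
      exact Finset.mem_union.2 (hq.imp dup_left dup_right)
    have h1 := hr p
    have h2 := card_rcS hr hs σ p
    have h3 := card_crS hr hs σ p
    have h4 := Finset.card_union_le (rowS r p ∪ rcS r s σ p) (rowS r p ∪ crS r s σ p)
    have h5 := Finset.card_union_le (rowS r p) (rcS r s σ p)
    have h6 := Finset.card_union_le (rowS r p) (crS r s σ p)
    have h7 := Finset.card_le_card h
    change (rowS r p).card ≤ d at h1
    omega
  few_pairs σ p hp := by
    have h : (fil fun ab : α × α => p ∈ dup r s (σ * sw ab.1 ab.2))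
        ⊆ (({p} ×ˢ rcS r s σ p) ∪ (rcS r s σ p ×ˢ {p})) ∪
          ((rowS r p ×ˢ colS s σ p) ∪ (colS s σ p ×ˢ rowS r p)) := by
      rintro ⟨a, b⟩ hab
      rw [mem_fil] at hab
      obtain ⟨p', h1, h2, h3⟩ := mem_dup.1 hab
      have hp' : s (σ p') ≠ s (σ p) := fun h => hp (mem_dup.2 ⟨p', h1, h2, h⟩)
      simp only [Finset.mem_union, Finset.mem_product, Finset.mem_singleton, mem_rowS, mem_colS,
        mem_rcS]
      simp only [Equiv.Perm.mul_apply] at h3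
      by_cases ha : p = a
      · subst ha
        rw [sw_left] at h3
        by_cases hb : p' = b
        · subst hb; rw [sw_right] at h3; exact absurd h3.symm hp'
        · rw [sw_ne h1 hb] at h3
          exact Or.inl (Or.inl ⟨rfl, p', h2, h3.symm⟩)
      by_cases hb : p = b
      · subst hb
        rw [sw_right] at h3
        by_cases hb : p' = a
        · subst hb; rw [sw_left] at h3; exact absurd h3.symm hp'
        · rw [sw_ne hb h1] at h3
          exact Or.inl (Or.inr ⟨⟨p', h2, h3.symm⟩, rfl⟩)
      rw [sw_ne ha hb] at h3
      by_cases ha' : p' = a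
      · subst ha'
        rw [sw_left] at h3
        exact Or.inr (Or.inl ⟨h2, h3⟩)
      by_cases hb' : p' = b
      · subst hb'
        rw [sw_right] at h3
        exact Or.inr (Or.inr ⟨h3, h2⟩)
      rw [sw_ne ha' hb'] at h3
      exact absurd h3 hp'
    have h1 := hr p
    change (rowS r p).card ≤ d at h1
    have h2 := card_rcS hr hs σ p
    have h3 := card_colS hs σ p
    have h4 := Nat.mul_le_mul h1 h3
    have h5 := Nat.mul_le_mul h3 h1
    refine (Finset.card_le_card h).trans ((Finset.card_union_le _ _).trans
      ((Nat.add_le_add (Finset.card_union_le _ _) (Finset.card_union_le _ _)).trans ?_))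
    simp only [Finset.card_product, Finset.card_singleton]
    omega
  few_diff σ a b := by
    have h : (fil fun pq : α × α => pq.1 ∈ dup r s (σ * sw pq.1 pq.2) ∧
        pq.1 ∉ dup r s (σ * sw a b * sw pq.1 pq.2))
        ⊆ ((((rowS r a ∪ crS r s σ a) ×ˢ {a}) ∪ ({a} ×ˢ rowS r a)) ∪ (rowS r a ×ˢ colS s σ a)) ∪
          ((((rowS r b ∪ crS r s σ b) ×ˢ {b}) ∪ ({b} ×ˢ rowS r b)) ∪
            (rowS r b ×ˢ colS s σ b)) := by
      rintro ⟨p, q⟩ hpq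
      rw [mem_fil] at hpq
      obtain ⟨hp, hnp⟩ := hpq
      dsimp only at hp hnp
      obtain ⟨p', h1, h2, h3⟩ := mem_dup.1 hp
      have hq := hp
      rw [sw_comm] at hq
      have hpq2 := dup_right hq
      have hv : ∀ v, v = a ∨ v = b → (q = v ∨ sw p q p' = v) → (p, q) ∈
          (((rowS r v ∪ crS r s σ v) ×ˢ {v}) ∪ ({v} ×ˢ rowS r v)) ∪ (rowS r v ×ˢ colS s σ v) := by
        rintro v - (rfl | rfl)
        · simp only [Finset.mem_union, Finset.mem_product, Finset.mem_singleton] at hpq2 ⊢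
          exact Or.inl (Or.inl ⟨hpq2, trivial⟩)
        · simp only [Finset.mem_union, Finset.mem_product, Finset.mem_singleton, mem_rowS,
            mem_colS]
          by_cases hq : p' = q
          · subst hq
            rw [sw_right]
            exact Or.inl (Or.inr ⟨rfl, h2⟩)
          · rw [Equiv.Perm.mul_apply, Equiv.Perm.mul_apply, sw_left, sw_ne h1 hq] at h3
            rw [sw_ne h1 hq]
            exact Or.inr ⟨h2.symm, h3.symm⟩
      by_cases ha : q = a ∨ sw p q p' = a
      · exact Finset.mem_union_left _ (hv a (Or.inl rfl) ha)
      by_cases hb : q = b ∨ sw p q p' = b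
      · exact Finset.mem_union_right _ (hv b (Or.inr rfl) hb)
      push Not at ha hb
      refine absurd (mem_dup.2 ⟨p', h1, h2, ?_⟩) hnp
      simp only [Equiv.Perm.mul_apply, sw_left] at h3 ⊢
      rw [sw_ne ha.1 hb.1, sw_ne ha.2 hb.2]
      exact h3
    have key : ∀ v, ((((rowS r v ∪ crS r s σ v) ×ˢ {v}) ∪ ({v} ×ˢ rowS r v)) ∪
        (rowS r v ×ˢ colS s σ v)).card ≤ 2 * (d * d) + 2 * d := by
      intro v
      have h1 := hr v
      change (rowS r v).card ≤ d at h1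
      have h2 := card_crS hr hs σ v
      have h3 := card_colS hs σ v
      have h4 := Nat.mul_le_mul h1 h3
      have h5 := Finset.card_union_le (rowS r v) (crS r s σ v)
      refine (Finset.card_union_le _ _).trans
        ((Nat.add_le_add_right (Finset.card_union_le _ _) _).trans ?_)
      simp only [Finset.card_product, Finset.card_singleton]
      omega
    have := key a
    have := key b
    refine (Finset.card_le_card h).trans ((Finset.card_union_le _ _).trans ?_)
    omega
  lip σ p q := by
    have h : dup r s σ ⊆ dup r s (σ * sw p q) ∪ (rowS r p ∪ rowS r q) := by
      intro x hx
      obtain ⟨y, h1, h2, h3⟩ := mem_dup.1 hx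
      simp only [Finset.mem_union, mem_rowS]
      by_cases hp : r x = r p
      · exact Or.inr (Or.inl hp)
      by_cases hq : r x = r q
      · exact Or.inr (Or.inr hq)
      left
      refine mem_dup.2 ⟨y, h1, h2, ?_⟩
      rw [Equiv.Perm.mul_apply, Equiv.Perm.mul_apply, sw_ne, sw_ne]
      · exact h3
      · rintro rfl; exact hp rfl
      · rintro rfl; exact hq rfl
      · rintro rfl; exact hp h2.symm
      · rintro rfl; exact hq h2.symm
    have h1 := hr p
    have h2 := hr q
    change (rowS r p).card ≤ d at h1
    change (rowS r q).card ≤ d at h2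
    have h3 := Finset.card_le_card h
    have h4 := Finset.card_union_le (dup r s (σ * sw p q)) (rowS r p ∪ rowS r q)
    have h5 := Finset.card_union_le (rowS r p) (rowS r q)
    omega

end Dup

/-! ### Transfer from permutations to graphs -/

/-- The entropy is at most the Bregman-type deviation from any constant `μ`. -/
lemma hent_le_sum_psi {Ω : Type*} [Fintype Ω] [Nonempty Ω] (f : Ω → ℝ) (hf : ∀ x, 0 < f x) {μ : ℝ}
    (hμ : 0 < μ) : hent Finset.univ f ≤ μ * ∑ x, psi (f x / μ) := by
  have hc : (0 : ℝ) < (Finset.univ : Finset Ω).card := by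
    exact_mod_cast Finset.card_pos.2 Finset.univ_nonempty
  have hs0 : 0 < ∑ x, f x := Finset.sum_pos (fun x _ => hf x) Finset.univ_nonempty
  have e : ∀ x, μ * psi (f x / μ) = f x * Real.log (f x) - f x * Real.log μ - f x + μ := by
    intro x
    unfold psi
    rw [Real.log_div (hf x).ne' hμ.ne']
    field_simp
  rw [Finset.mul_sum]
  simp only [e]
  rw [Finset.sum_add_distrib, Finset.sum_sub_distrib, Finset.sum_sub_distrib, ← Finset.sum_mul,
    Finset.sum_const, nsmul_eq_mul, hent]
  set s := ∑ x, f x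
  have h := mul_le_mul_of_nonneg_left (mul_log_tangent (div_pos hs0 hc) hμ) hc.le
  rw [mul_sub, ← mul_assoc, mul_div_cancel₀ _ hc.ne'] at h
  linarith

/-- Truncation is a contraction for the Dirichlet form. -/
lemma phi_max_le {a b t : ℝ} (ha : 0 < a) (hb : 0 < b) : phi (max a t) (max b t) ≤ phi a b := by
  wlog hab : b ≤ a generalizing a b
  · rw [phi_symm, phi_symm a b]; exact this hb ha (le_of_not_ge hab)
  rcases le_total a t with h | h
  · rw [max_eq_right h, max_eq_right (hab.trans h), phi_self]
    exact phi_nonneg ha hb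
  · rw [max_eq_left h]
    exact phi_mono hb (le_max_left _ _) (max_le hab h) le_rfl

/-- Small values are truncated at half of the mean: this loses only a factor `7` in the
entropy. -/
lemma psi_le_trunc {e t : ℝ} (he : 0 < e) (ht : 0 < t) (ht2 : t ≤ 1 / 2) :
    psi e ≤ 7 * psi (max e t) := by
  rcases le_total t e with h | h
  · rw [max_eq_left h]
    linarith [psi_nonneg he]
  · rw [max_eq_right h]
    have h1 := mul_log_tangent ht (show (0 : ℝ) < 1 / 2 by norm_num)
    rw [one_div, Real.log_inv] at h1
    have h2 := Real.log_two_lt_d9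
    have h3 : Real.log e ≤ 0 := Real.log_nonpos he.le (by linarith)
    unfold psi
    nlinarith

section Transfer

variable {α Ω : Type*} [Fintype α] [Fintype Ω] {B : Equiv.Perm α → Finset α}

lemma sum_lev_mat (mat : Equiv.Perm α → Ω) (m : ℕ)
    (hfib : ∀ G, (fil fun σ => B σ = ∅ ∧ mat σ = G).card = m) (k : Ω → ℝ) :
    ∑ σ ∈ lev B 0, k (mat σ) = m * ∑ G, k G := by
  rw [← Finset.sum_fiberwise_of_maps_to (t := Finset.univ) (g := mat)
    (fun _ _ => Finset.mem_univ _), Finset.mul_sum]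
  refine Finset.sum_congr rfl fun G _ => ?_
  have h1 : (lev B 0).filter (fun σ => mat σ = G) = fil fun σ => B σ = ∅ ∧ mat σ = G := by
    ext σ
    rw [Finset.mem_filter, mem_lev, mem_fil, Finset.card_eq_zero]
  rw [h1, ← hfib G, ← nsmul_eq_mul, ← Finset.sum_const]
  refine Finset.sum_congr rfl fun σ hσ => by rw [(mem_fil.1 hσ).2]

lemma sum_lowTr_mat (mat : Equiv.Perm α → Ω) (m : ℕ)
    (hfib : ∀ G, (fil fun σ => B σ = ∅ ∧ mat σ = G).card = m) (adj : Ω → Ω → Prop)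
    (hadj : ∀ σ a b, B σ = ∅ → B (σ * sw a b) = ∅ → mat (σ * sw a b) ≠ mat σ →
      adj (mat σ) (mat (σ * sw a b)))
    (hmult : ∀ σ G, B σ = ∅ → G ≠ mat σ → (fil fun ab : α × α => B (σ * sw ab.1 ab.2) = ∅ ∧
      mat (σ * sw ab.1 ab.2) = G).card ≤ 4) (F : Ω → ℝ) (hF : ∀ G, 0 < F G) :
    ∑ t ∈ lowTr B 0, phi (F (mat t.1)) (F (mat (t.1 * sw t.2.1 t.2.2)))
      ≤ 4 * m * ∑ G, ∑ G', ind (adj G G') (phi (F G) (F G')) := by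
  have h1 : ∑ t ∈ lowTr B 0, phi (F (mat t.1)) (F (mat (t.1 * sw t.2.1 t.2.2)))
      = ∑ σ ∈ lev B 0, ∑ ab ∈ fil fun ab : α × α => B (σ * sw ab.1 ab.2) = ∅,
        phi (F (mat σ)) (F (mat (σ * sw ab.1 ab.2))) := by
    rw [lowTr, sum_fil, Fintype.sum_prod_type, lev, sum_fil]
    refine Finset.sum_congr rfl fun σ _ => ?_
    rw [sum_fil]
    by_cases h : B σ = ∅
    · rw [ind_pos (by rw [h, Finset.card_empty])]
      refine Finset.sum_congr rfl fun ab _ => ?_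
      simp only [h, Finset.card_empty, le_refl, true_and, Nat.le_zero, Finset.card_eq_zero]
    · rw [ind_neg (fun h' => h (Finset.card_eq_zero.1 h'))]
      refine Finset.sum_eq_zero fun ab _ => ind_neg (fun h' => h ?_) _
      exact Finset.card_eq_zero.1 (Nat.le_zero.1 h'.1)
  have h2 : ∀ σ ∈ lev B 0, ∑ ab ∈ fil fun ab : α × α => B (σ * sw ab.1 ab.2) = ∅,
        phi (F (mat σ)) (F (mat (σ * sw ab.1 ab.2)))
      ≤ (fun G => 4 * ∑ G', ind (adj G G') (phi (F G) (F G'))) (mat σ) := by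
    intro σ hσ
    have hσ0 := Finset.card_eq_zero.1 (mem_lev.1 hσ)
    rw [← Finset.sum_fiberwise_of_maps_to (t := Finset.univ)
      (g := fun ab : α × α => mat (σ * sw ab.1 ab.2)) (fun _ _ => Finset.mem_univ _)]
    dsimp only
    rw [Finset.mul_sum]
    refine Finset.sum_le_sum fun G _ => ?_
    have e1 : (fil fun ab : α × α => B (σ * sw ab.1 ab.2) = ∅).filter
        (fun ab => mat (σ * sw ab.1 ab.2) = G)
        = fil fun ab : α × α => B (σ * sw ab.1 ab.2) = ∅ ∧ mat (σ * sw ab.1 ab.2) = G := by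
      ext ab
      rw [Finset.mem_filter, mem_fil, mem_fil]
    rw [e1]
    set S := fil fun ab : α × α => B (σ * sw ab.1 ab.2) = ∅ ∧ mat (σ * sw ab.1 ab.2) = G with hS
    have hp := phi_nonneg (hF (mat σ)) (hF G)
    have e2 : ∑ ab ∈ S, phi (F (mat σ)) (F (mat (σ * sw ab.1 ab.2)))
        = S.card * phi (F (mat σ)) (F G) := by
      rw [← nsmul_eq_mul, ← Finset.sum_const]
      exact Finset.sum_congr rfl fun ab hab => by rw [(mem_fil.1 hab).2]
    rw [e2]
    by_cases hG : G = mat σ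
    · rw [hG, phi_self, mul_zero]
      exact mul_nonneg (by norm_num) (ind_nonneg _ le_rfl)
    · rcases S.eq_empty_or_nonempty with he | ⟨⟨a, b⟩, hab⟩
      · rw [he, Finset.card_empty, Nat.cast_zero, zero_mul]
        exact mul_nonneg (by norm_num) (ind_nonneg _ hp)
      · have hab' := mem_fil.1 hab
        have ha := hadj σ a b hσ0 hab'.1 (by rw [hab'.2]; exact hG)
        rw [hab'.2] at ha
        rw [ind_pos ha]
        refine mul_le_mul_of_nonneg_right ?_ hp
        exact_mod_cast hmult σ G hσ0 hG
  rw [h1]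
  refine (Finset.sum_le_sum h2).trans (le_of_eq ?_)
  rw [sum_lev_mat mat m hfib (fun G => 4 * ∑ G', ind (adj G G') (phi (F G) (F G'))),
    ← Finset.mul_sum]
  ring

end Transfer

/-- Transfer of `core_simple` to a space `Ω` which is the image of the simple permutations under a
map with constant fibres, such that transpositions project to adjacent pairs, each at most four
times. The function is truncated from below at half its mean and normalized. -/
theorem core_graph (c : ℕ) : ∃ N₀ : ℕ, ∃ C : ℝ, 0 < C ∧
    ∀ (α Ω : Type) [Fintype α] [Fintype Ω] [Nonempty Ω] (B : Equiv.Perm α → Finset α)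
      (_ : Defects B c) (_ : N₀ ≤ Fintype.card α) (mat : Equiv.Perm α → Ω) (m : ℕ) (_ : 0 < m)
      (_ : ∀ G, (fil fun σ => B σ = ∅ ∧ mat σ = G).card = m) (adj : Ω → Ω → Prop)
      (_ : ∀ σ a b, B σ = ∅ → B (σ * sw a b) = ∅ → mat (σ * sw a b) ≠ mat σ →
        adj (mat σ) (mat (σ * sw a b)))
      (_ : ∀ σ G, B σ = ∅ → G ≠ mat σ → (fil fun ab : α × α => B (σ * sw ab.1 ab.2) = ∅ ∧
        mat (σ * sw ab.1 ab.2) = G).card ≤ 4) (f : Ω → ℝ) (_ : ∀ G, 0 < f G),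
      (Fintype.card α : ℝ) * hent Finset.univ f
        ≤ C * ∑ G, ∑ G', ind (adj G G') (phi (f G) (f G')) := by
  obtain ⟨N₀, C, hC, h⟩ := core_simple c
  refine ⟨N₀, 28 * C, by positivity, ?_⟩
  intro α Ω _ _ _ B hB hN mat m hm hfib adj hadj hmult f hf
  have hc : (0 : ℝ) < (Finset.univ : Finset Ω).card := by
    exact_mod_cast Finset.card_pos.2 Finset.univ_nonempty
  have hs0 : 0 < ∑ x, f x := Finset.sum_pos (fun x _ => hf x) Finset.univ_nonempty
  set n : ℝ := ((Finset.univ : Finset Ω).card : ℝ) with hn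
  set M := (∑ x, f x) / n with hM
  have hM0 : 0 < M := div_pos hs0 hc
  have hMs : ∑ x, f x = n * M := by rw [hM, mul_div_cancel₀ _ hc.ne']
  set k : Ω → ℝ := fun G => max (f G) (M / 2) with hk
  have hkpos : ∀ G, 0 < k G := fun G => lt_of_lt_of_le (hf G) (le_max_left _ _)
  set μ := (∑ x, k x) / n with hμ
  have hμs : ∑ x, k x = n * μ := by rw [hμ, mul_div_cancel₀ _ hc.ne']
  have hMμ : M ≤ μ := by
    refine div_le_div_of_nonneg_right (Finset.sum_le_sum fun x _ => le_max_left _ _) hc.le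
  have hμ0 : 0 < μ := lt_of_lt_of_le hM0 hMμ
  have hμM : μ ≤ 3 / 2 * M := by
    rw [hμ, div_le_iff₀ hc]
    calc ∑ x, k x ≤ ∑ x, (f x + M / 2) := Finset.sum_le_sum fun x _ =>
          max_le (by linarith) (by linarith [hf x])
      _ = 3 / 2 * M * n := by
        rw [Finset.sum_add_distrib, hMs, Finset.sum_const, nsmul_eq_mul, ← hn]; ring
  set F : Ω → ℝ := fun G => k G / μ with hF
  have hFpos : ∀ G, 0 < F G := fun G => div_pos (hkpos G) hμ0
  have hF4 : ∀ G, 1 / 4 ≤ F G := fun G => by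
    rw [hF, le_div_iff₀ hμ0]
    have : M / 2 ≤ k G := le_max_right _ _
    linarith
  have hFsum : ∑ G, F G = n := by
    rw [hF, ← Finset.sum_div, hμs, mul_div_cancel_right₀ _ hμ0.ne']
  have h1 := h α B hB hN (fun σ => F (mat σ)) (fun σ _ => hF4 _) (by
    rw [sum_lev_mat mat m hfib F, hFsum, hn]
    have := sum_lev_mat mat m hfib (fun _ => 1)
    simpa using this.symm)
  rw [sum_lev_mat mat m hfib (fun G => psi (F G))] at h1
  have h2 := sum_lowTr_mat mat m hfib adj hadj hmult F hFpos
  have hmR : (0 : ℝ) < m := by exact_mod_cast hm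
  have h3 : (Fintype.card α : ℝ) * ∑ G, psi (F G)
      ≤ 4 * C * ∑ G, ∑ G', ind (adj G G') (phi (F G) (F G')) := by
    refine le_of_mul_le_mul_left ?_ hmR
    calc (m : ℝ) * ((Fintype.card α : ℝ) * ∑ G, psi (F G))
        = Fintype.card α * (m * ∑ G, psi (F G)) := by ring
      _ ≤ C * (4 * m * ∑ G, ∑ G', ind (adj G G') (phi (F G) (F G'))) :=
        h1.trans (mul_le_mul_of_nonneg_left h2 hC.le)
      _ = _ := by ring
  have h4 : hent Finset.univ f ≤ 7 * (μ * ∑ G, psi (F G)) := by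
    refine (hent_le_sum_psi f hf hμ0).trans ?_
    have : ∑ x, psi (f x / μ) ≤ ∑ x, 7 * psi (F x) := by
      refine Finset.sum_le_sum fun x _ => ?_
      have e : F x = max (f x / μ) (M / 2 / μ) := by
        rw [hF, hk]
        exact max_div_div_right hμ0.le _ _ |>.symm
      rw [e]
      refine psi_le_trunc (div_pos (hf x) hμ0) (div_pos (half_pos hM0) hμ0) ?_
      rw [div_le_iff₀ hμ0]
      linarith
    rw [← Finset.mul_sum] at this
    nlinarith
  have h5 : μ * ∑ G, ∑ G', ind (adj G G') (phi (F G) (F G'))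
      ≤ ∑ G, ∑ G', ind (adj G G') (phi (f G) (f G')) := by
    rw [Finset.mul_sum]
    refine Finset.sum_le_sum fun G _ => ?_
    rw [Finset.mul_sum]
    refine Finset.sum_le_sum fun G' _ => ?_
    by_cases ha : adj G G'
    · rw [ind_pos ha, ind_pos ha, ← phi_mul hμ0 (hFpos _) (hFpos _), hF]
      dsimp only
      rw [mul_div_cancel₀ _ hμ0.ne', mul_div_cancel₀ _ hμ0.ne']
      exact phi_max_le (hf G) (hf G')
    · rw [ind_neg ha, ind_neg ha, mul_zero]
  calc (Fintype.card α : ℝ) * hent Finset.univ f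
      ≤ Fintype.card α * (7 * (μ * ∑ G, psi (F G))) :=
        mul_le_mul_of_nonneg_left h4 (Nat.cast_nonneg _)
    _ = 7 * μ * (Fintype.card α * ∑ G, psi (F G)) := by ring
    _ ≤ 7 * μ * (4 * C * ∑ G, ∑ G', ind (adj G G') (phi (F G) (F G'))) :=
        mul_le_mul_of_nonneg_left h3 (by linarith)
    _ = 28 * C * (μ * ∑ G, ∑ G', ind (adj G G') (phi (F G) (F G'))) := by ring
    _ ≤ _ := mul_le_mul_of_nonneg_left h5 (by positivity)

/-! ### Connectivity of the switch graph -/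

section Conn

variable {n d : ℕ}

lemma switchMove_row {A : BG n} (hA : ∀ i, (Finset.univ.filter fun j => A i j = true).card = d)
    {i₁ i₂ j₁ j₂ : Fin n} (hi : i₁ ≠ i₂) (hj : j₁ ≠ j₂) (h1 : A i₁ j₁ = true)
    (h2 : A i₂ j₂ = true) (h3 : A i₁ j₂ = false) (h4 : A i₂ j₁ = false) (i : Fin n) :
    (Finset.univ.filter fun j => switchMove A i₁ i₂ j₁ j₂ i j = true).card = d := by
  have key : ∀ i a b, A i a = true → A i b = false →
      (insert b ((Finset.univ.filter fun j => A i j = true).erase a)).card = d := by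
    intro i a b ha hb
    rw [Finset.card_insert_of_notMem, Finset.card_erase_of_mem, hA i]
    · have : 0 < (Finset.univ.filter fun j => A i j = true).card :=
        Finset.card_pos.2 ⟨a, by simp [ha]⟩
      rw [hA i] at this
      omega
    · simp [ha]
    · simp [hb]
  by_cases e1 : i = i₁
  · subst e1
    rw [← key i j₁ j₂ h1 h3]
    congr 1
    ext j
    simp only [Finset.mem_filter, Finset.mem_univ, true_and, Finset.mem_insert, Finset.mem_erase,
      switchMove]
    grind
  by_cases e2 : i = i₂
  · subst e2
    rw [← key i j₂ j₁ h2 h4]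
    congr 1
    ext j
    simp only [Finset.mem_filter, Finset.mem_univ, true_and, Finset.mem_insert, Finset.mem_erase,
      switchMove]
    grind
  rw [← hA i]
  congr 1
  ext j
  simp only [Finset.mem_filter, Finset.mem_univ, true_and, switchMove]
  grind

lemma switchMove_transpose (A : BG n) (i₁ i₂ j₁ j₂ i j : Fin n) :
    switchMove A i₁ i₂ j₁ j₂ i j = switchMove (fun x y => A y x) j₁ j₂ i₁ i₂ j i := by
  simp only [switchMove]
  grind

lemma switchMove_reg {A : BG n} (hA : IsBipReg n d A) {i₁ i₂ j₁ j₂ : Fin n} (hi : i₁ ≠ i₂)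
    (hj : j₁ ≠ j₂) (h1 : A i₁ j₁ = true) (h2 : A i₂ j₂ = true) (h3 : A i₁ j₂ = false)
    (h4 : A i₂ j₁ = false) : IsBipReg n d (switchMove A i₁ i₂ j₁ j₂) := by
  refine ⟨switchMove_row hA.1 hi hj h1 h2 h3 h4, fun j => ?_⟩
  simp only [switchMove_transpose A]
  exact switchMove_row (A := fun x y => A y x) hA.2 hj hi h1 h2 h4 h3 j

lemma SwitchAdj.symm {A B : BG n} (h : SwitchAdj A B) : SwitchAdj B A := by
  obtain ⟨i₁, i₂, j₁, j₂, hi, hj, h1, h2, h3, h4, rfl⟩ := h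
  refine ⟨i₁, i₂, j₂, j₁, hi, hj.symm, ?_, ?_, ?_, ?_, ?_⟩
  · simp only [switchMove]; grind
  · simp only [switchMove]; grind
  · simp only [switchMove]; grind
  · simp only [switchMove]; grind
  · funext i j
    simp only [switchMove]
    grind

/-- If two regular graphs agree in all rows outside `insert i T`, then in each column the entries
in the rows of `insert i T` have the same sum. -/
lemma col_cut {A A' : BG n} (hA : IsBipReg n d A) (hA' : IsBipReg n d A') {T : Finset (Fin n)}
    {i : Fin n} (hi : i ∉ T) (h : ∀ x, x ∉ insert i T → ∀ j, A x j = A' x j) (j : Fin n) :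
    (T.filter fun x => A x j = true).card + (if A i j = true then 1 else 0)
      = (T.filter fun x => A' x j = true).card + (if A' i j = true then 1 else 0) := by
  have h1 := (hA.2 j).trans (hA'.2 j).symm
  rw [Finset.card_filter, Finset.card_filter, ← Finset.sum_add_sum_compl (insert i T),
    ← Finset.sum_add_sum_compl (insert i T) (fun x => if A' x j = true then 1 else 0)] at h1
  have h2 : ∑ x ∈ (insert i T)ᶜ, (if A x j = true then 1 else 0)
      = ∑ x ∈ (insert i T)ᶜ, (if A' x j = true then 1 else 0) :=
    Finset.sum_congr rfl fun x hx => by rw [h x (Finset.mem_compl.1 hx) j]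
  rw [h2, Finset.sum_insert hi, Finset.sum_insert hi] at h1
  rw [Finset.card_filter, Finset.card_filter]
  omega

/-- Ryser's interchange argument: the rows in `T` are corrected one after the other; a row `i` is
corrected by switchings with rows of `T`, applied to either of the two graphs. -/
lemma switch_connected_aux (T : Finset (Fin n)) : ∀ G G' : OmegaB n d,
    (∀ x, x ∉ T → ∀ j, G.1 x j = G'.1 x j) →
      Relation.ReflTransGen (fun G G' : OmegaB n d => SwitchAdj G.1 G'.1) G G' := by
  induction T using Finset.induction_on with
  | empty =>
    intro G G' h
    have : G = G' := Subtype.ext (funext fun x => funext fun j => h x (Finset.notMem_empty x) j)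
    rw [this]
  | insert i T hi ih =>
    suffices H : ∀ k, ∀ G G' : OmegaB n d,
        (Finset.univ.filter fun j => G.1 i j = true ∧ G'.1 i j = false).card = k →
        (∀ x, x ∉ insert i T → ∀ j, G.1 x j = G'.1 x j) →
        Relation.ReflTransGen (fun G G' : OmegaB n d => SwitchAdj G.1 G'.1) G G' from
      fun G G' h => H _ G G' rfl h
    intro k
    induction k using Nat.strong_induction_on with
    | _ k IH =>
    intro G G' hk h
    have hrow := (G.2.1 i).trans (G'.2.1 i).symm
    by_cases hz : ∀ j, G.1 i j = true → G'.1 i j = true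
    · have hsub : (Finset.univ.filter fun j => G.1 i j = true)
          = Finset.univ.filter fun j => G'.1 i j = true := by
        refine Finset.eq_of_subset_of_card_le ?_ hrow.ge
        intro j hj
        simp only [Finset.mem_filter, Finset.mem_univ, true_and] at hj ⊢
        exact hz j hj
      refine ih G G' fun x hx j => ?_
      by_cases hxi : x = i
      · subst hxi
        have := Finset.ext_iff.1 hsub j
        simp only [Finset.mem_filter, Finset.mem_univ, true_and] at this
        exact Bool.eq_iff_iff.2 this
      · exact h x (by simp [hxi, hx]) j
    push Not at hz
    obtain ⟨j, hj, hj'⟩ := hz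
    rw [ne_eq, Bool.not_eq_true] at hj'
    obtain ⟨l, hl, hl'⟩ : ∃ l, G'.1 i l = true ∧ G.1 i l = false := by
      by_contra hc
      push Not at hc
      have hsub : (Finset.univ.filter fun j => G'.1 i j = true)
          = Finset.univ.filter fun j => G.1 i j = true := by
        refine Finset.eq_of_subset_of_card_le ?_ hrow.le
        intro j hj
        simp only [Finset.mem_filter, Finset.mem_univ, true_and] at hj ⊢
        have := hc j hj
        rwa [ne_eq, Bool.not_eq_false] at this
      have := (Finset.ext_iff.1 hsub j).2 (by simp [hj])
      simp [hj'] at this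
    have hjl : j ≠ l := by rintro rfl; rw [hj] at hl'; exact absurd hl' (by decide)
    by_cases c1 : ∃ x ∈ T, G.1 x l = true ∧ G.1 x j = false
    · obtain ⟨x, hxT, hx1, hx2⟩ := c1
      have hix : i ≠ x := by rintro rfl; exact hi hxT
      let G₁ : OmegaB n d := ⟨switchMove G.1 i x j l,
        switchMove_reg G.2 hix hjl hj hx1 hl' hx2⟩
      have hG₁ : SwitchAdj G.1 G₁.1 := ⟨i, x, j, l, hix, hjl, hj, hx1, hl', hx2, rfl⟩
      refine Relation.ReflTransGen.head hG₁ (IH _ ?_ G₁ G' rfl ?_)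
      · rw [← hk]
        refine Finset.card_lt_card (Finset.ssubset_iff_of_subset ?_ |>.2 ⟨j, ?_, ?_⟩)
        · intro y hy
          simp only [Finset.mem_filter, Finset.mem_univ, true_and, G₁, switchMove] at hy ⊢
          grind
        · simp [hj, hj']
        · simp [G₁, switchMove]
      · intro y hy m
        rw [← h y hy m]
        have : y ≠ i := by rintro rfl; exact hy (Finset.mem_insert_self _ _)
        have : y ≠ x := by rintro rfl; exact hy (Finset.mem_insert_of_mem hxT)
        simp only [G₁, switchMove]
        grind
    by_cases c2 : ∃ x ∈ T, G'.1 x j = true ∧ G'.1 x l = false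
    · obtain ⟨x, hxT, hx1, hx2⟩ := c2
      have hix : i ≠ x := by rintro rfl; exact hi hxT
      let G₁ : OmegaB n d := ⟨switchMove G'.1 i x l j,
        switchMove_reg G'.2 hix hjl.symm hl hx1 hj' hx2⟩
      have hG₁ : SwitchAdj G'.1 G₁.1 := ⟨i, x, l, j, hix, hjl.symm, hl, hx1, hj', hx2, rfl⟩
      refine Relation.ReflTransGen.tail (IH _ ?_ G G₁ rfl ?_) hG₁.symm
      · rw [← hk]
        refine Finset.card_lt_card (Finset.ssubset_iff_of_subset ?_ |>.2 ⟨j, ?_, ?_⟩)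
        · intro y hy
          simp only [Finset.mem_filter, Finset.mem_univ, true_and, G₁, switchMove] at hy ⊢
          grind
        · simp [hj, hj']
        · simp [G₁, switchMove, hjl, hix]
      · intro y hy m
        rw [h y hy m]
        have : y ≠ i := by rintro rfl; exact hy (Finset.mem_insert_self _ _)
        have : y ≠ x := by rintro rfl; exact hy (Finset.mem_insert_of_mem hxT)
        simp only [G₁, switchMove]
        grind
    -- otherwise the columns `j` and `l` of the two graphs cannot have equal sums
    exfalso
    push Not at c1 c2
    have e1 := col_cut G.2 G'.2 hi h j
    have e2 := col_cut G.2 G'.2 hi h l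
    have e3 : (T.filter fun x => G.1 x l = true).card ≤ (T.filter fun x => G.1 x j = true).card := by
      refine Finset.card_le_card fun x hx => ?_
      rw [Finset.mem_filter] at hx ⊢
      have := c1 x hx.1 hx.2
      exact ⟨hx.1, by simpa using this⟩
    have e4 : (T.filter fun x => G'.1 x j = true).card
        ≤ (T.filter fun x => G'.1 x l = true).card := by
      refine Finset.card_le_card fun x hx => ?_
      rw [Finset.mem_filter] at hx ⊢
      have := c2 x hx.1 hx.2
      exact ⟨hx.1, by simpa using this⟩
    simp only [hj, hj', hl, hl', if_true, if_false, Bool.false_eq_true] at e1 e2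
    omega

lemma switch_connected (G G' : OmegaB n d) :
    Relation.ReflTransGen (fun G G' : OmegaB n d => SwitchAdj G.1 G'.1) G G' :=
  switch_connected_aux Finset.univ G G' fun x hx => absurd (Finset.mem_univ x) hx

end Conn

/-! ### Chains on small state spaces -/

lemma psi_le_sq {x : ℝ} (hx : 0 < x) : psi x ≤ (x - 1) ^ 2 := by
  unfold psi
  nlinarith [mul_le_mul_of_nonneg_left (Real.log_le_sub_one_of_pos hx) hx.le]

/-- On a connected finite graph the entropy inequality holds with some constant: square roots of
`f` are compared along paths. -/
lemma exists_const_of_connected {Ω : Type*} [Fintype Ω] (R : Ω → Ω → Prop)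
    (hR : ∀ x y, Relation.ReflTransGen R x y) :
    ∃ C : ℝ, 0 < C ∧ ∀ f : Ω → ℝ, (∀ x, 0 < f x) →
      hent Finset.univ f ≤ C * ∑ x, ∑ y, ind (R x y) (phi (f x) (f y)) := by
  rcases isEmpty_or_nonempty Ω with he | hne
  · exact ⟨1, one_pos, fun f _ => by simp [hent]⟩
  set E : (Ω → ℝ) → ℝ := fun f => ∑ x, ∑ y, ind (R x y) (phi (f x) (f y)) with hE
  have hedge : ∀ f : Ω → ℝ, (∀ x, 0 < f x) → ∀ x y, R x y →
      |√(f x) - √(f y)| ≤ √(E f) := by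
    intro f hf x y hxy
    refine Real.le_sqrt_of_sq_le ?_
    rw [sq_abs]
    have h0 : ∀ x y, 0 ≤ ind (R x y) (phi (f x) (f y)) := fun x y =>
      ind_nonneg _ (phi_nonneg (hf x) (hf y))
    have h1 : ind (R x y) (phi (f x) (f y)) ≤ ∑ y, ind (R x y) (phi (f x) (f y)) :=
      Finset.single_le_sum (fun y _ => h0 x y) (Finset.mem_univ y)
    have h2 : ∑ y, ind (R x y) (phi (f x) (f y)) ≤ E f :=
      Finset.single_le_sum (f := fun x => ∑ y, ind (R x y) (phi (f x) (f y)))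
        (fun x _ => Finset.sum_nonneg fun y _ => h0 x y) (Finset.mem_univ x)
    rw [ind_pos hxy] at h1
    exact (sqrt_sq_le_phi (hf x) (hf y)).trans (h1.trans h2)
  have hpath : ∀ x y, ∃ k : ℕ, ∀ f : Ω → ℝ, (∀ x, 0 < f x) →
      |√(f x) - √(f y)| ≤ k * √(E f) := by
    intro x y
    induction hR x y with
    | refl => exact ⟨0, fun f _ => by simp⟩
    | tail _ hyz ih =>
      obtain ⟨k, hk⟩ := ih
      refine ⟨k + 1, fun f hf => ?_⟩
      refine (abs_sub_le _ _ _).trans ((add_le_add (hk f hf) (hedge f hf _ _ hyz)).trans ?_)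
      push_cast
      linarith
  choose k hk using hpath
  set K : ℝ := ∑ x, ∑ y, (k x y : ℝ) with hK
  have hkK : ∀ x y, (k x y : ℝ) ≤ K := fun x y =>
    (Finset.single_le_sum (f := fun y => (k x y : ℝ)) (fun y _ => Nat.cast_nonneg _)
      (Finset.mem_univ y)).trans
      (Finset.single_le_sum (f := fun x => ∑ y, (k x y : ℝ))
        (fun x _ => Finset.sum_nonneg fun y _ => Nat.cast_nonneg _) (Finset.mem_univ x))
  have hc : (0 : ℝ) < (Finset.univ : Finset Ω).card := by
    exact_mod_cast Finset.card_pos.2 Finset.univ_nonempty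
  set n : ℝ := ((Finset.univ : Finset Ω).card : ℝ) with hn
  refine ⟨4 * K ^ 2 * n ^ 2 + 1, by positivity, fun f hf => ?_⟩
  change hent Finset.univ f ≤ (4 * K ^ 2 * n ^ 2 + 1) * E f
  have hE0 : 0 ≤ E f := Finset.sum_nonneg fun x _ => Finset.sum_nonneg fun y _ =>
    ind_nonneg _ (phi_nonneg (hf x) (hf y))
  have hs0 : 0 < ∑ x, f x := Finset.sum_pos (fun x _ => hf x) Finset.univ_nonempty
  set s := ∑ x, f x with hs
  have hfs : ∀ x, √(f x) ≤ √s := fun x => Real.sqrt_le_sqrt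
    (Finset.single_le_sum (fun y _ => (hf y).le) (Finset.mem_univ x))
  have hdiff : ∀ x y, |f x - f y| ≤ 2 * K * √(E f) * √s := by
    intro x y
    have e : f x - f y = (√(f x) - √(f y)) * (√(f x) + √(f y)) := by
      nlinarith [Real.mul_self_sqrt (hf x).le, Real.mul_self_sqrt (hf y).le]
    rw [e, abs_mul, abs_of_nonneg (a := √(f x) + √(f y)) (by positivity)]
    have h1 := (hk x y f hf).trans (mul_le_mul_of_nonneg_right (hkK x y) (Real.sqrt_nonneg _))
    calc |√(f x) - √(f y)| * (√(f x) + √(f y)) ≤ (K * √(E f)) * (√s + √s) :=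
          mul_le_mul h1 (add_le_add (hfs x) (hfs y)) (by positivity)
            ((abs_nonneg _).trans h1)
      _ = _ := by ring
  set μ := s / n with hμ
  have hμ0 : 0 < μ := div_pos hs0 hc
  have hsn : s = n * μ := by rw [hμ, mul_div_cancel₀ _ hc.ne']
  have hdev : ∀ x, (f x - μ) ^ 2 ≤ 4 * K ^ 2 * E f * s := by
    intro x
    have h1 : n * |f x - μ| ≤ n * (2 * K * √(E f) * √s) := by
      rw [← abs_of_pos hc, ← abs_mul, abs_of_pos hc]
      have e : n * (f x - μ) = ∑ y, (f x - f y) := by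
        rw [Finset.sum_sub_distrib, Finset.sum_const, nsmul_eq_mul, ← hs, hsn, ← hn]; ring
      rw [e]
      refine (Finset.abs_sum_le_sum_abs _ _).trans
        ((Finset.sum_le_sum fun y _ => hdiff x y).trans ?_)
      rw [Finset.sum_const, nsmul_eq_mul]
    have h2 := le_of_mul_le_mul_left h1 hc
    have h3 := pow_le_pow_left₀ (abs_nonneg _) h2 2
    rw [sq_abs, mul_pow, mul_pow, Real.sq_sqrt hE0, Real.sq_sqrt hs0.le] at h3
    linarith
  refine (hent_le_sum_psi f hf hμ0).trans ?_
  have h4 : ∑ x, psi (f x / μ) ≤ ∑ _x : Ω, 4 * K ^ 2 * E f * s / μ ^ 2 := by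
    refine Finset.sum_le_sum fun x _ => (psi_le_sq (div_pos (hf x) hμ0)).trans ?_
    rw [div_sub_one hμ0.ne', div_pow]
    exact div_le_div_of_nonneg_right (hdev x) (sq_nonneg μ)
  rw [Finset.sum_const, nsmul_eq_mul, ← hn] at h4
  have h5 := mul_le_mul_of_nonneg_left h4 hμ0.le
  have e : μ * (n * (4 * K ^ 2 * E f * s / μ ^ 2)) = 4 * K ^ 2 * n ^ 2 * E f := by
    rw [hsn]; field_simp
  rw [e] at h5
  linarith

/-! ### Perfect pairings of half-edges and bipartite regular graphs -/

lemma sw_apply {α : Type*} (p q x : α) :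
    sw p q x = if x = p then q else if x = q then p else x := by
  rw [sw, Equiv.swap_apply_def]

/-- The permutations with a given property. -/
def permFil {α : Type*} [Fintype α] (P : Equiv.Perm α → Prop) : Finset (Equiv.Perm α) := fil P

lemma mem_permFil {α : Type*} [Fintype α] {P : Equiv.Perm α → Prop} {σ : Equiv.Perm α} :
    σ ∈ permFil P ↔ P σ := mem_fil

section Mat

variable {n d : ℕ}

/-- A pairing `σ` of the half-edges is simple if no edge of the multigraph it defines is
multiple. The half-edges on both sides are `Fin n × Fin d`, with the vertex as first component. -/
def Smp (σ : Equiv.Perm (Fin n × Fin d)) : Prop :=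
  ∀ p p', p.1 = p'.1 → (σ p).1 = (σ p').1 → p = p'

lemma dup_eq_empty {σ : Equiv.Perm (Fin n × Fin d)} : dup Prod.fst Prod.fst σ = ∅ ↔ Smp σ := by
  rw [Finset.eq_empty_iff_forall_notMem]
  refine ⟨fun h p p' h1 h2 => ?_, fun h p hp => ?_⟩
  · by_contra hne
    exact h p' (mem_dup.2 ⟨p, hne, h1, h2⟩)
  · obtain ⟨p', hne, h1, h2⟩ := mem_dup.1 hp
    exact hne (h _ _ h1 h2)

/-- The biadjacency matrix of the multigraph defined by a pairing (multiplicities dropped). -/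
def bmat (σ : Equiv.Perm (Fin n × Fin d)) : BG n :=
  fun i j => decide (∃ p : Fin n × Fin d, p.1 = i ∧ (σ p).1 = j)

lemma bmat_true {σ : Equiv.Perm (Fin n × Fin d)} {i j : Fin n} :
    bmat σ i j = true ↔ ∃ p : Fin n × Fin d, p.1 = i ∧ (σ p).1 = j := by
  rw [bmat, decide_eq_true_iff]

lemma bmat_false {σ : Equiv.Perm (Fin n × Fin d)} {i j : Fin n} :
    bmat σ i j = false ↔ ∀ p : Fin n × Fin d, p.1 = i → (σ p).1 ≠ j := by
  rw [bmat, decide_eq_false_iff_not]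
  push Not
  rfl

lemma Smp.reg {σ : Equiv.Perm (Fin n × Fin d)} (h : Smp σ) : IsBipReg n d (bmat σ) := by
  constructor
  · intro i
    have e : (Finset.univ.filter fun j => bmat σ i j = true)
        = Finset.univ.image fun a : Fin d => (σ (i, a)).1 := by
      ext j
      simp only [Finset.mem_filter, Finset.mem_univ, true_and, Finset.mem_image, bmat_true]
      constructor
      · rintro ⟨p, rfl, hp⟩
        exact ⟨p.2, hp⟩
      · rintro ⟨a, ha⟩
        exact ⟨_, rfl, ha⟩
    rw [e, Finset.card_image_of_injective, Finset.card_univ, Fintype.card_fin]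
    intro a b hab
    exact (Prod.ext_iff.1 (h (i, a) (i, b) rfl hab)).2
  · intro j
    have e : (Finset.univ.filter fun i => bmat σ i j = true)
        = Finset.univ.image fun b : Fin d => (σ.symm (j, b)).1 := by
      ext i
      simp only [Finset.mem_filter, Finset.mem_univ, true_and, Finset.mem_image, bmat_true]
      constructor
      · rintro ⟨p, rfl, hp⟩
        refine ⟨(σ p).2, ?_⟩
        have : (j, (σ p).2) = σ p := Prod.ext hp.symm rfl
        rw [this, Equiv.symm_apply_apply]
      · rintro ⟨a, ha⟩
        exact ⟨_, ha, by rw [Equiv.apply_symm_apply]⟩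
    rw [e, Finset.card_image_of_injective, Finset.card_univ, Fintype.card_fin]
    intro a b hab
    have := h _ _ hab (by rw [Equiv.apply_symm_apply, Equiv.apply_symm_apply])
    exact (Prod.ext_iff.1 (σ.symm.injective this)).2

/-- The graph defined by a pairing; the value `G₀` is used only for pairings which are not
simple. -/
def matG (G₀ : OmegaB n d) (σ : Equiv.Perm (Fin n × Fin d)) : OmegaB n d :=
  if h : IsBipReg n d (bmat σ) then ⟨bmat σ, h⟩ else G₀

lemma matG_val {G₀ : OmegaB n d} {σ : Equiv.Perm (Fin n × Fin d)} (h : Smp σ) :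
    (matG G₀ σ).1 = bmat σ := by
  rw [matG, dif_pos h.reg]

lemma matG_eq_iff {G₀ G : OmegaB n d} {σ : Equiv.Perm (Fin n × Fin d)} (h : Smp σ) :
    matG G₀ σ = G ↔ bmat σ = G.1 := by
  rw [Subtype.ext_iff, matG_val h]

lemma mul_sw_apply {σ : Equiv.Perm (Fin n × Fin d)} (p q x : Fin n × Fin d) :
    (σ * sw p q) x = if x = p then σ q else if x = q then σ p else σ x := by
  rw [Equiv.Perm.mul_apply, sw_apply]
  split_ifs <;> rfl

lemma bmat_mul_sw_of_eq {σ : Equiv.Perm (Fin n × Fin d)} {p q : Fin n × Fin d}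
    (h : p.1 = q.1 ∨ (σ p).1 = (σ q).1) : bmat (σ * sw p q) = bmat σ := by
  funext i j
  rw [Bool.eq_iff_iff, bmat_true, bmat_true]
  rcases h with h | h
  · have key : ∀ x, (sw p q x).1 = x.1 := by
      intro x
      rw [sw_apply]
      split_ifs with h1 h2
      · rw [h1, h]
      · rw [h2, h]
      · rfl
    constructor
    · rintro ⟨x, rfl, hx⟩
      exact ⟨sw p q x, key x, hx⟩
    · rintro ⟨x, rfl, hx⟩
      refine ⟨sw p q x, key x, ?_⟩
      rw [Equiv.Perm.mul_apply, sw_sw]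
      exact hx
  · have key : ∀ x, ((σ * sw p q) x).1 = (σ x).1 := by
      intro x
      rw [mul_sw_apply]
      split_ifs with h1 h2
      · rw [h1, h]
      · rw [h2, h]
      · rfl
    simp only [key]

lemma Smp.no_edge {σ : Equiv.Perm (Fin n × Fin d)} {p q : Fin n × Fin d}
    (h' : Smp (σ * sw p q)) (h1 : p.1 ≠ q.1) (h2 : (σ p).1 ≠ (σ q).1) :
    bmat σ p.1 (σ q).1 = false ∧ bmat σ q.1 (σ p).1 = false := by
  constructor
  · rw [bmat_false]
    intro y hy hy2
    have := h' p y hy.symm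
    rw [mul_sw_apply, mul_sw_apply] at this
    grind
  · rw [bmat_false]
    intro y hy hy2
    have := h' q y hy.symm
    rw [mul_sw_apply, mul_sw_apply] at this
    grind

lemma bmat_mul_sw {σ : Equiv.Perm (Fin n × Fin d)} (h : Smp σ) {p q : Fin n × Fin d}
    (h1 : p.1 ≠ q.1) (h2 : (σ p).1 ≠ (σ q).1) :
    bmat (σ * sw p q) = switchMove (bmat σ) p.1 q.1 (σ p).1 (σ q).1 := by
  have hpq : p ≠ q := fun e => h1 (by rw [e])
  funext i j
  rw [Bool.eq_iff_iff, bmat_true]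
  simp only [mul_sw_apply, switchMove]
  split_ifs with c1 c2
  · simp only [iff_false]
    rintro ⟨x, hx1, hx2⟩
    rcases c1 with ⟨rfl, rfl⟩ | ⟨rfl, rfl⟩
    · split_ifs at hx2 with e1 e2
      · exact h2 hx2.symm
      · exact h1 (by rw [← hx1, e2])
      · exact e1 (h _ _ hx1 hx2)
    · split_ifs at hx2 with e1 e2
      · exact h1 (by rw [← hx1, e1])
      · exact h2 hx2
      · exact e2 (h _ _ hx1 hx2)
  · simp only [iff_true]
    rcases c2 with ⟨rfl, rfl⟩ | ⟨rfl, rfl⟩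
    · exact ⟨p, rfl, by rw [if_pos rfl]⟩
    · exact ⟨q, rfl, by rw [if_neg hpq.symm, if_pos rfl]⟩
  · rw [bmat_true]
    constructor
    · rintro ⟨x, hx1, hx2⟩
      split_ifs at hx2 with e1 e2
      · exact absurd (Or.inl ⟨by rw [← hx1, e1], hx2.symm⟩) c2
      · exact absurd (Or.inr ⟨by rw [← hx1, e2], hx2.symm⟩) c2
      · exact ⟨x, hx1, hx2⟩
    · rintro ⟨x, hx1, hx2⟩
      refine ⟨x, hx1, ?_⟩
      rw [if_neg, if_neg, hx2]
      · rintro rfl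
        exact c1 (Or.inr ⟨hx1.symm, hx2.symm⟩)
      · rintro rfl
        exact c1 (Or.inl ⟨hx1.symm, hx2.symm⟩)

lemma Smp.mul_sw {σ : Equiv.Perm (Fin n × Fin d)} (h : Smp σ) {p q : Fin n × Fin d}
    (h3 : bmat σ p.1 (σ q).1 = false)
    (h4 : bmat σ q.1 (σ p).1 = false) : Smp (σ * sw p q) := by
  rw [bmat_false] at h3 h4
  intro x y hxy
  have a1 := h3 x
  have a2 := h3 y
  have a3 := h4 x
  have a4 := h4 y
  have a5 := h x y
  rw [mul_sw_apply, mul_sw_apply]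
  grind

lemma switchAdj_of_sw {σ : Equiv.Perm (Fin n × Fin d)} {p q : Fin n × Fin d} (h : Smp σ)
    (h' : Smp (σ * sw p q)) (hne : bmat (σ * sw p q) ≠ bmat σ) :
    p.1 ≠ q.1 ∧ (σ p).1 ≠ (σ q).1 ∧ SwitchAdj (bmat σ) (bmat (σ * sw p q)) := by
  have h1 : p.1 ≠ q.1 := fun e => hne (bmat_mul_sw_of_eq (Or.inl e))
  have h2 : (σ p).1 ≠ (σ q).1 := fun e => hne (bmat_mul_sw_of_eq (Or.inr e))
  have h3 := h'.no_edge h1 h2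
  exact ⟨h1, h2, p.1, q.1, (σ p).1, (σ q).1, h1, h2, bmat_true.2 ⟨p, rfl, rfl⟩,
    bmat_true.2 ⟨q, rfl, rfl⟩, h3.1, h3.2, bmat_mul_sw h h1 h2⟩

/-- At most four ordered pairs of half-edges realize a given switching: the two edges which are
removed determine the two half-edges. -/
lemma card_sw_le {σ : Equiv.Perm (Fin n × Fin d)} (h : Smp σ) {A : BG n} (hA : A ≠ bmat σ) :
    (fil fun ab : (Fin n × Fin d) × (Fin n × Fin d) =>
      Smp (σ * sw ab.1 ab.2) ∧ bmat (σ * sw ab.1 ab.2) = A).card ≤ 4 := by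
  rcases Finset.eq_empty_or_nonempty (fil fun ab : (Fin n × Fin d) × (Fin n × Fin d) =>
      Smp (σ * sw ab.1 ab.2) ∧ bmat (σ * sw ab.1 ab.2) = A) with he | ⟨⟨a, b⟩, hab⟩
  · rw [he]; simp
  rw [mem_fil] at hab
  obtain ⟨ha1, ha2⟩ := hab
  dsimp only at ha1 ha2
  obtain ⟨g1, g2, -⟩ := switchAdj_of_sw h ha1 (by rw [ha2]; exact hA)
  rw [bmat_mul_sw h g1 g2] at ha2
  -- an edge of `σ` missing in `A` is one of the two edges at `a` and `b`
  have key : ∀ x : Fin n × Fin d, A x.1 (σ x).1 = false → x = a ∨ x = b := by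
    intro x hx
    rw [← ha2] at hx
    have hx' : bmat σ x.1 (σ x).1 = true := bmat_true.2 ⟨x, rfl, rfl⟩
    simp only [switchMove] at hx
    split_ifs at hx with c1 c2
    · rcases c1 with c | c
      · exact Or.inl (h _ _ c.1 c.2)
      · exact Or.inr (h _ _ c.1 c.2)
    · rw [hx'] at hx
      exact absurd hx (by decide)
  have hsub : (fil fun ab : (Fin n × Fin d) × (Fin n × Fin d) =>
      Smp (σ * sw ab.1 ab.2) ∧ bmat (σ * sw ab.1 ab.2) = A)
      ⊆ ({a, b} : Finset (Fin n × Fin d)) ×ˢ ({a, b} : Finset (Fin n × Fin d)) := by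
    rintro ⟨x, y⟩ hxy
    rw [mem_fil] at hxy
    obtain ⟨hx1, hx2⟩ := hxy
    dsimp only at hx1 hx2
    obtain ⟨k1, k2, -⟩ := switchAdj_of_sw h hx1 (by rw [hx2]; exact hA)
    rw [bmat_mul_sw h k1 k2] at hx2
    rw [Finset.mem_product, Finset.mem_insert, Finset.mem_singleton, Finset.mem_insert,
      Finset.mem_singleton]
    refine ⟨key x ?_, key y ?_⟩
    · rw [← hx2]; simp [switchMove]
    · rw [← hx2]; simp [switchMove]
  refine (Finset.card_le_card hsub).trans ?_
  rw [Finset.card_product]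
  exact Nat.mul_le_mul (Finset.card_le_two) (Finset.card_le_two)

/-- A map all of whose fibres have `d` elements is, up to a bijection, the first projection
`ι × Fin d → ι`. -/
lemma exists_equiv_of_fibres {ι X : Type} [Fintype X] (f : X → ι)
    (h : ∀ i, Nat.card {x // f x = i} = d) : ∃ e : ι × Fin d ≃ X, ∀ p, f (e p) = p.1 := by
  refine ⟨((Equiv.sigmaEquivProd ι (Fin d)).symm.trans (Equiv.sigmaCongrRight fun i =>
    (Finite.equivFinOfCardEq (h i)).symm)).trans (Equiv.sigmaFiberEquiv f), fun p => ?_⟩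
  exact ((Finite.equivFinOfCardEq (h p.1)).symm p.2).2

/-- The edges at each left vertex and at each right vertex are labelled by `Fin d`. -/
lemma exists_smp (G : OmegaB n d) : ∃ σ : Equiv.Perm (Fin n × Fin d), Smp σ ∧ bmat σ = G.1 := by
  obtain ⟨e₁, h₁⟩ := exists_equiv_of_fibres (d := d)
    (fun x : {x : Fin n × Fin n // G.1 x.1 x.2 = true} => x.1.1) fun i => by
      refine Eq.trans ?_ (G.2.1 i)
      rw [← Fintype.card_subtype, ← Nat.card_eq_fintype_card]
      refine Nat.card_congr ⟨fun x => ⟨x.1.1.2, ?_⟩, fun j => ⟨⟨(i, j.1), j.2⟩, rfl⟩, ?_, ?_⟩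
      · obtain ⟨⟨⟨x, y⟩, hx⟩, rfl⟩ := x
        exact hx
      · rintro ⟨⟨⟨x, y⟩, hx⟩, rfl⟩; rfl
      · rintro ⟨j, hj⟩; rfl
  obtain ⟨e₂, h₂⟩ := exists_equiv_of_fibres (d := d)
    (fun x : {x : Fin n × Fin n // G.1 x.1 x.2 = true} => x.1.2) fun j => by
      refine Eq.trans ?_ (G.2.2 j)
      rw [← Fintype.card_subtype, ← Nat.card_eq_fintype_card]
      refine Nat.card_congr ⟨fun x => ⟨x.1.1.1, ?_⟩, fun i => ⟨⟨(i.1, j), i.2⟩, rfl⟩, ?_, ?_⟩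
      · obtain ⟨⟨⟨x, y⟩, hx⟩, rfl⟩ := x
        exact hx
      · rintro ⟨⟨⟨x, y⟩, hx⟩, rfl⟩; rfl
      · rintro ⟨j, hj⟩; rfl
  have h₃ : ∀ p, (e₂.symm (e₁ p)).1 = (e₁ p).1.2 := by
    intro p
    rw [← h₂, Equiv.apply_symm_apply]
  refine ⟨e₁.trans e₂.symm, ?_, ?_⟩
  · intro p p' hp hp'
    rw [Equiv.trans_apply, Equiv.trans_apply, h₃, h₃] at hp'
    rw [← h₁, ← h₁] at hp
    exact e₁.injective (Subtype.ext (Prod.ext hp hp'))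
  · funext i j
    rw [Bool.eq_iff_iff, bmat_true]
    constructor
    · rintro ⟨p, rfl, hp⟩
      rw [Equiv.trans_apply, h₃] at hp
      rw [← hp, ← h₁]
      exact (e₁ p).2
    · intro hij
      refine ⟨e₁.symm ⟨(i, j), hij⟩, ?_, ?_⟩
      · rw [← h₁, Equiv.apply_symm_apply]
      · rw [Equiv.trans_apply, h₃, Equiv.apply_symm_apply]

/-- The simple pairings which define a given graph. -/
def fibG (G : OmegaB n d) : Finset (Equiv.Perm (Fin n × Fin d)) :=
  permFil fun σ => Smp σ ∧ bmat σ = G.1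

/-- A switching lifts to an injection between the fibres: exchange the images of the two
half-edges which carry the removed edges; they can be recovered from the result, since they carry
the added edges. -/
lemma card_fibG_le {G G' : OmegaB n d} (h : SwitchAdj G.1 G'.1) :
    (fibG G).card ≤ (fibG G').card := by
  obtain ⟨i₁, i₂, j₁, j₂, hi, hj, h1, h2, h3, h4, h5⟩ := h
  have hp : ∀ σ : Equiv.Perm (Fin n × Fin d), ∃ p q : Fin n × Fin d, σ ∈ fibG G →
      p.1 = i₁ ∧ (σ p).1 = j₁ ∧ q.1 = i₂ ∧ (σ q).1 = j₂ := by
    intro σ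
    by_cases hσ : σ ∈ fibG G
    · have hb := (mem_permFil.1 hσ).2
      rw [← hb] at h1 h2
      obtain ⟨p, hp1, hp2⟩ := bmat_true.1 h1
      obtain ⟨q, hq1, hq2⟩ := bmat_true.1 h2
      exact ⟨p, q, fun _ => ⟨hp1, hp2, hq1, hq2⟩⟩
    · have hn : Nonempty (Fin n × Fin d) := by
        obtain ⟨τ, -, hb⟩ := exists_smp G
        rw [← hb] at h1
        exact ⟨(bmat_true.1 h1).choose⟩
      exact ⟨hn.some, hn.some, fun h => absurd h hσ⟩
  choose P Q hPQ using hp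
  have hmem : ∀ σ ∈ fibG G, σ * sw (P σ) (Q σ) ∈ fibG G' := by
    intro σ hσ
    obtain ⟨a1, a2, a3, a4⟩ := hPQ σ hσ
    obtain ⟨hs, hb⟩ := mem_permFil.1 hσ
    have b1 : (P σ).1 ≠ (Q σ).1 := by rw [a1, a3]; exact hi
    refine mem_permFil.2 ⟨hs.mul_sw ?_ ?_, ?_⟩
    · rw [a1, a4, hb, h3]
    · rw [a3, a2, hb, h4]
    · rw [bmat_mul_sw hs b1 (by rw [a2, a4]; exact hj), h5, a1, a2, a3, a4, hb]
  refine Finset.card_le_card_of_injOn (fun σ => σ * sw (P σ) (Q σ)) hmem ?_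
  intro σ hσ τ hτ hst
  have e : σ * sw (P σ) (Q σ) = τ * sw (P τ) (Q τ) := hst
  obtain ⟨a1, a2, a3, a4⟩ := hPQ σ hσ
  obtain ⟨b1, b2, b3, b4⟩ := hPQ τ hτ
  have hs := (mem_permFil.1 (hmem σ hσ)).1
  have hP : P σ = P τ := by
    refine hs _ _ (a1.trans b1.symm) ?_
    have u1 : (σ * sw (P σ) (Q σ)) (P σ) = σ (Q σ) := by rw [mul_sw_apply, if_pos rfl]
    have u2 : (τ * sw (P τ) (Q τ)) (P τ) = τ (Q τ) := by rw [mul_sw_apply, if_pos rfl]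
    rw [u1, e, u2, a4, b4]
  have hQ : Q σ = Q τ := by
    refine hs _ _ (a3.trans b3.symm) ?_
    have u1 : (σ * sw (P σ) (Q σ)) (Q σ) = σ (P σ) := by
      rw [Equiv.Perm.mul_apply, sw_right]
    have u2 : (τ * sw (P τ) (Q τ)) (Q τ) = τ (P τ) := by
      rw [Equiv.Perm.mul_apply, sw_right]
    rw [u1, e, u2, a2, b2]
  rw [hP, hQ] at e
  exact mul_right_cancel e

/-- By connectivity of the switch graph, all graphs have equally many simple pairings. -/
lemma card_fibG_eq (G G' : OmegaB n d) : (fibG G).card = (fibG G').card := by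
  have key : ∀ G G' : OmegaB n d, (fibG G).card ≤ (fibG G').card := by
    intro G G'
    induction switch_connected G G' with
    | refl => exact le_rfl
    | tail _ h ih => exact ih.trans (card_fibG_le h)
  exact le_antisymm (key _ _) (key _ _)

lemma card_fibre_fst (p : Fin n × Fin d) :
    (fil fun x : Fin n × Fin d => x.1 = p.1).card ≤ d := by
  have : (fil fun x : Fin n × Fin d => x.1 = p.1) ⊆ Finset.univ.image fun a : Fin d => (p.1, a) := by
    rintro ⟨x, a⟩ hx
    rw [mem_fil] at hx
    dsimp only at hx
    rw [Finset.mem_image]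
    exact ⟨a, Finset.mem_univ _, by rw [hx]⟩
  refine (Finset.card_le_card this).trans (Finset.card_image_le.trans ?_)
  rw [Finset.card_univ, Fintype.card_fin]

/-- The entropy inequality for large graphs, with unnormalized entropy and Dirichlet form. -/
lemma large_bound (d : ℕ) : ∃ N₀ : ℕ, ∃ C : ℝ, 0 < C ∧ ∀ n : ℕ, N₀ ≤ n * d →
    Nonempty (OmegaB n d) → ∀ f : OmegaB n d → ℝ, (∀ G, 0 < f G) →
      ((n : ℝ) * d) * hent Finset.univ f
        ≤ C * ∑ G, ∑ G', ind (SwitchAdj G.1 G'.1) (phi (f G) (f G')) := by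
  obtain ⟨N₀, C, hC, h⟩ := core_graph (4 * (d * d) + 4 * d)
  refine ⟨N₀, C, hC, fun n hn hne f hf => ?_⟩
  obtain ⟨G₀⟩ := hne
  have hcard : Fintype.card (Fin n × Fin d) = n * d := by
    rw [Fintype.card_prod, Fintype.card_fin, Fintype.card_fin]
  have := @h (Fin n × Fin d) (OmegaB n d) _ _ ⟨G₀⟩ (dup Prod.fst Prod.fst)
    (defects_dup card_fibre_fst card_fibre_fst) (by rw [hcard]; exact hn) (matG G₀)
    (fibG G₀).card ?_ ?_ (fun G G' => SwitchAdj G.1 G'.1) ?_ ?_ f hf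
  · rw [hcard] at this
    push_cast at this
    exact this
  · obtain ⟨σ, hσ⟩ := exists_smp G₀
    exact Finset.card_pos.2 ⟨σ, mem_permFil.2 hσ⟩
  · intro G
    rw [card_fibG_eq G₀ G]
    change (permFil fun σ => dup Prod.fst Prod.fst σ = ∅ ∧ matG G₀ σ = G).card = _
    congr 1
    ext σ
    rw [fibG, mem_permFil, mem_permFil, dup_eq_empty]
    exact and_congr_right fun hs => matG_eq_iff hs
  · intro σ a b h1 h2 hne
    rw [dup_eq_empty] at h1 h2
    rw [matG_val h1, matG_val h2]
    refine (switchAdj_of_sw h1 h2 fun e => hne ?_).2.2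
    rw [matG_eq_iff h2, matG_val h1, e]
  · intro σ G h1 hG
    rw [dup_eq_empty] at h1
    refine le_trans (le_of_eq ?_) (card_sw_le h1 (A := G.1) fun e => hG ?_)
    · congr 1
      ext ab
      rw [mem_fil, mem_fil, dup_eq_empty]
      exact and_congr_right fun hs => matG_eq_iff hs
    · rw [Subtype.ext_iff, matG_val h1, e]

end Mat

/-! ### The modified log-Sobolev inequality -/

lemma entPi_eq {n d : ℕ} [Nonempty (OmegaB n d)] (f : OmegaB n d → ℝ) :
    entPi (piU n d) f = (Fintype.card (OmegaB n d) : ℝ)⁻¹ * hent Finset.univ f := by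
  unfold entPi piU hent
  rw [← Finset.mul_sum, Finset.card_univ, div_eq_inv_mul]
  simp only [mul_assoc, mul_sub]
  rw [Finset.sum_sub_distrib, ← Finset.mul_sum, ← Finset.mul_sum, Finset.sum_mul]

lemma dirForm_eq {n d : ℕ} (f : OmegaB n d → ℝ) (hf : ∀ G, 0 < f G) :
    dirForm (piU n d) (Qu n d) f = (Fintype.card (OmegaB n d) : ℝ)⁻¹ *
      ((∑ G, ∑ G', ind (SwitchAdj G.1 G'.1) (phi (f G) (f G')))
        / (((n : ℝ) * d) * ((n : ℝ) * d - 1))) := by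
  unfold dirForm piU
  rw [div_eq_inv_mul _ (((n : ℝ) * d) * ((n : ℝ) * d - 1)), Finset.mul_sum, Finset.mul_sum,
    Finset.mul_sum]
  refine Finset.sum_congr rfl fun G _ => ?_
  rw [Finset.mul_sum, Finset.mul_sum, Finset.mul_sum]
  refine Finset.sum_congr rfl fun G' _ => ?_
  rw [Real.log_div (hf G).ne' (hf G').ne', Qu]
  by_cases h : G = G'
  · subst h
    have : ind (SwitchAdj G.1 G.1) (phi (f G) (f G)) = 0 := by
      unfold ind; rw [phi_self, ite_self]
    rw [this]
    ring
  · rw [if_neg h]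
    by_cases h2 : SwitchAdj G.1 G'.1
    · rw [if_pos h2, ind_pos h2, phi]
      ring
    · rw [if_neg h2, ind_neg h2]
      ring

/-- Theorem 1.4: for every fixed `d ≥ 2`, the switch chain on `Ω^B_n(d)` satisfies
the Modified log-Sobolev Inequality with constant `C_d · n`. -/
theorem switch_chain_mlsi (d : ℕ) (hd : 2 ≤ d) :
    ∃ C : ℝ, 0 < C ∧
      ∀ n : ℕ, 2 * d ≤ n →
        ∀ f : OmegaB n d → ℝ, (∀ G, 0 < f G) →
          entPi (piU n d) f ≤ C * n * dirForm (piU n d) (Qu n d) f := by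
  obtain ⟨N₀, C₀, hC₀, hlarge⟩ := large_bound d
  choose K hK hsmall using fun n => exists_const_of_connected
    (fun G G' : OmegaB n d => SwitchAdj G.1 G'.1) switch_connected
  have hKsum : 0 ≤ ∑ n ∈ Finset.range N₀, K n * ((n : ℝ) * d) ^ 2 :=
    Finset.sum_nonneg fun n _ => mul_nonneg (hK n).le (sq_nonneg _)
  have hd0 : (2 : ℝ) ≤ d := by exact_mod_cast hd
  have hCd : 0 < C₀ * d := mul_pos hC₀ (by linarith)
  refine ⟨C₀ * d + ∑ n ∈ Finset.range N₀, K n * ((n : ℝ) * d) ^ 2, by linarith,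
    fun n hn f hf => ?_⟩
  rcases isEmpty_or_nonempty (OmegaB n d) with he | hne
  · simp [entPi, dirForm]
  have hn4 : (4 : ℝ) ≤ n := by
    have : 4 ≤ n := by omega
    exact_mod_cast this
  rw [entPi_eq, dirForm_eq f hf]
  have hS : 0 ≤ ∑ G : OmegaB n d, ∑ G' : OmegaB n d,
      ind (SwitchAdj G.1 G'.1) (phi (f G) (f G')) :=
    Finset.sum_nonneg fun G _ => Finset.sum_nonneg fun G' _ =>
      ind_nonneg _ (phi_nonneg (hf G) (hf G'))
  have hsm := hsmall n f hf
  have hla := fun h => hlarge n h hne f hf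
  generalize ∑ G : OmegaB n d, ∑ G' : OmegaB n d,
      ind (SwitchAdj G.1 G'.1) (phi (f G) (f G')) = S at hS hsm hla ⊢
  generalize hent Finset.univ f = H at hsm hla ⊢
  have hN : (8 : ℝ) ≤ (n : ℝ) * d := by nlinarith
  have hM : (0 : ℝ) ≤ (Fintype.card (OmegaB n d) : ℝ)⁻¹ := by positivity
  have hNN : 0 < ((n : ℝ) * d) * ((n : ℝ) * d - 1) := mul_pos (by linarith) (by linarith)
  suffices key : H * (((n : ℝ) * d) * ((n : ℝ) * d - 1))
      ≤ (C₀ * d + ∑ n ∈ Finset.range N₀, K n * ((n : ℝ) * d) ^ 2) * n * S by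
    have h1 := mul_le_mul_of_nonneg_left ((le_div_iff₀ hNN).2 key) hM
    refine h1.trans (le_of_eq ?_)
    ring
  rcases le_or_gt N₀ (n * d) with h | h
  · have h1 := mul_le_mul_of_nonneg_right (hla h) (by linarith : (0 : ℝ) ≤ (n : ℝ) * d - 1)
    have h2 : 0 ≤ C₀ * S := mul_nonneg hC₀.le hS
    have h3 : 0 ≤ (∑ n ∈ Finset.range N₀, K n * ((n : ℝ) * d) ^ 2) * n * S :=
      mul_nonneg (mul_nonneg hKsum (by linarith)) hS
    nlinarith
  · -- finitely many small `n` remain, where connectivity alone yields some constant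
    have hnN : n < N₀ := lt_of_le_of_lt (Nat.le_mul_of_pos_right n (by omega)) h
    have h1 : K n * ((n : ℝ) * d) ^ 2 ≤ ∑ n ∈ Finset.range N₀, K n * ((n : ℝ) * d) ^ 2 :=
      Finset.single_le_sum (f := fun n : ℕ => K n * ((n : ℝ) * d) ^ 2)
        (fun n _ => mul_nonneg (hK n).le (sq_nonneg _)) (Finset.mem_range.2 hnN)
    have h2 := mul_le_mul_of_nonneg_right hsm hNN.le
    have hKS : 0 ≤ K n * S := mul_nonneg (hK n).le hS
    calc H * (((n : ℝ) * d) * ((n : ℝ) * d - 1))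
        ≤ K n * S * (((n : ℝ) * d) * ((n : ℝ) * d - 1)) := h2
      _ ≤ K n * S * ((n : ℝ) * d) ^ 2 := mul_le_mul_of_nonneg_left (by nlinarith) hKS
      _ = K n * ((n : ℝ) * d) ^ 2 * 1 * S := by ring
      _ ≤ (C₀ * d + ∑ n ∈ Finset.range N₀, K n * ((n : ℝ) * d) ^ 2) * n * S := by
          refine mul_le_mul_of_nonneg_right ?_ hS
          exact mul_le_mul (by linarith) (by linarith) zero_le_one (by linarith)
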